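/- arXiv:2605.15992 — 2 statements merged into one kernel-verified Lean document; each statement's English description precedes it below -/
import Mathlib

section
/- Let S be a polynomial ring over a field k, and let ℓ, ℓ', ℓ'', a_1, …, a_n, b_1, …, b_n, c_1, …, c_n be linearly independent linear forms in S. Set f_i = a_i ℓ + b_i ℓ' + c_i ℓ'' for 1 ≤ i ≤ n, and I = (f_1, …, f_n). Then pd_S(S/I) = n. -/
open CategoryTheory Opposite

universe u

/-- The height of an ideal: the infimum of the heights (in the prime spectrum,
ordered by inclusion) of the primes containing it. -/
noncomputable def Ideal.heightENat {R : Type u} [CommRing R] (I : Ideal R) : ℕ∞ :=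
  ⨅ (p : PrimeSpectrum R) (_ : I ≤ p.asIdeal), Order.height p

/-- The projective dimension of an `R`-module `M`: the least `n` such that
`Ext^i(M, N) = 0` for all `i > n` and all modules `N` (and `⊤` if no such `n` exists). -/
noncomputable def projDim (R : Type u) [CommRing R] (M : Type u) [AddCommGroup M]
    [Module R M] : ℕ∞ :=
  sInf ((↑) '' {n : ℕ | ∀ i : ℕ, n < i → ∀ N : ModuleCat.{u} R,
    Subsingleton (((Ext R (ModuleCat.{u} R) i).obj (op (ModuleCat.of R M))).obj N)})

/-- The Hilbert function of the standard graded ring `S/J`, where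
`S = k[x_1, ..., x_N]`: the `k`-dimension of the degree-`d` graded piece of `S/J`. -/
noncomputable def hilbertFunction (k : Type u) [Field k] {N : ℕ}
    (J : Ideal (MvPolynomial (Fin N) k)) (d : ℕ) : ℕ :=
  Module.finrank k (Submodule.map (Ideal.Quotient.mkₐ k J).toLinearMap
    (MvPolynomial.homogeneousSubmodule (Fin N) k d))

open scoped Classical in
/-- The Hilbert–Samuel multiplicity `e(S/J)` of the graded ring `S/J`:
`(deg P)!` times the leading coefficient of the Hilbert polynomial `P` of `S/J`,
i.e. of the polynomial agreeing with the Hilbert function in all large degrees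
(the degree of the Hilbert polynomial being `dim(S/J) - 1`). -/
noncomputable def hilbertSamuelMultiplicity (k : Type u) [Field k] {N : ℕ}
    (J : Ideal (MvPolynomial (Fin N) k)) : ℚ :=
  if h : ∃ P : Polynomial ℚ, ∀ᶠ d : ℕ in Filter.atTop,
      (hilbertFunction k J d : ℚ) = P.eval (d : ℚ)
  then (h.choose.natDegree).factorial * h.choose.leadingCoeff
  else 0

theorem oldExt_subsingleton_iff {R : Type u} [CommRing R] (M N : ModuleCat.{u} R) (n : ℕ) :
    Subsingleton (((Ext R (ModuleCat.{u} R) (n+1)).obj (op M)).obj N) ↔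
      Subsingleton (Abelian.Ext M N (n+1)) := by
  let P := projectiveResolution M
  rw [← ModuleCat.isZero_iff_subsingleton, (P.isoExt (n+1) N).isZero_iff,
    ← HomologicalComplex.exactAt_iff_isZero_homology,
    HomologicalComplex.exactAt_iff' _ n (n+1) (n+2) (by simp) (by simp),
    ShortComplex.moduleCat_exact_iff]
  constructor
  · intro h
    refine ⟨fun a b => ?_⟩
    have key : ∀ a : Abelian.Ext M N (n+1), a = 0 := by
      intro a
      obtain ⟨f, hf, rfl⟩ := P.extMk_surjective a (n+2) rfl
      rw [P.extMk_eq_zero_iff f (n+2) rfl hf n rfl]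
      exact h f hf
    rw [key a, key b]
  · intro h f hf
    have := (P.extMk_eq_zero_iff f (n+2) rfl hf n rfl).1 (Subsingleton.elim _ _)
    exact this

open Abelian in
theorem exists_factor_of_projective_loc {R : Type u} [CommRing R] [IsNoetherianRing R]
    (S : Submonoid R) (M P : ModuleCat.{u} R) [Module.Finite R M] [Module.Finite R P]
    (π : P ⟶ M) (hπ : Function.Surjective π.hom)
    (h : Projective (M.localizedModule S)) :
    ∃ (g : M ⟶ P) (s : S), g ≫ π = (s : R) • 𝟙 M := by
  have hfp : Module.FinitePresentation R M := Module.finitePresentation_of_finite R M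
  have hsurj : Function.Surjective (IsLocalizedModule.mapExtendScalars S
      (P.localizedModuleMkLinearMap S) (M.localizedModuleMkLinearMap S)
      (Localization S) π.hom) :=
    IsLocalizedModule.map_surjective S (P.localizedModuleMkLinearMap S)
      (M.localizedModuleMkLinearMap S) π.hom hπ
  have hp : Module.Projective (Localization S) (M.localizedModule S) :=
    (IsProjective.iff_projective _).2 h
  obtain ⟨σ, hσ⟩ := Module.projective_lifting_property
    (IsLocalizedModule.mapExtendScalars S
      (P.localizedModuleMkLinearMap S) (M.localizedModuleMkLinearMap S)
      (Localization S) π.hom) LinearMap.id hsurj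
  obtain ⟨g, s, hg⟩ := Module.FinitePresentation.exists_lift_of_isLocalizedModule S
    (P.localizedModuleMkLinearMap S)
    ((σ.restrictScalars R) ∘ₗ (M.localizedModuleMkLinearMap S))
  have hc : (M.localizedModuleMkLinearMap S) ∘ₗ (π.hom ∘ₗ g) =
      (M.localizedModuleMkLinearMap S) ∘ₗ ((s : R) • LinearMap.id) := by
    ext m
    have h1 : (M.localizedModuleMkLinearMap S) (π.hom (g m)) =
      IsLocalizedModule.mapExtendScalars S
      (P.localizedModuleMkLinearMap S) (M.localizedModuleMkLinearMap S)
      (Localization S) π.hom (P.localizedModuleMkLinearMap S (g m)) := by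
      simp
    have h2 := LinearMap.congr_fun hg m
    simp only [LinearMap.comp_apply, LinearMap.smul_apply] at h2
    have h3 := LinearMap.congr_fun hσ (M.localizedModuleMkLinearMap S m)
    simp only [LinearMap.comp_apply, LinearMap.id_apply] at h3
    simp only [LinearMap.comp_apply, LinearMap.smul_apply, LinearMap.id_apply]
    rw [h1, h2]
    simp only [LinearMap.restrictScalars_apply]
    rw [Submonoid.smul_def, ← algebraMap_smul (Localization S) (s : R) (σ _)]
    erw [map_smul]
    erw [h3]
    rw [map_smul, algebraMap_smul]
  obtain ⟨s', hs'⟩ := Module.Finite.exists_smul_of_comp_eq_of_isLocalizedModule S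
    (M.localizedModuleMkLinearMap S) _ _ hc
  refine ⟨ModuleCat.ofHom ((s' : R) • g), s' * s, ?_⟩
  ext m
  have := LinearMap.congr_fun hs' m
  simp only [LinearMap.smul_apply, LinearMap.comp_apply, Submonoid.smul_def, LinearMap.id_apply] at this
  simp [this, mul_smul]

open Abelian in
theorem ext_torsion_of_loc {R : Type u} [CommRing R] [IsNoetherianRing R]
    (S : Submonoid R) (n : ℕ) (M : ModuleCat.{u} R) [Module.Finite R M]
    (h : HasProjectiveDimensionLE (M.localizedModule S) n) :
    ∃ s : S, ∀ (L : ModuleCat.{u} R) (i : ℕ), n < i → ∀ e : Ext M L i, (s : R) • e = 0 := by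
  induction n generalizing M with
  | zero =>
    have hp : Projective (M.localizedModule S) :=
      projective_iff_hasProjectiveDimensionLT_one.2 h
    rcases Module.exists_finite_presentation R M with ⟨P, _, _, _, _, f, surjf⟩
    obtain ⟨g, s, hgs⟩ := exists_factor_of_projective_loc S M (ModuleCat.of R P)
      (ModuleCat.ofHom f) surjf hp
    refine ⟨s, fun L i hi e => ?_⟩
    obtain ⟨i, rfl⟩ : ∃ j, i = j + 1 := ⟨i - 1, by omega⟩
    have hP : Projective (ModuleCat.of R P) := (IsProjective.iff_projective _).1 inferInstance
    have : (s : R) • e = (Ext.mk₀ ((s : R) • 𝟙 M)).comp e (zero_add _) := by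
      rw [Ext.mk₀_smul, Ext.smul_comp, Ext.mk₀_id_comp]
    rw [this, ← hgs, ← Ext.mk₀_comp_mk₀, Ext.comp_assoc_of_second_deg_zero,
      ((Ext.mk₀ (ModuleCat.ofHom f)).comp e (zero_add _)).eq_zero_of_projective, Ext.comp_zero]
  | succ n ih =>
    rcases Module.exists_finite_presentation R M with ⟨P, _, _, _, _, f, surjf⟩
    let T := f.shortComplexKer
    have T_exact : T.ShortExact := LinearMap.shortExact_shortComplexKer surjf
    let TS := T.map (ModuleCat.localizedModuleFunctor S)
    have TS_exact : TS.ShortExact := T_exact.map_of_exact (ModuleCat.localizedModuleFunctor S)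
    have proj : Projective T.X₂ := ModuleCat.projective_of_categoryTheory_projective T.X₂
    have projS : Projective TS.X₂ :=
      (ModuleCat.localizedModuleFunctor.{u} S).projective_obj_of_projective proj
    have h1 : HasProjectiveDimensionLE TS.X₁ n :=
      (TS_exact.hasProjectiveDimensionLT_X₃_iff n projS).1 h
    obtain ⟨s, hs⟩ := ih (ModuleCat.of R (LinearMap.ker f)) h1
    refine ⟨s, fun L i hi e => ?_⟩
    obtain ⟨i, rfl⟩ : ∃ j, i = j + 1 := ⟨i - 1, by omega⟩
    obtain ⟨x₁, hx⟩ := Ext.contravariant_sequence_exact₃ T_exact L e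
      (Ext.eq_zero_of_projective _) (add_comm 1 i)
    rw [← hx, ← Ext.comp_smul]
    erw [hs L i (by omega) x₁]
    rw [Ext.comp_zero]

open Abelian in
theorem pd_le_of_regular {R : Type u} [CommRing R] [IsNoetherianRing R]
    (x : R) (M M3 : ModuleCat.{u} R) [Module.Finite R M] (g : M ⟶ M3) (hz : (x • 𝟙 M) ≫ g = 0)
    (hT : (ShortComplex.mk (x • 𝟙 M) g hz).ShortExact)
    (n : ℕ) (h3 : HasProjectiveDimensionLE M3 (n+1))
    (h : HasProjectiveDimensionLE (M.localizedModule (Submonoid.powers x)) n) :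
    HasProjectiveDimensionLE M n := by
  obtain ⟨⟨_, k, rfl⟩, hs⟩ := ext_torsion_of_loc _ n M h
  rw [HasProjectiveDimensionLE, hasProjectiveDimensionLT_iff]
  intro i hi L e
  have hdiv : ∀ k : ℕ, ∀ e : Ext M L i, ∃ e', e = x ^ k • e' := by
    intro k
    induction k with
    | zero => exact fun e => ⟨e, by simp⟩
    | succ k ih =>
      intro e
      obtain ⟨e1, rfl⟩ := ih e
      obtain ⟨x₂, hx₂⟩ := Ext.contravariant_sequence_exact₁ hT L e1 (add_comm 1 i)
        (Ext.eq_zero_of_hasProjectiveDimensionLT _ (n + 1 + 1) (by lia))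
      refine ⟨x₂, ?_⟩
      rw [← hx₂]
      simp only [Ext.mk₀_smul, Ext.smul_comp, Ext.mk₀_id_comp]
      rw [smul_smul, pow_succ]
  obtain ⟨e', rfl⟩ := hdiv k e
  exact hs L i (by omega) e'

def PD {R : Type u} [CommRing R] (K : Ideal R) (n : ℕ) : Prop :=
  HasProjectiveDimensionLE (ModuleCat.of R (R ⧸ K)) n

theorem PD.mono {R : Type u} [CommRing R] {K : Ideal R} {n m : ℕ} (h : PD K n) (hnm : n ≤ m) :
    PD K m := by
  unfold PD HasProjectiveDimensionLE at *
  exact hasProjectiveDimensionLT_of_ge _ (n+1) _ (by omega)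

theorem PD.bot {R : Type u} [CommRing R] : PD (⊥ : Ideal R) 0 := by
  unfold PD HasProjectiveDimensionLE
  have e : R ≃ₗ[R] (R ⧸ (⊥ : Ideal R)) := (Submodule.quotEquivOfEqBot ⊥ rfl).symm
  have : Module.Projective R (R ⧸ (⊥ : Ideal R)) := Module.Projective.of_equiv e
  exact projective_iff_hasProjectiveDimensionLT_one.1 ((IsProjective.iff_projective _).1 this)

/-- colon map -/
noncomputable def colonMap {R : Type u} [CommRing R] {K K1 : Ideal R} {b : R}
    (h : ∀ p, b * p ∈ K ↔ p ∈ K1) : (R ⧸ K1) →ₗ[R] (R ⧸ K) :=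
  Submodule.mapQ K1 K (LinearMap.mulLeft R b) (fun p hp => (h p).2 hp)

theorem colon_zero {R : Type u} [CommRing R] {K K1 : Ideal R} {b : R}
    (h : ∀ p, b * p ∈ K ↔ p ∈ K1) :
    ModuleCat.ofHom (colonMap h) ≫ ModuleCat.ofHom (Submodule.factor
      (le_sup_left : K ≤ K ⊔ Ideal.span {b})) = 0 := by
  refine ModuleCat.hom_ext (LinearMap.ext fun p => ?_)
  obtain ⟨p, rfl⟩ := Submodule.Quotient.mk_surjective _ p
  simp only [ModuleCat.hom_comp, ModuleCat.hom_ofHom, LinearMap.comp_apply]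
  change Submodule.Quotient.mk (b * p) = (0 : R ⧸ (K ⊔ Ideal.span {b}))
  rw [Submodule.Quotient.mk_eq_zero]
  exact Ideal.mul_mem_right _ _ (Ideal.mem_sup_right (Ideal.mem_span_singleton_self b))

theorem colon_shortExact {R : Type u} [CommRing R] {K K1 : Ideal R} {b : R}
    (h : ∀ p, b * p ∈ K ↔ p ∈ K1) :
    (ShortComplex.mk _ _ (colon_zero h)).ShortExact where
  exact := by
    rw [ShortComplex.moduleCat_exact_iff]
    intro p hp
    obtain ⟨p, rfl⟩ := Submodule.Quotient.mk_surjective _ p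
    change Submodule.Quotient.mk p = (0 : R ⧸ (K ⊔ Ideal.span {b})) at hp
    rw [Submodule.Quotient.mk_eq_zero, Submodule.mem_sup] at hp
    obtain ⟨y, hy, z, hz, rfl⟩ := hp
    obtain ⟨c, rfl⟩ := Ideal.mem_span_singleton'.1 hz
    refine ⟨Submodule.Quotient.mk c, ?_⟩
    change Submodule.Quotient.mk (b * c) = (Submodule.Quotient.mk (y + c * b) : R ⧸ K)
    rw [Submodule.Quotient.eq]
    convert K.neg_mem hy using 1
    ring
  mono_f := by
    rw [ModuleCat.mono_iff_injective]
    change Function.Injective (colonMap h)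
    rw [injective_iff_map_eq_zero]
    intro p hp
    obtain ⟨p, rfl⟩ := Submodule.Quotient.mk_surjective _ p
    change Submodule.Quotient.mk (b * p) = (0 : R ⧸ K) at hp
    rw [Submodule.Quotient.mk_eq_zero] at hp ⊢
    exact (h p).1 hp
  epi_g := by
    rw [ModuleCat.epi_iff_surjective]
    exact Submodule.factor_surjective (le_sup_left : K ≤ K ⊔ Ideal.span {b})

theorem PD.colon {R : Type u} [CommRing R] {K K1 : Ideal R} {b : R} {n : ℕ}
    (h : ∀ p, b * p ∈ K ↔ p ∈ K1) (h1 : PD K1 n) (h2 : PD (K ⊔ Ideal.span {b}) n) : PD K n :=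
  (colon_shortExact h).hasProjectiveDimensionLT_X₂ (n+1) h1 h2

/-- `b` is a nonzerodivisor modulo `K` -/
def NZ {R : Type u} [CommRing R] (K : Ideal R) (b : R) : Prop := ∀ p, b * p ∈ K → p ∈ K

theorem NZ.iff {R : Type u} [CommRing R] {K : Ideal R} {b : R} (h : NZ K b) (p : R) :
    b * p ∈ K ↔ p ∈ K := ⟨h p, fun hp => K.mul_mem_left _ hp⟩

theorem NZ.pow {R : Type u} [CommRing R] {K : Ideal R} {b : R} (h : NZ K b) (k : ℕ) (p : R)
    (hp : b ^ k * p ∈ K) : p ∈ K := by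
  induction k with
  | zero => simpa using hp
  | succ k ih => exact ih (h _ (by convert hp using 1; ring))

theorem PD.add_nzd {R : Type u} [CommRing R] {K : Ideal R} {b : R} {n : ℕ}
    (h : NZ K b) (h1 : PD K n) : PD (K ⊔ Ideal.span {b}) (n+1) :=
  (colon_shortExact h.iff).hasProjectiveDimensionLT_X₃ (n+1) h1 (h1.mono (Nat.le_succ n))

noncomputable def locQuotEquiv {R : Type u} [CommRing R] (K : Ideal R) (x : R) :
    (ModuleCat.of R (R ⧸ K)).localizedModule (Submonoid.powers x) ≃ₗ[Localization.Away x]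
      (Localization.Away x ⧸ K.map (algebraMap R (Localization.Away x))) := by
  refine LinearEquiv.extendScalarsOfIsLocalization (Submonoid.powers x) (Localization.Away x) ?_
  have h1 : IsLocalizedModule (Submonoid.powers x)
      ((ModuleCat.of R (R ⧸ K)).localizedModuleMkLinearMap (Submonoid.powers x)) :=
    ModuleCat.localizedModule_isLocalizedModule (ModuleCat.of R (R ⧸ K)) (Submonoid.powers x)
  have e := IsLocalizedModule.linearEquiv (Submonoid.powers x)
    ((ModuleCat.of R (R ⧸ K)).localizedModuleMkLinearMap (Submonoid.powers x))
    (Submodule.toLocalizedQuotient' (Localization.Away x) (Submonoid.powers x)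
      (Algebra.linearMap R (Localization.Away x)) K)
  exact e.trans ((Submodule.quotEquivOfEq _ _ (Ideal.localized'_eq_map _ _ K)).restrictScalars R)

theorem PD.loc {R : Type u} [CommRing R] {K : Ideal R} {n : ℕ} (h : PD K n) (x : R) :
    PD (K.map (algebraMap R (Localization.Away x))) n := by
  unfold PD at *
  have := ModuleCat.localizedModule_hasProjectiveDimensionLE n (Submonoid.powers x)
    (ModuleCat.of R (R ⧸ K))
  exact ModuleCat.hasProjectiveDimensionLE_of_linearEquiv (R := Localization.Away x)
    (M := (ModuleCat.of R (R ⧸ K)).localizedModule (Submonoid.powers x))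
    (N := ModuleCat.of _ (Localization.Away x ⧸ K.map (algebraMap R (Localization.Away x))))
    (locQuotEquiv K x) n

theorem PD.of_loc {R : Type u} [CommRing R] [IsNoetherianRing R] {K : Ideal R} {n : ℕ} {x : R}
    (hx : NZ K x) (h1 : PD (K ⊔ Ideal.span {x}) (n+1))
    (h2 : PD (K.map (algebraMap R (Localization.Away x))) n) : PD K n := by
  unfold PD at *
  have h3 := ModuleCat.hasProjectiveDimensionLE_of_linearEquiv (R := Localization.Away x)
    (N := (ModuleCat.of R (R ⧸ K)).localizedModule (Submonoid.powers x))
    (M := ModuleCat.of _ (Localization.Away x ⧸ K.map (algebraMap R (Localization.Away x))))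
    (locQuotEquiv K x).symm n
  have hcm : ModuleCat.ofHom (colonMap hx.iff) = x • 𝟙 (ModuleCat.of R (R ⧸ K)) := by
    refine ModuleCat.hom_ext (LinearMap.ext fun p => ?_)
    obtain ⟨p, rfl⟩ := Submodule.Quotient.mk_surjective _ p
    rfl
  have hz := colon_zero hx.iff
  have hs := colon_shortExact hx.iff
  have hz' := hz
  rw [hcm] at hz'
  have : ShortComplex.mk _ _ hz = ShortComplex.mk _ _ hz' := by congr 1
  rw [this] at hs
  exact pd_le_of_regular x _ _ _ hz' hs n h1 h3

open Abelian in
theorem ext_nontrivial_step {R : Type u} [CommRing R] {K : Ideal R} {z : R} (hz : NZ K z)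
    (N : ModuleCat.{u} R) (hN : z • 𝟙 N = 0) (m : ℕ)
    (h : Nontrivial (Ext (ModuleCat.of R (R ⧸ K)) N m)) :
    Nontrivial (Ext (ModuleCat.of R (R ⧸ (K ⊔ Ideal.span {z}))) N (m+1)) := by
  obtain ⟨e, he⟩ := exists_ne (0 : Ext (ModuleCat.of R (R ⧸ K)) N m)
  have hs := colon_shortExact hz.iff
  refine ⟨hs.extClass.comp e (add_comm 1 m), 0, fun h0 => he ?_⟩
  obtain ⟨x₂, hx₂⟩ := Ext.contravariant_sequence_exact₁ hs N e (add_comm 1 m) h0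
  have hcm : ModuleCat.ofHom (colonMap hz.iff) = z • 𝟙 (ModuleCat.of R (R ⧸ K)) := by
    refine ModuleCat.hom_ext (LinearMap.ext fun p => ?_)
    obtain ⟨p, rfl⟩ := Submodule.Quotient.mk_surjective _ p
    rfl
  rw [← hx₂]
  simp only
  rw [hcm, Ext.mk₀_smul, Ext.smul_comp, Ext.mk₀_id_comp]
  calc z • x₂ = z • x₂.comp (Ext.mk₀ (𝟙 N)) (add_zero m) := by rw [Ext.comp_mk₀_id]
    _ = x₂.comp (Ext.mk₀ (z • 𝟙 N)) (add_zero m) := by rw [Ext.mk₀_smul, Ext.comp_smul]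
    _ = 0 := by rw [hN, Ext.mk₀_zero, Ext.comp_zero]

/-- `S` is a polynomial ring in the family `v` over a subring containing `W`. -/
def PolyFree {ι : Type} {S : Type u} [CommRing S] (W : Set S) (v : ι → S) : Prop :=
  ∃ (A : Type u) (_ : CommRing A) (e : MvPolynomial ι A ≃+* S),
    (∀ i, e (MvPolynomial.X i) = v i) ∧ ∀ w ∈ W, ∃ a, e (MvPolynomial.C a) = w

theorem PolyFree.sub {ι ι' : Type} {S : Type u} [CommRing S] {W : Set S} {v : ι → S}
    (h : PolyFree W v) (j : ι' → ι) (hj : Function.Injective j) :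
    PolyFree (W ∪ {w | ∃ i, i ∉ Set.range j ∧ w = v i}) (v ∘ j) := by
  classical
  obtain ⟨A, _, e, he, hW⟩ := h
  let ε : ι' ⊕ {i // i ∉ Set.range j} ≃ ι :=
    (Equiv.sumCongr (Equiv.ofInjective j hj) (Equiv.refl _)).trans
      (Equiv.sumCompl (fun i => i ∈ Set.range j))
  have ε1 : ∀ i, ε (Sum.inl i) = j i := fun i => rfl
  have ε2 : ∀ i, ε (Sum.inr i) = i.1 := fun i => rfl
  refine ⟨MvPolynomial {i // i ∉ Set.range j} A, inferInstance,
    ((MvPolynomial.sumAlgEquiv A ι' {i // i ∉ Set.range j}).symm.toRingEquiv.trans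
      (MvPolynomial.renameEquiv A ε).toRingEquiv).trans e, ?_, ?_⟩
  · intro i
    simp [ε1, he]
  · rintro w (hw | ⟨i, hi, rfl⟩)
    · obtain ⟨a, rfl⟩ := hW w hw
      refine ⟨MvPolynomial.C a, ?_⟩
      simp
    · refine ⟨MvPolynomial.X ⟨i, hi⟩, ?_⟩
      simp [ε2, he]

theorem PolyFree.closure {ι : Type} {S : Type u} [CommRing S] {W : Set S} {v : ι → S}
    (h : PolyFree W v) : PolyFree (Subring.closure W : Set S) v := by
  obtain ⟨A, _, e, he, hW⟩ := h
  refine ⟨A, _, e, he, fun w hw => ?_⟩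
  have : Subring.closure W ≤ (e.toRingHom.comp MvPolynomial.C).range := by
    rw [Subring.closure_le]
    exact fun w hw => hW w hw
  exact this hw

theorem PolyFree.mono {ι : Type} {S : Type u} [CommRing S] {W W' : Set S} {v : ι → S}
    (h : PolyFree W v) (hw : W' ⊆ W) : PolyFree W' v := by
  obtain ⟨A, _, e, he, hW⟩ := h
  exact ⟨A, _, e, he, fun w h => hW w (hw h)⟩

theorem PolyFree.translate {ι : Type} {S : Type u} [CommRing S] {W : Set S} {v : ι → S}
    (h : PolyFree W v) (c : ι → S) (hc : ∀ i, c i ∈ Subring.closure W) :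
    PolyFree (Subring.closure W : Set S) (fun i => v i + c i) := by
  obtain ⟨A, _, e, he, hW⟩ := h.closure
  choose a ha using fun i => hW (c i) (hc i)
  let f : MvPolynomial ι A →ₐ[A] MvPolynomial ι A :=
    MvPolynomial.aeval (fun i => MvPolynomial.X i + MvPolynomial.C (a i))
  let g : MvPolynomial ι A →ₐ[A] MvPolynomial ι A :=
    MvPolynomial.aeval (fun i => MvPolynomial.X i - MvPolynomial.C (a i))
  let φ : MvPolynomial ι A ≃ₐ[A] MvPolynomial ι A := AlgEquiv.ofAlgHom f g
    (by ext i; simp [f, g, MvPolynomial.algHom_C]) (by ext i; simp [f, g, MvPolynomial.algHom_C])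
  refine ⟨A, _, φ.toRingEquiv.trans e, ?_, ?_⟩
  · intro i
    simp [φ, f, he, ha]
  · intro w hw
    obtain ⟨b, rfl⟩ := hW w hw
    exact ⟨b, by simp [φ, f, MvPolynomial.algHom_C]⟩

theorem PolyFree.loc {ι : Type} {S : Type u} [CommRing S] {W : Set S} {v : ι → S}
    (h : PolyFree W v) (x : S) (hx : x ∈ W) :
    PolyFree (algebraMap S (Localization.Away x) '' W ∪
      {IsLocalization.Away.invSelf (S := Localization.Away x) x})
      (fun i => algebraMap S (Localization.Away x) (v i)) := by
  obtain ⟨A, _, e, he, hW⟩ := h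
  obtain ⟨a, ha⟩ := hW x hx
  letI : Algebra (MvPolynomial ι A) (MvPolynomial ι (Localization.Away a)) :=
    MvPolynomial.algebraMvPolynomial
  have H : ((Submonoid.powers a).map (MvPolynomial.C : A →+* MvPolynomial ι A)).map
      e.toMonoidHom = Submonoid.powers x := by
    rw [Submonoid.map_powers, Submonoid.map_powers]
    congr 1
  let E : MvPolynomial ι (Localization.Away a) ≃+* Localization.Away x :=
    IsLocalization.ringEquivOfRingEquiv
      (M := (Submonoid.powers a).map (MvPolynomial.C : A →+* MvPolynomial ι A))
      (T := Submonoid.powers x) (MvPolynomial ι (Localization.Away a)) (Localization.Away x) e H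
  have hE : ∀ p, E (MvPolynomial.map (algebraMap A (Localization.Away a)) p) =
      algebraMap S (Localization.Away x) (e p) := by
    intro p
    rw [← MvPolynomial.algebraMap_def]
    exact IsLocalization.ringEquivOfRingEquiv_eq H p
  refine ⟨Localization.Away a, inferInstance, E, ?_, ?_⟩
  · intro i
    change _ = algebraMap S (Localization.Away x) (v i)
    rw [← he, ← hE, MvPolynomial.map_X]
  · rintro w (⟨w, hw, rfl⟩ | rfl)
    · obtain ⟨b, rfl⟩ := hW w hw
      exact ⟨algebraMap _ _ b, by rw [← hE, MvPolynomial.map_C]⟩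
    · refine ⟨IsLocalization.Away.invSelf a, ?_⟩
      have h1 : algebraMap S (Localization.Away x) x *
          E (MvPolynomial.C (IsLocalization.Away.invSelf a)) = 1 := by
        have h0 := hE (MvPolynomial.C a)
        rw [ha] at h0
        rw [← h0, MvPolynomial.map_C, ← map_mul, ← map_mul,
          IsLocalization.Away.mul_invSelf, map_one, map_one]
      have h2 := IsLocalization.Away.mul_invSelf (S := Localization.Away x) x
      calc E (MvPolynomial.C (IsLocalization.Away.invSelf a))
          = (algebraMap S (Localization.Away x) x * IsLocalization.Away.invSelf x) *
            E (MvPolynomial.C (IsLocalization.Away.invSelf a)) := by rw [h2, one_mul]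
        _ = (algebraMap S (Localization.Away x) x *
          E (MvPolynomial.C (IsLocalization.Away.invSelf a))) * IsLocalization.Away.invSelf x := by
            ring
        _ = _ := by rw [h1, one_mul]

/-- coefficient functionals of a free variable -/
structure Coef {S : Type u} [CommRing S] (W : Subring S) (z : S) where
  co : ℕ → S →+ S
  mul : ∀ i w s, w ∈ W → co i (w * s) = w * co i s
  zero : ∀ s, co 0 (z * s) = 0
  succ : ∀ i s, co (i+1) (z * s) = co i s
  fin : ∀ s, ∃ d, ∀ i, d ≤ i → co i s = 0
  mem : ∀ (J : Ideal S) s, (∀ i, co i s ∈ J) → s ∈ J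
  split : ∀ s, ∃ s', s = co 0 s + z * s'

theorem PolyFree.coef {S : Type u} [CommRing S] {W : Set S} {v : Unit → S}
    (h : PolyFree W v) : Nonempty (Coef (Subring.closure W) (v ())) := by
  obtain ⟨A, _, e0, he, hW⟩ := h.closure
  let e : Polynomial A ≃+* S := (MvPolynomial.uniqueAlgEquiv A Unit).symm.toRingEquiv.trans e0
  have eX : e Polynomial.X = v () := by simp [e, he]
  have eC : ∀ a, e (Polynomial.C a) = e0 (MvPolynomial.C a) := by intro a; simp [e]
  refine ⟨⟨fun i => ((e : Polynomial A →+* S).comp (Polynomial.C)).toAddMonoidHom.comp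
    ((Polynomial.lcoeff A i).toAddMonoidHom.comp (e.symm : S →+* Polynomial A).toAddMonoidHom),
    ?_, ?_, ?_, ?_, ?_, ?_⟩⟩
  · intro i w s hw
    obtain ⟨a, rfl⟩ := hW w hw
    simp [← eC]
  · intro s
    simp [← eX]
  · intro i s
    simp [← eX]
  · intro s
    refine ⟨(e.symm s).natDegree + 1, fun i hi => ?_⟩
    simp [Polynomial.coeff_eq_zero_of_natDegree_lt (show (e.symm s).natDegree < i by omega)]
  · intro J s hs
    have : s = ∑ i ∈ Finset.range ((e.symm s).natDegree + 1),
        e (Polynomial.C ((e.symm s).coeff i)) * e Polynomial.X ^ i := by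
      conv_lhs => rw [← e.apply_symm_apply s, (e.symm s).as_sum_range_C_mul_X_pow]
      simp
    rw [this]
    exact Ideal.sum_mem _ fun i _ => J.mul_mem_right _ (hs i)
  · intro s
    refine ⟨e (Polynomial.divX (e.symm s)), ?_⟩
    have := congrArg e (Polynomial.divX_mul_X_add (e.symm s))
    rw [map_add, map_mul, eX, e.apply_symm_apply] at this
    conv_lhs => rw [← this]
    simp [mul_comm, add_comm]

theorem Coef.co_mem {S : Type u} [CommRing S] {W : Subring S} {z : S} (h : Coef W z)
    {G : Set S} (hG : G ⊆ W) {s : S} (hs : s ∈ Ideal.span G) (i : ℕ) :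
    h.co i s ∈ Ideal.span G := by
  induction hs using Submodule.span_induction with
  | mem x hx =>
    have := h.mul i x 1 (hG hx)
    rw [mul_one] at this
    rw [this]
    exact Ideal.mul_mem_right _ _ (Ideal.subset_span hx)
  | zero => simp
  | add x y _ _ hx hy => rw [map_add]; exact Ideal.add_mem _ hx hy
  | smul a x hx ih =>
    clear ih
    revert a
    induction hx using Submodule.span_induction with
    | mem x hx =>
      intro a
      rw [smul_eq_mul, mul_comm, h.mul i x a (hG hx)]
      exact Ideal.mul_mem_right _ _ (Ideal.subset_span hx)
    | zero => simp
    | add x y _ _ hx hy => intro a; rw [smul_add, map_add]; exact Ideal.add_mem _ (hx a) (hy a)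
    | smul b x hx ih => intro a; rw [smul_smul]; exact ih _

theorem Coef.nz {S : Type u} [CommRing S] {W : Subring S} {z : S} (h : Coef W z)
    {G : Set S} (hG : G ⊆ W) : NZ (Ideal.span G) z := by
  intro p hp
  refine h.mem _ _ fun i => ?_
  rw [← h.succ]
  exact h.co_mem hG hp _

theorem Coef.co_zero_mem {S : Type u} [CommRing S] {W : Subring S} {z : S} (h : Coef W z)
    {G : Set S} (hG : G ⊆ W) {s : S} (hs : s ∈ Ideal.span G ⊔ Ideal.span {z}) :
    h.co 0 s ∈ Ideal.span G := by
  obtain ⟨a, ha, b, hb, rfl⟩ := Submodule.mem_sup.1 hs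
  obtain ⟨c, rfl⟩ := Ideal.mem_span_singleton'.1 hb
  rw [map_add, mul_comm c z, h.zero, add_zero]
  exact h.co_mem hG ha 0

/-- the elements `y s` have a common annihilator modulo `I` -/
def Ann {κ : Type} {S : Type u} [CommRing S] (I : Ideal S) (y : κ → S) : Prop :=
  ∀ s s' q, y s * q ∈ I → y s' * q ∈ I

theorem Ann.extend {κ : Type} {S : Type u} [CommRing S] {y : κ → S} {G : Set S}
    (hA : Ann (Ideal.span G) y) {W : Subring S} {z : S} (h : Coef W z) (hG : G ⊆ W)
    (hy : ∀ s, y s ∈ W) : Ann (Ideal.span G ⊔ Ideal.span {z}) y := by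
  intro s s' q hq
  have h1 := h.co_zero_mem hG hq
  rw [h.mul _ _ _ (hy s)] at h1
  have h2 := hA s s' _ h1
  obtain ⟨q', hq'⟩ := h.split q
  rw [hq', mul_add]
  refine Ideal.add_mem _ (Ideal.mem_sup_left h2) (Ideal.mem_sup_right ?_)
  exact Ideal.mem_span_singleton'.2 ⟨y s' * q', by ring⟩

theorem nz_row {κ : Type} [Fintype κ] [DecidableEq κ] {S : Type u} [CommRing S] {y ρ : κ → S}
    {G : Set S}
    (hA : Ann (Ideal.span G) y) {s0 s1 : κ} (hs : s1 ≠ s0) {W0 W1 : Subring S}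
    (h0 : Coef W0 (ρ s0)) (h1 : Coef W1 (ρ s1)) (hG0 : G ⊆ W0) (hG1 : G ⊆ W1)
    (hy0 : ∀ s, y s ∈ W0) (hy1 : ∀ s, y s ∈ W1)
    (hr0 : ∀ t, t ≠ s0 → ρ t ∈ W0) (hr1 : ∀ t, t ≠ s1 → ρ t ∈ W1) :
    NZ (Ideal.span G ⊔ Ideal.span {∑ t, ρ t * y t}) (ρ s0) := by
  intro p hp
  obtain ⟨l, hl, b, hb, hlb⟩ := Submodule.mem_sup.1 hp
  obtain ⟨q, rfl⟩ := Ideal.mem_span_singleton'.1 hb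
  have e0 := Finset.add_sum_erase Finset.univ (fun t => ρ t * y t) (Finset.mem_univ s0)
  have e1 := Finset.add_sum_erase (Finset.univ.erase s0) (fun t => ρ t * y t)
    (a := s1) (by simp [hs])
  set H := ∑ t, ρ t * y t with hH
  set H1 := ∑ t ∈ Finset.univ.erase s0, ρ t * y t with hH1
  set w := ∑ t ∈ (Finset.univ.erase s0).erase s1, ρ t * y t with hw
  have H1W : H1 ∈ W0 := sum_mem fun t ht => mul_mem (hr0 t (by simpa using ht)) (hy0 t)
  have wW : w ∈ W1 := sum_mem fun t ht => mul_mem (hr1 t (by simp at ht; tauto)) (hy1 t)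
  obtain ⟨q', hq'⟩ := h0.split q
  set q0 := h0.co 0 q with hq0
  have k1 : H1 * q0 ∈ Ideal.span G := by
    have := congrArg (h0.co 0) hlb
    rw [h0.zero, map_add, ← e0] at this
    have e2 : q * (ρ s0 * y s0 + H1) = ρ s0 * (q * y s0) + H1 * q := by ring
    rw [e2, map_add, h0.zero, zero_add, h0.mul _ _ _ H1W, ← hq0] at this
    have e3 : H1 * q0 = - h0.co 0 l := by linear_combination this
    rw [e3]
    exact Ideal.neg_mem_iff _ |>.2 (h0.co_mem hG0 hl 0)
  -- y annihilates w-multiples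
  have hwA : ∀ a, y s1 * a ∈ Ideal.span G → w * a ∈ Ideal.span G := by
    intro a ha
    rw [hw, Finset.sum_mul]
    refine Ideal.sum_mem _ fun t _ => ?_
    rw [mul_assoc]
    exact Ideal.mul_mem_left _ _ (hA s1 t a ha)
  have k2 : ∀ i, y s1 * h1.co i q0 + w * h1.co (i+1) q0 ∈ Ideal.span G := by
    intro i
    have := h1.co_mem hG1 k1 (i+1)
    rw [← e1] at this
    have e2 : (ρ s1 * y s1 + w) * q0 = ρ s1 * (y s1 * q0) + w * q0 := by ring
    rwa [e2, map_add, h1.succ, h1.mul _ _ _ wW, h1.mul _ _ _ (hy1 s1)] at this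
  obtain ⟨d, hd⟩ := h1.fin q0
  have k3 : ∀ j i, d ≤ i + j → y s1 * h1.co i q0 ∈ Ideal.span G := by
    intro j
    induction j with
    | zero => intro i hi; rw [hd i hi, mul_zero]; exact zero_mem _
    | succ j ih =>
      intro i hi
      have := Ideal.sub_mem _ (k2 i) (hwA _ (ih (i+1) (by omega)))
      simpa using this
  have k4 : y s1 * q0 ∈ Ideal.span G := by
    refine h1.mem _ _ fun i => ?_
    rw [h1.mul _ _ _ (hy1 s1)]
    exact k3 d i (by omega)
  have k5 : H * q0 ∈ Ideal.span G := by
    rw [hH, Finset.sum_mul]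
    refine Ideal.sum_mem _ fun t _ => ?_
    rw [mul_assoc]
    exact Ideal.mul_mem_left _ _ (hA s1 t _ k4)
  have k6 : ρ s0 * (p - H * q') ∈ Ideal.span G := by
    have : ρ s0 * (p - H * q') = l + H * q0 := by
      linear_combination -hlb + H * hq'
    rw [this]
    exact Ideal.add_mem _ hl k5
  have k7 := h0.nz hG0 _ k6
  have : p = (p - H * q') + q' * H := by ring
  rw [this]
  exact Ideal.add_mem _ (Ideal.mem_sup_left k7)
    (Ideal.mem_sup_right (Ideal.mem_span_singleton'.2 ⟨q', rfl⟩))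

def RI {n : ℕ} {κ : Type} [Fintype κ] {S : Type u} [CommRing S] (x : Fin n → κ → S) (y : κ → S) :
    Ideal S := Ideal.span (Set.range fun i => ∑ t, x i t * y t)

/-- all entries are independent variables -/
def Gen {n : ℕ} {κ : Type} {S : Type u} [CommRing S] (x : Fin n → κ → S) (y : κ → S) : Prop :=
  PolyFree (∅ : Set S) (Sum.elim (fun p : Fin n × κ => x p.1 p.2) y)

theorem Gen.tail {n : ℕ} {κ : Type} {S : Type u} [CommRing S] {x : Fin (n+1) → κ → S} {y : κ → S}
    (h : Gen x y) : Gen (fun i => x i.succ) y := by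
  have := (PolyFree.sub h (Sum.map (Prod.map (Fin.succ : Fin n → Fin (n+1)) (id : κ → κ)) id)
    (Sum.map_injective.2 ⟨(Fin.succ_injective n).prodMap Function.injective_id,
      Function.injective_id⟩)).mono (Set.empty_subset _)
  unfold Gen
  convert this using 1
  ext (⟨i, t⟩ | t) <;> rfl

theorem Gen.tailDel_aux {n : ℕ} {κ : Type} {S : Type u} [CommRing S] {x : Fin (n+1) → κ → S}
    {y : κ → S} (h : Gen x y) (s : κ) :
    PolyFree ({w | ∃ t, w = x 0 t} ∪ {w | ∃ i, w = x i s} ∪ {y s}) (Sum.elim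
      (fun p : Fin n × {t // t ≠ s} => x p.1.succ p.2) (fun t : {t // t ≠ s} => y t)) := by
  have := (PolyFree.sub h (Sum.map (Prod.map (Fin.succ : Fin n → Fin (n+1))
    (Subtype.val : {t // t ≠ s} → κ)) (Subtype.val : {t // t ≠ s} → κ))
    (Sum.map_injective.2 ⟨(Fin.succ_injective n).prodMap Subtype.val_injective,
      Subtype.val_injective⟩)).mono (W' := {w | ∃ t, w = x 0 t} ∪ {w | ∃ i, w = x i s} ∪ {y s}) (by
      rintro w ((⟨t, rfl⟩ | ⟨i, rfl⟩) | rfl)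
      · refine Or.inr ⟨Sum.inl (0, t), ?_, rfl⟩
        rintro ⟨(⟨i, t'⟩ | t'), ht⟩
        · simp at ht
        · simp at ht
      · refine Or.inr ⟨Sum.inl (i, s), ?_, rfl⟩
        rintro ⟨(⟨i, t'⟩ | t'), ht⟩
        · simp at ht
          exact t'.2 ht.2
        · simp at ht
      · refine Or.inr ⟨Sum.inr s, ?_, rfl⟩
        rintro ⟨(⟨i, t'⟩ | t'), ht⟩
        · simp at ht
        · simp at ht
          exact t'.2 ht)
  convert this using 1
  ext (⟨i, t⟩ | t) <;> rfl

theorem Gen.tailDel {n : ℕ} {κ : Type} {S : Type u} [CommRing S] {x : Fin (n+1) → κ → S}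
    {y : κ → S} (h : Gen x y) (s : κ) :
    Gen (fun i (t : {t // t ≠ s}) => x i.succ t) (fun t : {t // t ≠ s} => y t) :=
  (h.tailDel_aux s).mono (Set.empty_subset _)

theorem PolyFree.single {ι : Type} {S : Type u} [CommRing S] {W : Set S} {v : ι → S}
    (h : PolyFree W v) (i0 : ι) :
    PolyFree {w | ∃ i, i ≠ i0 ∧ w = v i} (fun _ : Unit => v i0) := by
  refine (h.sub (fun _ : Unit => i0) (fun _ _ _ => rfl)).mono ?_
  rintro w ⟨i, hi, rfl⟩
  exact Or.inr ⟨i, by rintro ⟨_, h⟩; exact hi h.symm, rfl⟩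

theorem Gen.coef_x {n : ℕ} {κ : Type} {S : Type u} [CommRing S] {x : Fin n → κ → S}
    {y : κ → S} (h : Gen x y) (i : Fin n) (s : κ) : ∃ W : Subring S, Nonempty (Coef W (x i s)) ∧
      (∀ i' t, (i', t) ≠ (i, s) → x i' t ∈ W) ∧ ∀ t, y t ∈ W := by
  refine ⟨_, (PolyFree.single h (Sum.inl (i, s))).coef, fun i' t ht => ?_, fun t => ?_⟩
  · exact Subring.subset_closure ⟨Sum.inl (i', t), by simpa using ht, rfl⟩
  · exact Subring.subset_closure ⟨Sum.inr t, by simp, rfl⟩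

theorem Gen.coef_y {n : ℕ} {κ : Type} {S : Type u} [CommRing S] {x : Fin n → κ → S}
    {y : κ → S} (h : Gen x y) (s : κ) : ∃ W : Subring S, Nonempty (Coef W (y s)) ∧
      (∀ i' t, x i' t ∈ W) ∧ ∀ t, t ≠ s → y t ∈ W := by
  refine ⟨_, (PolyFree.single h (Sum.inr s)).coef, fun i' t => ?_, fun t ht => ?_⟩
  · exact Subring.subset_closure ⟨Sum.inl (i', t), by simp, rfl⟩
  · exact Subring.subset_closure ⟨Sum.inr t, by simpa using ht, rfl⟩

section Loc
variable {n : ℕ} {κ : Type} [Fintype κ] [DecidableEq κ] {S : Type u} [CommRing S]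

/-- new coefficients after localization -/
noncomputable def newX (x : Fin (n+1) → κ → S) (ρ : κ → S) (s : κ) :
    Fin n → {t // t ≠ s} → Localization.Away (x 0 s) := fun i t =>
  algebraMap S _ (x i.succ t) + -(algebraMap S _ (x i.succ s) * (algebraMap S _ (ρ t) *
    IsLocalization.Away.invSelf (x 0 s)))

/-- the remaining old variables -/
noncomputable def newY (x : Fin (n+1) → κ → S) (y : κ → S) (s : κ) :
    {t // t ≠ s} → Localization.Away (x 0 s) := fun t => algebraMap S _ (y t)

/-- the new variable -/
noncomputable def newZ (x : Fin (n+1) → κ → S) (y ρ : κ → S) (s : κ) :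
    Localization.Away (x 0 s) :=
  algebraMap S _ (y s) + ∑ t : {t // t ≠ s}, (algebraMap S _ (ρ t) *
    IsLocalization.Away.invSelf (x 0 s)) * algebraMap S _ (y t)

theorem Gen.newGen {x : Fin (n+1) → κ → S} {y : κ → S} (h : Gen x y) (ρ : κ → S) (s : κ)
    (hρ : ∀ t, ρ t = x 0 t ∨ ρ t = 0) : Gen (newX x ρ s) (newY x y s) := by
  have h1 := (h.tailDel_aux s).loc (x 0 s) (Or.inl (Or.inl ⟨s, rfl⟩))
  have h2 := h1.translate (Sum.elim (fun p : Fin n × {t // t ≠ s} => 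
    -(algebraMap S _ (x p.1.succ s) * (algebraMap S _ (ρ p.2) *
    IsLocalization.Away.invSelf (x 0 s)))) (fun t => 0)) (by
      rintro (⟨i, t⟩ | t)
      · refine neg_mem (mul_mem ?_ (mul_mem ?_ ?_))
        · exact Subring.subset_closure (Or.inl ⟨_, Or.inl (Or.inr ⟨_, rfl⟩), rfl⟩)
        · rcases hρ t with h | h
          · rw [h]
            exact Subring.subset_closure (Or.inl ⟨_, Or.inl (Or.inl ⟨_, rfl⟩), rfl⟩)
          · rw [h, map_zero]
            exact zero_mem _
        · exact Subring.subset_closure (Or.inr rfl)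
      · exact zero_mem _)
  have h3 := h2.mono (Set.empty_subset _)
  unfold Gen
  convert h3 using 1
  ext (⟨i, t⟩ | t)
  · rfl
  · simp [newY]

theorem Gen.newCoef {x : Fin (n+1) → κ → S} {y : κ → S} (h : Gen x y) (ρ : κ → S) (s : κ)
    (hρ : ∀ t, ρ t = x 0 t ∨ ρ t = 0) : ∃ W, Nonempty (Coef W (newZ x y ρ s)) ∧
      (∀ i t, newX x ρ s i t ∈ W) ∧ (∀ t, newY x y s t ∈ W) := by
  have h1 := (PolyFree.single h (Sum.inr s)).loc (x 0 s) (⟨Sum.inl (0, s), by simp, rfl⟩)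
  set W := Subring.closure (algebraMap S (Localization.Away (x 0 s)) '' 
    {w | ∃ i, i ≠ Sum.inr s ∧ w = Sum.elim (fun p : Fin (n+1) × κ => x p.1 p.2) y i} ∪
      {IsLocalization.Away.invSelf (x 0 s)}) with hW
  have m1 : ∀ i t, algebraMap S (Localization.Away (x 0 s)) (x i t) ∈ W := fun i t =>
    Subring.subset_closure (Or.inl ⟨_, ⟨Sum.inl (i, t), by simp, rfl⟩, rfl⟩)
  have m2 : ∀ t : {t // t ≠ s}, algebraMap S (Localization.Away (x 0 s)) (y t) ∈ W := fun t =>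
    Subring.subset_closure (Or.inl ⟨_, ⟨Sum.inr t, by simpa using t.2, rfl⟩, rfl⟩)
  have m3 : IsLocalization.Away.invSelf (x 0 s) ∈ W := Subring.subset_closure (Or.inr rfl)
  have m4 : ∀ t, algebraMap S (Localization.Away (x 0 s)) (ρ t) ∈ W := by
    intro t
    rcases hρ t with h | h
    · rw [h]; exact m1 _ _
    · rw [h, map_zero]; exact zero_mem _
  have h2 := (h1.translate (fun _ => ∑ t : {t // t ≠ s}, (algebraMap S _ (ρ t) *
    IsLocalization.Away.invSelf (x 0 s)) * algebraMap S _ (y t)) (fun _ =>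
      sum_mem fun t _ => mul_mem (mul_mem (m4 _) m3) (m2 t))).coef
  rw [Subring.closure_eq] at h2
  refine ⟨W, h2, fun i t => ?_, fun t => m2 t⟩
  exact add_mem (m1 _ _) (neg_mem (mul_mem (m1 _ _) (mul_mem (m4 _) m3)))

theorem map_eq_new {x : Fin (n+1) → κ → S} {y : κ → S} (ρ : κ → S) (s : κ)
    (hs : ρ s = x 0 s) :
    (RI (fun i => x i.succ) y ⊔ Ideal.span {∑ t, ρ t * y t}).map
      (algebraMap S (Localization.Away (x 0 s))) =
    RI (newX x ρ s) (newY x y s) ⊔ Ideal.span {newZ x y ρ s} := by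
  set φ := algebraMap S (Localization.Away (x 0 s)) with hφ
  set u : Localization.Away (x 0 s) := IsLocalization.Away.invSelf (x 0 s) with hu
  have hxu : φ (x 0 s) * u = 1 := IsLocalization.Away.mul_invSelf _
  have e1 : φ (∑ t, ρ t * y t) = φ (x 0 s) * newZ x y ρ s := by
    rw [Fintype.sum_eq_add_sum_subtype_ne _ s, hs]
    simp only [map_add, map_mul, map_sum, newZ, mul_add, Finset.mul_sum]
    congr 1
    refine Finset.sum_congr rfl fun t _ => ?_
    linear_combination (-(φ (ρ t) * φ (y t))) * hxu
  have e2 : ∀ i : Fin n, φ (∑ t, x i.succ t * y t) = φ (x i.succ s) * newZ x y ρ s +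
      ∑ t, newX x ρ s i t * newY x y s t := by
    intro i
    rw [Fintype.sum_eq_add_sum_subtype_ne _ s]
    simp only [map_add, map_mul, map_sum, newZ, newX, newY, mul_add, Finset.mul_sum, add_mul,
      Finset.sum_add_distrib]
    have : ∀ A B C D : Localization.Away (x 0 s), B + D = 0 → A + C = A + B + (C + D) := by
      intro A B C D h
      linear_combination -h
    apply this
    rw [← Finset.sum_add_distrib]
    refine Finset.sum_eq_zero fun t _ => ?_
    ring
  have hZ : newZ x y ρ s = u * φ (∑ t, ρ t * y t) := by
    rw [e1]; linear_combination (-newZ x y ρ s) * hxu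
  rw [Ideal.map_sup, RI, Ideal.map_span, Ideal.map_span, Set.image_singleton]
  apply le_antisymm
  · refine sup_le ?_ ?_
    · rw [Ideal.span_le]
      rintro _ ⟨_, ⟨i, rfl⟩, rfl⟩
      change φ (∑ t, x i.succ t * y t) ∈ _
      rw [e2]
      refine Ideal.add_mem _ (Ideal.mul_mem_left _ _ (Ideal.mem_sup_right
        (Ideal.mem_span_singleton_self _))) (Ideal.mem_sup_left (Ideal.subset_span ⟨i, rfl⟩))
    · rw [Ideal.span_singleton_le_iff_mem, e1]
      exact Ideal.mul_mem_left _ _ (Ideal.mem_sup_right (Ideal.mem_span_singleton_self _))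
  · have hz : newZ x y ρ s ∈ Ideal.span (φ '' Set.range fun i : Fin n => ∑ t, x i.succ t * y t) ⊔
        Ideal.span {φ (∑ t, ρ t * y t)} := by
      rw [hZ]
      exact Ideal.mul_mem_left _ _ (Ideal.mem_sup_right (Ideal.mem_span_singleton_self _))
    refine sup_le ?_ ?_
    · rw [RI, Ideal.span_le]
      rintro _ ⟨i, rfl⟩
      have : ∑ t, newX x ρ s i t * newY x y s t =
        φ (∑ t, x i.succ t * y t) - φ (x i.succ s) * newZ x y ρ s := by rw [e2]; ring
      change (∑ t, newX x ρ s i t * newY x y s t) ∈ _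
      rw [this]
      exact Ideal.sub_mem _ (Ideal.mem_sup_left (Ideal.subset_span ⟨_, ⟨i, rfl⟩, rfl⟩))
        (Ideal.mul_mem_left _ _ hz)
    · rwa [Ideal.span_singleton_le_iff_mem]
end Loc

theorem mem_of_map_mem {S : Type u} [CommRing S] {K : Ideal S} {x : S} (hx : NZ K x) (q : S)
    (hq : algebraMap S (Localization.Away x) q ∈ K.map (algebraMap S (Localization.Away x))) :
    q ∈ K := by
  rw [IsLocalization.algebraMap_mem_map_algebraMap_iff (Submonoid.powers x)] at hq
  obtain ⟨_, ⟨k, rfl⟩, hk⟩ := hq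
  exact hx.pow k q hk

theorem RI_succ {n : ℕ} {κ : Type} [Fintype κ] {S : Type u} [CommRing S]
    (x : Fin (n+1) → κ → S) (y : κ → S) :
    RI x y = RI (fun i => x i.succ) y ⊔ Ideal.span {∑ t, x 0 t * y t} := by
  unfold RI
  rw [← Ideal.span_union]
  congr 1
  ext w
  constructor
  · rintro ⟨i, rfl⟩
    induction i using Fin.cases with
    | zero => exact Or.inr rfl
    | succ i => exact Or.inl ⟨i, rfl⟩
  · rintro (⟨i, rfl⟩ | rfl)
    · exact ⟨i.succ, rfl⟩
    · exact ⟨0, rfl⟩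

/-- the inductive statement -/
def UU (n : ℕ) : Prop := ∀ (S : Type u) [CommRing S] [IsNoetherianRing S] (κ : Type) [Fintype κ]
  [DecidableEq κ] (x : Fin n → κ → S) (y : κ → S), Gen x y → Ann (RI x y) y ∧ PD (RI x y) n

theorem UU_zero : UU.{u} 0 := by
  intro S _ _ κ _ _ x y h
  have h0 : RI x y = ⊥ := by
    unfold RI
    rw [Set.range_eq_empty, Ideal.span_empty]
  refine ⟨?_, h0 ▸ PD.bot⟩
  intro s s' q hq
  obtain ⟨W, ⟨c⟩, -, -⟩ := h.coef_y s
  have := c.nz (G := Set.range fun i => ∑ t, x i t * y t) (by rintro _ ⟨i, -⟩; exact i.elim0) q hq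
  exact Ideal.mul_mem_left _ _ this

section Step
variable {n : ℕ} {κ : Type} [Fintype κ] [DecidableEq κ] {S : Type u} [CommRing S]

theorem RI_sub {x : Fin n → κ → S} {y : κ → S} (W : Subring S) (hx : ∀ i t, x i t ∈ W)
    (hy : ∀ t, y t ∈ W) : (Set.range fun i => ∑ t, x i t * y t) ⊆ (W : Set S) := by
  rintro _ ⟨i, rfl⟩
  exact sum_mem fun t _ => mul_mem (hx i t) (hy t)

/-- truncated first row -/
def trunc (r : κ → S) (T : Finset κ) : κ → S := fun t => if t ∈ T then r t else 0

theorem trunc_nz {x : Fin (n+1) → κ → S} {y : κ → S} (h : Gen x y)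
    (hA : Ann (RI (fun i => x i.succ) y) y) (T : Finset κ) (s0 s1 : κ) (h0 : s0 ∈ T) (h1 : s1 ∈ T)
    (h01 : s1 ≠ s0) :
    NZ (RI (fun i => x i.succ) y ⊔ Ideal.span {∑ t, trunc (x 0) T t * y t}) (x 0 s0) := by
  obtain ⟨W0, ⟨c0⟩, hx0, hy0⟩ := h.coef_x 0 s0
  obtain ⟨W1, ⟨c1⟩, hx1, hy1⟩ := h.coef_x 0 s1
  have e0 : trunc (x 0) T s0 = x 0 s0 := if_pos h0
  have e1 : trunc (x 0) T s1 = x 0 s1 := if_pos h1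
  rw [← e0] at c0 ⊢
  rw [← e1] at c1
  refine nz_row hA h01 c0 c1 (RI_sub _ (fun i t => hx0 _ _ (by simp)) hy0)
    (RI_sub _ (fun i t => hx1 _ _ (by simp)) hy1) hy0 hy1 ?_ ?_
  · intro t ht
    unfold trunc
    split_ifs
    · exact hx0 _ _ (by simpa using ht)
    · exact zero_mem _
  · intro t ht
    unfold trunc
    split_ifs
    · exact hx1 _ _ (by simpa using ht)
    · exact zero_mem _

theorem trunc_or (r : κ → S) (T : Finset κ) (t : κ) : trunc r T t = r t ∨ trunc r T t = 0 := by
  unfold trunc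
  split_ifs
  · exact Or.inl rfl
  · exact Or.inr rfl

theorem trunc_univ (r : κ → S) : trunc r Finset.univ = r := by
  ext t; simp [trunc]

variable [IsNoetherianRing S]

theorem ann_step (U : UU.{u} n) {x : Fin (n+1) → κ → S} {y : κ → S} (h : Gen x y) :
    Ann (RI x y) y := by
  intro s s' q hq
  by_cases hss : s = s'
  · rwa [← hss]
  have hnz := trunc_nz h (U S κ _ _ h.tail).1 Finset.univ s' s (Finset.mem_univ _)
    (Finset.mem_univ _) hss
  rw [trunc_univ, ← RI_succ] at hnz
  apply mem_of_map_mem hnz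
  have hm := map_eq_new (x := x) (y := y) (x 0) s' rfl
  rw [← RI_succ] at hm
  have hq' := Ideal.mem_map_of_mem (algebraMap S (Localization.Away (x 0 s'))) hq
  rw [hm] at hq' ⊢
  rw [map_mul] at hq' ⊢
  have hg := h.newGen (x 0) s' (fun t => Or.inl rfl)
  have hN : IsNoetherianRing (Localization.Away (x 0 s')) :=
    IsLocalization.isNoetherianRing (Submonoid.powers (x 0 s')) _ inferInstance
  have hA := (U _ _ _ _ hg).1
  obtain ⟨W, ⟨c⟩, hW1, hW2⟩ := h.newCoef (x 0) s' (fun t => Or.inl rfl)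
  have hA2 : Ann (RI (newX x (x 0) s') (newY x y s') ⊔ Ideal.span {newZ x y (x 0) s'})
    (newY x y s') := Ann.extend hA c (RI_sub W hW1 hW2) hW2
  have k : ∀ t : {t // t ≠ s'}, algebraMap S _ (y t) * algebraMap S _ q ∈
      RI (newX x (x 0) s') (newY x y s') ⊔ Ideal.span {newZ x y (x 0) s'} := fun t =>
    hA2 ⟨s, hss⟩ t _ hq'
  have e : algebraMap S (Localization.Away (x 0 s')) (y s') = newZ x y (x 0) s' -
     ∑ t : {t // t ≠ s'}, (algebraMap S _ (x 0 t) *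
      IsLocalization.Away.invSelf (x 0 s')) * algebraMap S _ (y t) := by
    unfold newZ; ring
  rw [e, sub_mul, Finset.sum_mul]
  refine Ideal.sub_mem _ (Ideal.mul_mem_right _ _ (Ideal.mem_sup_right
    (Ideal.mem_span_singleton_self _))) (Ideal.sum_mem _ fun t _ => ?_)
  rw [mul_assoc]
  exact Ideal.mul_mem_left _ _ (k t)

theorem pd_loc_step (U : UU.{u} n) {x : Fin (n+1) → κ → S} {y : κ → S} (h : Gen x y)
    (T : Finset κ) (s : κ) (hs : s ∈ T) :
    PD ((RI (fun i => x i.succ) y ⊔ Ideal.span {∑ t, trunc (x 0) T t * y t}).map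
      (algebraMap S (Localization.Away (x 0 s)))) (n+1) := by
  rw [map_eq_new (x := x) (y := y) (trunc (x 0) T) s (if_pos hs)]
  have hg := h.newGen (trunc (x 0) T) s (trunc_or _ _)
  have hN : IsNoetherianRing (Localization.Away (x 0 s)) :=
    IsLocalization.isNoetherianRing (Submonoid.powers (x 0 s)) _ inferInstance
  obtain ⟨W, ⟨c⟩, hW1, hW2⟩ := h.newCoef (trunc (x 0) T) s (trunc_or _ _)
  exact PD.add_nzd (c.nz (RI_sub W hW1 hW2)) (U _ _ _ _ hg).2

theorem RI_del {x : Fin n → κ → S} {y : κ → S} (s : κ) :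
    RI x y ⊔ Ideal.span {y s} = RI (fun i (t : {t // t ≠ s}) => x i t)
      (fun t : {t // t ≠ s} => y t) ⊔ Ideal.span {y s} := by
  have e : ∀ i, ∑ t, x i t * y t = x i s * y s + ∑ t : {t // t ≠ s}, x i t * y t := fun i =>
    Fintype.sum_eq_add_sum_subtype_ne _ s
  have hy : ∀ K : Ideal S, y s ∈ K ⊔ Ideal.span {y s} := fun K =>
    Ideal.mem_sup_right (Ideal.mem_span_singleton_self _)
  apply le_antisymm
  · refine sup_le ?_ le_sup_right
    rw [RI, Ideal.span_le]
    rintro _ ⟨i, rfl⟩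
    change (∑ t, x i t * y t) ∈ _
    rw [e]
    exact Ideal.add_mem _ (Ideal.mul_mem_left _ _ (hy _))
      (Ideal.mem_sup_left (Ideal.subset_span ⟨i, rfl⟩))
  · refine sup_le ?_ le_sup_right
    rw [RI, Ideal.span_le]
    rintro _ ⟨i, rfl⟩
    change (∑ t : {t // t ≠ s}, x i t * y t) ∈ _
    rw [show (∑ t : {t // t ≠ s}, x i t * y t) = ∑ t, x i t * y t - x i s * y s by rw [e]; ring]
    exact Ideal.sub_mem _ (Ideal.mem_sup_left (Ideal.subset_span ⟨i, rfl⟩))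
      (Ideal.mul_mem_left _ _ (hy _))

theorem pd_T (U : UU.{u} n) {x : Fin (n+1) → κ → S} {y : κ → S} (h : Gen x y)
    (T : Finset κ) (hT : T.Nonempty) :
    PD (RI (fun i => x i.succ) y ⊔ Ideal.span {∑ t, trunc (x 0) T t * y t}) (n+1) := by
  induction hT using Finset.Nonempty.cons_induction with
  | singleton s =>
    have e : ∑ t, trunc (x 0) {s} t * y t = x 0 s * y s := by
      rw [Finset.sum_eq_single s]
      · simp [trunc]
      · intro t _ ht
        simp [trunc, ht]
      · simp
    rw [e]
    obtain ⟨W, ⟨c⟩, hx, hy⟩ := h.coef_x 0 s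
    have hnz : NZ (RI (fun i => x i.succ) y) (x 0 s) := c.nz (RI_sub W (fun i t => hx _ _ (by simp)) hy)
    refine PD.colon (b := x 0 s) (K1 := RI (fun i => x i.succ) y ⊔ Ideal.span {y s}) ?_ ?_ ?_
    · intro p
      constructor
      · intro hp
        obtain ⟨l, hl, b, hb, hlb⟩ := Submodule.mem_sup.1 hp
        obtain ⟨q, rfl⟩ := Ideal.mem_span_singleton'.1 hb
        have : x 0 s * (p - q * y s) ∈ RI (fun i => x i.succ) y := by
          rw [show x 0 s * (p - q * y s) = l by linear_combination -hlb]
          exact hl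
        rw [show p = (p - q * y s) + q * y s by ring]
        exact Ideal.add_mem _ (Ideal.mem_sup_left (hnz _ this)) (Ideal.mul_mem_left _ _
          (Ideal.mem_sup_right (Ideal.mem_span_singleton_self _)))
      · intro hp
        obtain ⟨l, hl, b, hb, rfl⟩ := Submodule.mem_sup.1 hp
        obtain ⟨q, rfl⟩ := Ideal.mem_span_singleton'.1 hb
        rw [mul_add]
        refine Ideal.add_mem _ (Ideal.mem_sup_left (Ideal.mul_mem_left _ _ hl))
          (Ideal.mem_sup_right (Ideal.mem_span_singleton'.2 ⟨q, by ring⟩))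
    · rw [RI_del]
      obtain ⟨W, ⟨c⟩, hx, hy⟩ := h.coef_y s
      exact PD.add_nzd (c.nz (RI_sub W (fun i t => hx _ _) (fun t => hy _ t.2)))
        (U _ _ _ _ (h.tailDel s)).2
    · have : RI (fun i => x i.succ) y ⊔ Ideal.span {x 0 s * y s} ⊔ Ideal.span {x 0 s} =
        RI (fun i => x i.succ) y ⊔ Ideal.span {x 0 s} := by
        rw [sup_assoc]
        congr 1
        rw [sup_eq_right, Ideal.span_singleton_le_iff_mem]
        exact Ideal.mul_mem_right _ _ (Ideal.mem_span_singleton_self _)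
      rw [this]
      exact PD.add_nzd hnz (U _ _ _ _ h.tail).2
  | cons s T hs hT ih =>
    obtain ⟨s1, hs1⟩ := hT
    have hne : s1 ≠ s := by rintro rfl; exact hs hs1
    have hsT : s ∈ Finset.cons s T hs := Finset.mem_cons_self _ _
    refine PD.of_loc (x := x 0 s) (trunc_nz h (U S κ _ _ h.tail).1 _ s s1 hsT
      (Finset.mem_cons.2 (Or.inr hs1)) hne) ?_ (pd_loc_step U h _ s hsT)
    have e : ∑ t, trunc (x 0) (Finset.cons s T hs) t * y t =
        ∑ t, trunc (x 0) T t * y t + x 0 s * y s := by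
      have : ∀ t, trunc (x 0) (Finset.cons s T hs) t * y t = trunc (x 0) T t * y t +
          if t = s then x 0 s * y s else 0 := by
        intro t
        by_cases ht : t = s
        · subst ht; simp [trunc, hs]
        · simp [trunc, ht]
      rw [Finset.sum_congr rfl fun t _ => this t]
      simp [Finset.sum_add_distrib]
    have e2 : RI (fun i => x i.succ) y ⊔
        Ideal.span {∑ t, trunc (x 0) (Finset.cons s T hs) t * y t} ⊔ Ideal.span {x 0 s} =
        RI (fun i => x i.succ) y ⊔ Ideal.span {∑ t, trunc (x 0) T t * y t} ⊔
        Ideal.span {x 0 s} := by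
      rw [sup_assoc, sup_assoc]
      congr 1
      rw [e, ← Ideal.span_insert, ← Ideal.span_insert]
      rw [Ideal.span_pair_comm, Ideal.span_pair_comm (x := ∑ t, trunc (x 0) T t * y t)]
      rw [mul_comm, Ideal.span_pair_add_mul_left]
    rw [e2]
    obtain ⟨W, ⟨c⟩, hx, hy⟩ := h.coef_x 0 s
    refine PD.add_nzd ?_ ih
    have hG : (Set.range fun i : Fin n => ∑ t, x i.succ t * y t) ∪ {∑ t, trunc (x 0) T t * y t} ⊆
        (W : Set S) := by
      refine Set.union_subset (RI_sub W (fun i t => hx _ _ (by simp)) hy) ?_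
      rintro _ rfl
      refine sum_mem fun t _ => mul_mem ?_ (hy t)
      unfold trunc
      split_ifs with ht
      · refine hx _ _ ?_
        rintro h
        simp at h
        subst h
        exact hs ht
      · exact zero_mem _
    have := c.nz hG
    rwa [Ideal.span_union] at this

end Step

theorem UU_all (n : ℕ) : UU.{u} n := by
  induction n with
  | zero => exact UU_zero
  | succ n U =>
    intro S _ _ κ _ _ x y h
    refine ⟨ann_step U h, ?_⟩
    by_cases hκ : Nonempty κ
    · have := pd_T U h Finset.univ Finset.univ_nonempty
      rwa [trunc_univ, ← RI_succ] at this
    · have : RI x y = ⊥ := by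
        unfold RI
        rw [not_nonempty_iff] at hκ
        simp
      rw [this]
      exact PD.bot.mono (Nat.zero_le _)

theorem polyFree_of_linearIndependent {ι : Type} {k : Type u} [Field k] {N : ℕ}
    (v : ι → MvPolynomial (Fin N) k) (hv : ∀ i, (v i).IsHomogeneous 1)
    (hind : LinearIndependent k v) : PolyFree (∅ : Set (MvPolynomial (Fin N) k)) v := by
  set V := MvPolynomial.homogeneousSubmodule (Fin N) k 1 with hV
  have hspan : V = Submodule.span k (Set.range MvPolynomial.X) :=
    MvPolynomial.homogeneousSubmodule_one_eq_span_X
  have hfin : Module.Finite k V := by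
    rw [hspan]
    exact Module.Finite.span_of_finite k (Set.finite_range _)
  let w : ι → V := fun i => ⟨v i, hv i⟩
  have hw : LinearIndependent k w := LinearIndependent.of_comp V.subtype hind
  obtain ⟨Q, hQ⟩ := Submodule.exists_isCompl (Submodule.span k (Set.range w))
  haveI : Module.Free k Q := Module.Free.of_divisionRing k Q
  haveI : Module.Finite k Q := FiniteDimensional.finiteDimensional_submodule Q
  let B0 := (Module.Basis.span hw).prod (Module.finBasis k Q)
  let B := B0.map (Submodule.prodEquivOfIsCompl _ _ hQ)
  have hB : ∀ i, B (Sum.inl i) = w i := by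
    intro i
    simp [B, B0, Module.Basis.span_apply]
  clear_value B
  let L : V →ₗ[k] MvPolynomial (ι ⊕ Fin (Module.finrank k Q)) k := B.constr k MvPolynomial.X
  have hL : ∀ i, L (B i) = MvPolynomial.X i := fun i => B.constr_basis k _ i
  let f : MvPolynomial (ι ⊕ Fin (Module.finrank k Q)) k →ₐ[k] MvPolynomial (Fin N) k :=
    MvPolynomial.aeval (fun i => (B i : MvPolynomial (Fin N) k))
  let g : MvPolynomial (Fin N) k →ₐ[k] MvPolynomial (ι ⊕ Fin (Module.finrank k Q)) k :=
    MvPolynomial.aeval (fun j => L ⟨MvPolynomial.X j, MvPolynomial.isHomogeneous_X k j⟩)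
  have hfL : ∀ u : V, f (L u) = u := by
    have : f.toLinearMap ∘ₗ L = V.subtype := by
      refine B.ext fun i => ?_
      simp [hL, f]
    exact fun u => LinearMap.congr_fun this u
  have hgL : ∀ u : MvPolynomial (Fin N) k, ∀ hu : u ∈ V, g u = L ⟨u, hu⟩ := by
    intro u hu
    have hu' := hu
    rw [hspan] at hu'
    induction hu' using Submodule.span_induction with
    | mem x hx => obtain ⟨j, rfl⟩ := hx; simp [g]
    | zero => simp; exact (map_zero L).symm
    | add x y hx hy ihx ihy =>
      rw [← hspan] at hx hy
      rw [map_add, ihx hx, ihy hy, ← map_add]; rfl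
    | smul a x hx ih =>
      rw [← hspan] at hx
      rw [map_smul, ih hx, ← map_smul]; rfl
  let e : MvPolynomial (ι ⊕ Fin (Module.finrank k Q)) k ≃ₐ[k] MvPolynomial (Fin N) k :=
    AlgEquiv.ofAlgHom f g (by
      refine MvPolynomial.algHom_ext fun j => ?_
      simp [g, hfL]) (by
      refine MvPolynomial.algHom_ext fun i => ?_
      simp [f, hgL _ (B i).2, hL])
  have h1 : PolyFree (∅ : Set (MvPolynomial (Fin N) k))
      (fun i => (B i : MvPolynomial (Fin N) k)) :=
    ⟨k, inferInstance, e.toRingEquiv, fun i => by simp [e, f], by simp⟩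
  have h2 := (h1.sub Sum.inl Sum.inl_injective).mono (Set.empty_subset _)
  convert h2 using 1
  ext1 i
  simp [hB, w]

theorem PolyFree.ne_top {ι : Type} {S : Type u} [CommRing S] [Nontrivial S] {W : Set S} {v : ι → S}
    (h : PolyFree W v) : Ideal.span (Set.range v) ≠ ⊤ := by
  obtain ⟨A, _, e, he, -⟩ := h
  have : Nontrivial (MvPolynomial ι A) := e.toEquiv.nontrivial
  have hA : Nontrivial A := by
    by_contra hA
    rw [not_nontrivial_iff_subsingleton] at hA
    exact not_subsingleton (MvPolynomial ι A) inferInstance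
  let ψ : S →+* A := (MvPolynomial.constantCoeff).comp (e.symm : S →+* MvPolynomial ι A)
  intro h
  have h1 : Ideal.span (Set.range v) ≤ RingHom.ker ψ := by
    rw [Ideal.span_le]
    rintro _ ⟨i, rfl⟩
    simp [ψ, RingHom.mem_ker, ← he]
  rw [h, top_le_iff] at h1
  exact RingHom.ker_ne_top ψ h1

open Abelian in
theorem PolyFree.le_of_pd {n m : ℕ} {S : Type u} [CommRing S] [Nontrivial S] {W : Set S}
    {z : Fin n → S} (h : PolyFree W z) (hp : PD (Ideal.span (Set.range z)) m) : n ≤ m := by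
  set K := Ideal.span (Set.range z) with hK
  have hnt : Nontrivial (S ⧸ K) := Ideal.Quotient.nontrivial_iff.2 h.ne_top
  let Ki : ℕ → Ideal S := fun j => Ideal.span {w | ∃ i : Fin n, (i : ℕ) < j ∧ w = z i}
  have key : ∀ j, j ≤ n → Nontrivial (Ext (ModuleCat.of S (S ⧸ Ki j)) (ModuleCat.of S (S ⧸ K)) j) := by
    intro j
    induction j with
    | zero =>
      intro _
      have hle : Ki 0 ≤ K := by
        rw [Ideal.span_le]
        rintro _ ⟨i, hi, -⟩
        omega
      have hN : Nontrivial (ModuleCat.of S (S ⧸ Ki 0) ⟶ ModuleCat.of S (S ⧸ K)) := by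
        refine ⟨ModuleCat.ofHom (Submodule.factor hle), 0, fun h0 => ?_⟩
        have h1 := congrArg (fun f => f.hom (Submodule.Quotient.mk 1)) h0
        change (Submodule.Quotient.mk 1 : S ⧸ K) = 0 at h1
        exact one_ne_zero (α := S ⧸ K) h1
      exact Ext.homEquiv₀.nontrivial
    | succ j ih =>
      intro hj
      have hj' : j < n := hj
      have e : Ki (j+1) = Ki j ⊔ Ideal.span {z ⟨j, hj'⟩} := by
        have hs : {w | ∃ i : Fin n, (i : ℕ) < j + 1 ∧ w = z i} =
            {w | ∃ i : Fin n, (i : ℕ) < j ∧ w = z i} ∪ {z ⟨j, hj'⟩} := by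
          ext w
          constructor
          · rintro ⟨i, hi, rfl⟩
            by_cases hij : (i : ℕ) = j
            · right
              simp [← hij]
            · left
              exact ⟨i, by omega, rfl⟩
          · rintro (⟨i, hi, rfl⟩ | rfl)
            · exact ⟨i, by omega, rfl⟩
            · exact ⟨⟨j, hj'⟩, by simp, rfl⟩
        simp only [Ki]
        rw [hs, Ideal.span_union]
      rw [e]
      obtain ⟨c⟩ := (h.single ⟨j, hj'⟩).coef
      refine ext_nontrivial_step (c.nz ?_) _ ?_ j (ih (by omega))
      · rintro _ ⟨i, hi, rfl⟩
        refine Subring.subset_closure ⟨i, ?_, rfl⟩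
        rintro rfl
        simp at hi
      · refine ModuleCat.hom_ext (LinearMap.ext fun p => ?_)
        obtain ⟨p, rfl⟩ := Submodule.Quotient.mk_surjective _ p
        change (Submodule.Quotient.mk (z ⟨j, hj'⟩ * p) : S ⧸ K) = 0
        rw [Submodule.Quotient.mk_eq_zero]
        exact Ideal.mul_mem_right _ _ (Ideal.subset_span ⟨_, rfl⟩)
  have hKn : Ki n = K := by
    simp only [Ki, hK]
    congr 1
    ext w
    simp [eq_comm]
  have h1 := key n le_rfl
  rw [hKn] at h1
  by_contra hlt
  unfold PD HasProjectiveDimensionLE at hp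
  have := HasProjectiveDimensionLT.subsingleton (ModuleCat.of S (S ⧸ K)) (m+1) n (by omega)
    (ModuleCat.of S (S ⧸ K))
  exact not_subsingleton _ this

theorem Gen.le_of_pd {n m : ℕ} {κ : Type} [Fintype κ] [DecidableEq κ] {S : Type u} [CommRing S]
    [Nontrivial S] {x : Fin n → κ → S} {y : κ → S} (h : Gen x y) (s : κ) (hp : PD (RI x y) m) :
    n ≤ m := by
  have h1 := PolyFree.sub h (fun i : Fin n => Sum.inl (i, s)) (fun i j hij => by simpa using hij)
  have hm : ∀ i, i ∉ Set.range (fun i : Fin n => (Sum.inl (i, s) : (Fin n × κ) ⊕ κ)) →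
    (Sum.elim (fun p : Fin n × κ => x p.1 p.2) y) i ∈ (∅ ∪ {w | ∃ i,
      i ∉ Set.range (fun i : Fin n => (Sum.inl (i, s) : (Fin n × κ) ⊕ κ)) ∧
      w = Sum.elim (fun p : Fin n × κ => x p.1 p.2) y i} : Set S) := fun i hi => Or.inr ⟨i, hi, rfl⟩
  have h2 := h1.loc (y s) (hm (Sum.inr s) (by simp))
  set φ := algebraMap S (Localization.Away (y s)) with hφ
  set u : Localization.Away (y s) := IsLocalization.Away.invSelf (y s) with hu
  have hyu : φ (y s) * u = 1 := IsLocalization.Away.mul_invSelf _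
  have h3 := h2.translate (fun i => ∑ t : {t // t ≠ s}, φ (x i t) * φ (y t) * u) (fun i => by
    refine sum_mem fun t _ => mul_mem (mul_mem ?_ ?_) ?_
    · exact Subring.subset_closure (Or.inl ⟨_, hm (Sum.inl (i, t)) (by
        rintro ⟨j, hj⟩
        simp at hj
        exact t.2 hj.2.symm), rfl⟩)
    · exact Subring.subset_closure (Or.inl ⟨_, hm (Sum.inr t) (by simp), rfl⟩)
    · exact Subring.subset_closure (Or.inr rfl))
  have hnt : Nontrivial (Localization.Away (y s)) := by
    by_contra hn
    rw [not_nontrivial_iff_subsingleton] at hn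
    have h0 : φ 1 = φ 0 := Subsingleton.elim _ _
    rw [IsLocalization.eq_iff_exists (Submonoid.powers (y s))] at h0
    obtain ⟨⟨_, k, rfl⟩, hk⟩ := h0
    obtain ⟨W, ⟨c⟩, -, -⟩ := h.coef_y s
    have hz := c.nz (G := ∅) (Set.empty_subset _)
    have := hz.pow k 1 (by
      simp only [mul_zero] at hk
      rw [hk]
      exact zero_mem _)
    simp at this
  refine h3.le_of_pd (m := m) ?_
  have h4 := hp.loc (y s)
  convert h4 using 1
  rw [RI, Ideal.map_span]
  have e : ∀ i, φ (∑ t, x i t * y t) = φ (y s) * (φ (x i s) +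
      ∑ t : {t // t ≠ s}, φ (x i t) * φ (y t) * u) := by
    intro i
    rw [Fintype.sum_eq_add_sum_subtype_ne _ s]
    simp only [map_add, map_mul, map_sum, mul_add, Finset.mul_sum]
    congr 1
    · ring
    · refine Finset.sum_congr rfl fun t _ => ?_
      linear_combination (-(φ (x i t) * φ (y t))) * hyu
  apply le_antisymm
  · rw [Ideal.span_le]
    rintro _ ⟨i, rfl⟩
    have : (φ (x i s) + ∑ t : {t // t ≠ s}, φ (x i t) * φ (y t) * u) =
      u * φ (∑ t, x i t * y t) := by
      rw [e]
      linear_combination (-(φ (x i s) + ∑ t : {t // t ≠ s}, φ (x i t) * φ (y t) * u)) * hyu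
    change (φ (x i s) + ∑ t : {t // t ≠ s}, φ (x i t) * φ (y t) * u) ∈ _
    rw [this]
    exact Ideal.mul_mem_left _ _ (Ideal.subset_span ⟨_, ⟨i, rfl⟩, rfl⟩)
  · rw [Ideal.span_le]
    rintro _ ⟨_, ⟨i, rfl⟩, rfl⟩
    change φ (∑ t, x i t * y t) ∈ _
    rw [e]
    exact Ideal.mul_mem_left _ _ (Ideal.subset_span ⟨i, rfl⟩)

/-- If `ℓ, ℓ', ℓ'', a_1, …, a_n, b_1, …, b_n, c_1, …, c_n` are linearly
independent linear forms, `f_i = a_i ℓ + b_i ℓ' + c_i ℓ''`, and `I = (f_1, …, f_n)`,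
then `pd_S(S/I) = n`. -/
theorem pd_eq_of_generic_three_linear (k : Type u) [Field k] (N : ℕ) (n : ℕ)
    (l l' l'' : MvPolynomial (Fin N) k)
    (hl : l.IsHomogeneous 1) (hl' : l'.IsHomogeneous 1) (hl'' : l''.IsHomogeneous 1)
    (a b c : Fin n → MvPolynomial (Fin N) k)
    (ha : ∀ i, (a i).IsHomogeneous 1) (hb : ∀ i, (b i).IsHomogeneous 1)
    (hc : ∀ i, (c i).IsHomogeneous 1)
    (hind : LinearIndependent k (Sum.elim ![l, l', l''] (Sum.elim a (Sum.elim b c))))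
    (f : Fin n → MvPolynomial (Fin N) k)
    (hf : ∀ i, f i = a i * l + b i * l' + c i * l'')
    (I : Ideal (MvPolynomial (Fin N) k))
    (hI : I = Ideal.span (Set.range f)) :
    projDim (MvPolynomial (Fin N) k) (MvPolynomial (Fin N) k ⧸ I) = (n : ℕ∞) := by
  classical
  let x : Fin n → Fin 3 → MvPolynomial (Fin N) k := fun i => ![a i, b i, c i]
  let y : Fin 3 → MvPolynomial (Fin N) k := ![l, l', l'']
  let j : (Fin n × Fin 3) ⊕ Fin 3 → Fin 3 ⊕ (Fin n ⊕ (Fin n ⊕ Fin n)) :=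
    Sum.elim (fun p => Sum.inr
      (![Sum.inl p.1, Sum.inr (Sum.inl p.1), Sum.inr (Sum.inr p.1)] p.2)) Sum.inl
  have hj : Function.Injective j := by
    rintro (⟨i, s⟩ | s) (⟨i', s'⟩ | s') h
    · fin_cases s <;> fin_cases s' <;> simp_all [j]
    · simp [j] at h
    · simp [j] at h
    · simpa [j] using h
  have hcomp : (Sum.elim ![l, l', l''] (Sum.elim a (Sum.elim b c))) ∘ j =
      Sum.elim (fun p : Fin n × Fin 3 => x p.1 p.2) y := by
    ext1 q
    rcases q with ⟨i, s⟩ | s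
    · fin_cases s <;> rfl
    · rfl
  have hind' := hind.comp j hj
  rw [hcomp] at hind'
  have hgen : Gen x y := by
    refine polyFree_of_linearIndependent _ ?_ hind'
    rintro (⟨i, s⟩ | s)
    · fin_cases s
      · exact ha i
      · exact hb i
      · exact hc i
    · fin_cases s
      · exact hl
      · exact hl'
      · exact hl''
  have hIR : I = RI x y := by
    rw [hI, RI]
    congr 2
    ext1 i
    rw [hf, Fin.sum_univ_three]
    rfl
  have hU := (UU_all n _ _ x y hgen).2
  rw [← hIR] at hU
  have hset : {m : ℕ | ∀ i : ℕ, m < i → ∀ L : ModuleCat.{u} (MvPolynomial (Fin N) k),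
      Subsingleton (((Ext (MvPolynomial (Fin N) k) (ModuleCat.{u} (MvPolynomial (Fin N) k)) i).obj
        (op (ModuleCat.of _ (MvPolynomial (Fin N) k ⧸ I)))).obj L)} = {m | PD I m} := by
    ext m
    simp only [Set.mem_setOf_eq]
    constructor
    · intro h
      unfold PD HasProjectiveDimensionLE
      rw [hasProjectiveDimensionLT_iff]
      intro i hi L e
      obtain ⟨i, rfl⟩ : ∃ q, i = q + 1 := ⟨i - 1, by omega⟩
      have := (oldExt_subsingleton_iff _ L i).1 (h (i+1) (by omega) L)
      exact Subsingleton.elim _ _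
    · intro h i hi L
      obtain ⟨i, rfl⟩ : ∃ q, i = q + 1 := ⟨i - 1, by omega⟩
      rw [oldExt_subsingleton_iff]
      unfold PD HasProjectiveDimensionLE at h
      exact HasProjectiveDimensionLT.subsingleton _ (m+1) (i+1) (by omega) L
  unfold projDim
  rw [hset]
  apply le_antisymm
  · exact sInf_le ⟨n, hU, rfl⟩
  · refine le_sInf ?_
    rintro _ ⟨m, hm, rfl⟩
    have hm' : PD I m := hm
    rw [hIR] at hm'
    exact_mod_cast hgen.le_of_pd 0 hm'
end

section
/- Let k be a field, S a polynomial ring over k, and I ⊆ S a homogeneous ideal of height 3 generated by quadrics. If I is not a complete intersection (i.e., I cannot be generated by 3 elements), then the Hilbert–Samuel multiplicity satisfies e(S/I) ≤ 6. -/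
open CategoryTheory Opposite

universe u

namespace MQ

open MvPolynomial Module

section basics

lemma rank_nullity {K V W : Type*} [Field K] [AddCommGroup V] [Module K V] [AddCommGroup W]
    [Module K W] (f : V →ₗ[K] W) (U : Submodule K V) [FiniteDimensional K U] :
    finrank K (U.map f) + finrank K (U ⊓ LinearMap.ker f : Submodule K V) = finrank K U := by
  have h := LinearMap.finrank_range_add_finrank_ker (f.domRestrict U)
  rw [LinearMap.range_domRestrict] at h
  rw [← h]
  congr 1
  have h2 : (U ⊓ LinearMap.ker f : Submodule K V)
      = (LinearMap.ker (f.domRestrict U)).map U.subtype := by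
    ext x
    simp [and_comm]
  rw [h2]
  exact LinearEquiv.finrank_eq
    (Submodule.equivMapOfInjective _ U.injective_subtype _).symm

variable {K : Type u} [Field K] {n m : ℕ}

instance fdHom (d : ℕ) : FiniteDimensional K (homogeneousSubmodule (Fin n) K d) :=
  Module.Finite.iff_fg.mpr (homogeneousSubmodule_fg (σ := Fin n) (R := K) d)

/-- degree d part of J -/
noncomputable def part (J : Ideal (MvPolynomial (Fin n) K)) (d : ℕ) : Submodule K (MvPolynomial (Fin n) K) :=
  homogeneousSubmodule (Fin n) K d ⊓ J.restrictScalars K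

lemma mem_part {J : Ideal (MvPolynomial (Fin n) K)} {d : ℕ} {p : MvPolynomial (Fin n) K} :
    p ∈ part J d ↔ p.IsHomogeneous d ∧ p ∈ J := by
  simp [part]

instance fdPart (J : Ideal (MvPolynomial (Fin n) K)) (d : ℕ) : FiniteDimensional K (part J d) :=
  Submodule.finiteDimensional_of_le (S₂ := homogeneousSubmodule (Fin n) K d) inf_le_left

lemma hf_add (J : Ideal (MvPolynomial (Fin n) K)) (d : ℕ) :
    hilbertFunction K J d + finrank K (part J d)
      = finrank K (homogeneousSubmodule (Fin n) K d) := by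
  rw [← rank_nullity (Ideal.Quotient.mkₐ K J).toLinearMap (homogeneousSubmodule (Fin n) K d)]
  unfold hilbertFunction
  have : part J d = homogeneousSubmodule (Fin n) K d ⊓
      LinearMap.ker (Ideal.Quotient.mkₐ K J).toLinearMap := by
    ext p
    simp [part, Ideal.Quotient.eq_zero_iff_mem]
  rw [this]

lemma finrank_hom (d : ℕ) :
    finrank K (homogeneousSubmodule (Fin n) K d) = n.multichoose d := by
  rw [homogeneousSubmodule_eq_finsupp_supported]
  have e := AddMonoidAlgebra.supportedEquivFinsupp (R := K) (S := K) {d_1 : Fin n →₀ ℕ | d_1.degree = d}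
  rw [e.finrank_eq]
  have hs : {d_1 : Fin n →₀ ℕ | d_1.degree = d}
      = ((Finset.univ : Finset (Fin n)).finsuppAntidiag d : Set (Fin n →₀ ℕ)) := by
    ext f
    simp [Finsupp.degree_eq_sum]
  rw [hs]
  rw [Module.finrank_finsupp_self]
  simp [Finset.card_finsuppAntidiag_nat_eq_multichoose]

lemma hf_le_of (A : Ideal (MvPolynomial (Fin n) K)) (B : Ideal (MvPolynomial (Fin m) K)) (d e : ℕ)
    (g : MvPolynomial (Fin n) K →ₗ[K] MvPolynomial (Fin m) K)
    (hg : ∀ p, p.IsHomogeneous d → (g p).IsHomogeneous e)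
    (hAB : ∀ p, p.IsHomogeneous d → g p ∈ B → p ∈ A) :
    hilbertFunction K A d ≤ hilbertFunction K B e := by
  have h1 := hf_add A d
  have h2 := rank_nullity ((Ideal.Quotient.mkₐ K B).toLinearMap ∘ₗ g)
    (homogeneousSubmodule (Fin n) K d)
  have h3 : finrank K (homogeneousSubmodule (Fin n) K d ⊓
      LinearMap.ker ((Ideal.Quotient.mkₐ K B).toLinearMap ∘ₗ g) :
      Submodule K (MvPolynomial (Fin n) K)) ≤ finrank K (part A d) := by
    apply Submodule.finrank_mono
    intro p hp
    simp [Ideal.Quotient.eq_zero_iff_mem] at hp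
    exact mem_part.2 ⟨hp.1, hAB p hp.1 hp.2⟩
  have h4 : finrank K (Submodule.map ((Ideal.Quotient.mkₐ K B).toLinearMap ∘ₗ g)
      (homogeneousSubmodule (Fin n) K d)) ≤ hilbertFunction K B e := by
    unfold hilbertFunction
    rw [Submodule.map_comp]
    apply Submodule.finrank_mono
    apply Submodule.map_mono
    rintro _ ⟨p, hp, rfl⟩
    exact hg p hp
  omega

lemma hf_anti {A B : Ideal (MvPolynomial (Fin n) K)} (h : A ≤ B) (d : ℕ) :
    hilbertFunction K B d ≤ hilbertFunction K A d :=
  hf_le_of B A d d LinearMap.id (fun _ hp => hp) (fun _ _ hp => h hp)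

/-- graded ideals -/
def HomI (J : Ideal (MvPolynomial (Fin n) K)) : Prop :=
  ∀ p ∈ J, ∀ d, homogeneousComponent d p ∈ J

attribute [local instance] MvPolynomial.gradedAlgebra in
lemma homI_iff (J : Ideal (MvPolynomial (Fin n) K)) :
    HomI J ↔ J.IsHomogeneous (homogeneousSubmodule (Fin n) K) := by
  constructor
  · intro h i p hp
    have := h p hp i
    convert this
    exact decomposition.decompose'_apply p i
  · intro h p hp d
    exact homogeneousComponent_mem_of_mem h hp d

attribute [local instance] MvPolynomial.gradedAlgebra in
lemma homI_span {s : Set (MvPolynomial (Fin n) K)} (hs : ∀ p ∈ s, ∃ d, p.IsHomogeneous d) :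
    HomI (Ideal.span s) := by
  rw [homI_iff]
  apply Ideal.homogeneous_span
  intro p hp
  obtain ⟨d, hd⟩ := hs p hp
  exact ⟨d, hd⟩

lemma homI_sup {A B : Ideal (MvPolynomial (Fin n) K)} (hA : HomI A) (hB : HomI B) :
    HomI (A ⊔ B) := by
  intro p hp d
  obtain ⟨a, ha, b, hb, rfl⟩ := Submodule.mem_sup.1 hp
  rw [map_add]
  exact Submodule.add_mem_sup (hA a ha d) (hB b hb d)

lemma comp_mul {l : MvPolynomial (Fin n) K} {e : ℕ} (hl : l.IsHomogeneous e) (d : ℕ)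
    (s : MvPolynomial (Fin n) K) :
    homogeneousComponent (d + e) (l * s) = l * homogeneousComponent d s := by
  conv_lhs => rw [← sum_homogeneousComponent s, Finset.mul_sum, map_sum]
  have h : ∀ i, homogeneousComponent (d + e) (l * homogeneousComponent i s)
      = if i = d then l * homogeneousComponent d s else 0 := by
    intro i
    rw [homogeneousComponent_of_mem (n := i + e) (by
      rw [mem_homogeneousSubmodule, add_comm]
      exact hl.mul (homogeneousComponent_isHomogeneous i s))]
    by_cases hi : i = d
    · simp [hi]
    · rw [if_neg hi, if_neg]; omega
  simp_rw [h]
  rw [Finset.sum_ite_eq']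
  split_ifs with hd
  · rfl
  · rw [homogeneousComponent_eq_zero, mul_zero]
    simp at hd; omega

lemma comp_mul_zero {l : MvPolynomial (Fin n) K} {e : ℕ} (hl : l.IsHomogeneous e) (d : ℕ)
    (hd : d < e) (s : MvPolynomial (Fin n) K) :
    homogeneousComponent d (l * s) = 0 := by
  conv_lhs => rw [← sum_homogeneousComponent s, Finset.mul_sum, map_sum]
  apply Finset.sum_eq_zero
  intro i _
  rw [homogeneousComponent_of_mem (n := i + e) (by
      rw [mem_homogeneousSubmodule, add_comm]
      exact hl.mul (homogeneousComponent_isHomogeneous i s)), if_neg]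
  omega

lemma hf_step {J J' : Ideal (MvPolynomial (Fin n) K)} (hJ : HomI J)
    {l : MvPolynomial (Fin n) K} {e : ℕ} (hl : l.IsHomogeneous e)
    (h : ∀ p ∈ J', l * p ∈ J) (d : ℕ) :
    hilbertFunction K J (d + e) ≤
      hilbertFunction K (J ⊔ Ideal.span {l}) (d + e) + hilbertFunction K J' d := by
  have h1 := hf_add J (d + e)
  have h2 := hf_add (J ⊔ Ideal.span {l}) (d + e)
  have h3 := rank_nullity (Ideal.Quotient.mkₐ K J).toLinearMap (part (J ⊔ Ideal.span {l}) (d + e))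
  have h4 : finrank K (part (J ⊔ Ideal.span {l}) (d + e) ⊓
      LinearMap.ker (Ideal.Quotient.mkₐ K J).toLinearMap : Submodule K (MvPolynomial (Fin n) K))
      ≤ finrank K (part J (d + e)) := by
    apply Submodule.finrank_mono
    intro p hp
    simp [Ideal.Quotient.eq_zero_iff_mem, mem_part] at hp
    exact mem_part.2 ⟨hp.1.1, hp.2⟩
  have h5 : (part (J ⊔ Ideal.span {l}) (d + e)).map (Ideal.Quotient.mkₐ K J).toLinearMap ≤
      (homogeneousSubmodule (Fin n) K d).map
        ((Ideal.Quotient.mkₐ K J).toLinearMap ∘ₗ LinearMap.mulLeft K l) := by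
    rintro _ ⟨p, hp, rfl⟩
    obtain ⟨hp1, hp2⟩ := mem_part.1 hp
    obtain ⟨a, ha, b, hb, rfl⟩ := Submodule.mem_sup.1 hp2
    obtain ⟨s, rfl⟩ := Ideal.mem_span_singleton.1 hb
    refine ⟨homogeneousComponent d s, homogeneousComponent_isHomogeneous d s, ?_⟩
    have := homogeneousComponent_eq_self hp1
    rw [map_add, comp_mul hl] at this
    rw [← this]
    simp [Ideal.Quotient.eq_zero_iff_mem.2 (hJ a ha (d + e))]
  have h6 := rank_nullity ((Ideal.Quotient.mkₐ K J).toLinearMap ∘ₗ LinearMap.mulLeft K l)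
    (homogeneousSubmodule (Fin n) K d)
  have h7 := hf_add J' d
  have h8 : finrank K (part J' d) ≤ finrank K (homogeneousSubmodule (Fin n) K d ⊓
      LinearMap.ker ((Ideal.Quotient.mkₐ K J).toLinearMap ∘ₗ LinearMap.mulLeft K l) :
      Submodule K (MvPolynomial (Fin n) K)) := by
    have : FiniteDimensional K (homogeneousSubmodule (Fin n) K d ⊓
      LinearMap.ker ((Ideal.Quotient.mkₐ K J).toLinearMap ∘ₗ LinearMap.mulLeft K l) :
      Submodule K (MvPolynomial (Fin n) K)) :=
        Submodule.finiteDimensional_of_le (S₂ := homogeneousSubmodule (Fin n) K d) inf_le_left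
    apply Submodule.finrank_mono
    intro p hp
    obtain ⟨hp1, hp2⟩ := mem_part.1 hp
    refine ⟨hp1, ?_⟩
    have := h p hp2
    simpa [Ideal.Quotient.eq_zero_iff_mem, ← map_mul] using this
  have h9 := Submodule.finrank_mono h5
  omega

lemma hf_step0 {J : Ideal (MvPolynomial (Fin n) K)} (hJ : HomI J)
    {l : MvPolynomial (Fin n) K} {e : ℕ} (hl : l.IsHomogeneous e) (d : ℕ) (hd : d < e) :
    hilbertFunction K J d ≤ hilbertFunction K (J ⊔ Ideal.span {l}) d := by
  apply hf_le_of _ _ _ _ LinearMap.id (fun _ hp => hp)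
  intro p hp1 hp2
  obtain ⟨a, ha, b, hb, hab⟩ := Submodule.mem_sup.1 hp2
  obtain ⟨s, rfl⟩ := Ideal.mem_span_singleton.1 hb
  have := homogeneousComponent_eq_self hp1
  simp only [LinearMap.id_apply] at hab
  rw [← hab, map_add, comp_mul_zero hl d hd, hab, add_zero] at this
  rw [← this]
  exact hJ a ha d

end basics

end MQ

namespace MQ

open Polynomial

section bound

/-- `g` is dominated by the coefficients of `p / (1 - X)^r` with `p(1) ≤ c`. -/
def Bd (g : ℕ → ℕ) (r : ℕ) (c : ℚ) : Prop :=
  ∃ p : ℚ[X], p.eval 1 ≤ c ∧ ∀ d, (g d : ℚ) ≤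
    PowerSeries.coeff d ((p : PowerSeries ℚ) * (PowerSeries.invOneSubPow ℚ r : PowerSeries ℚ))

lemma inv_succ (r : ℕ) : (PowerSeries.invOneSubPow ℚ (r + 1) : PowerSeries ℚ) *
    (1 - PowerSeries.X : PowerSeries ℚ) = (PowerSeries.invOneSubPow ℚ r : PowerSeries ℚ) := by
  have h1 := PowerSeries.invOneSubPow_inv_eq_one_sub_pow ℚ (r + 1)
  have h2 := PowerSeries.invOneSubPow_inv_eq_one_sub_pow ℚ r
  have h3 : (PowerSeries.invOneSubPow ℚ (r + 1) : PowerSeries ℚ) * (1 - PowerSeries.X) ^ (r + 1) = 1 := by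
    rw [← h1]; exact Units.mul_inv _
  have h4 : (PowerSeries.invOneSubPow ℚ r : PowerSeries ℚ) * (1 - PowerSeries.X) ^ r = 1 := by
    rw [← h2]; exact Units.mul_inv _
  calc _ = (PowerSeries.invOneSubPow ℚ (r + 1) : PowerSeries ℚ) * (1 - PowerSeries.X) *
        ((PowerSeries.invOneSubPow ℚ r : PowerSeries ℚ) * (1 - PowerSeries.X) ^ r) := by
        rw [h4, mul_one]
    _ = (PowerSeries.invOneSubPow ℚ r : PowerSeries ℚ) *
        ((PowerSeries.invOneSubPow ℚ (r + 1) : PowerSeries ℚ) * (1 - PowerSeries.X) ^ (r + 1)) := by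
        ring
    _ = _ := by rw [h3, mul_one]

lemma coeff_succ_step (p : ℚ[X]) (r d : ℕ) :
    PowerSeries.coeff (d + 1) ((p : PowerSeries ℚ) * (PowerSeries.invOneSubPow ℚ (r + 1) : PowerSeries ℚ))
    = PowerSeries.coeff d ((p : PowerSeries ℚ) * (PowerSeries.invOneSubPow ℚ (r + 1) : PowerSeries ℚ))
    + PowerSeries.coeff (d + 1) ((p : PowerSeries ℚ) * (PowerSeries.invOneSubPow ℚ r : PowerSeries ℚ)) := by
  rw [← inv_succ r, ← mul_assoc, mul_sub, mul_one, map_sub, PowerSeries.coeff_succ_mul_X]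
  ring

lemma coeff_zero_step (p : ℚ[X]) (r : ℕ) :
    PowerSeries.coeff 0 ((p : PowerSeries ℚ) * (PowerSeries.invOneSubPow ℚ (r + 1) : PowerSeries ℚ))
    = PowerSeries.coeff 0 ((p : PowerSeries ℚ) * (PowerSeries.invOneSubPow ℚ r : PowerSeries ℚ)) := by
  rw [← inv_succ r, ← mul_assoc, mul_sub, mul_one, map_sub, PowerSeries.coeff_zero_mul_X]
  ring

lemma Bd.sum {g g1 : ℕ → ℕ} {r : ℕ} {c : ℚ} (h : Bd g1 r c) (h0 : g 0 ≤ g1 0)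
    (hs : ∀ d, g (d + 1) ≤ g1 (d + 1) + g d) : Bd g (r + 1) c := by
  obtain ⟨p, hp, hb⟩ := h
  refine ⟨p, hp, fun d => ?_⟩
  induction d with
  | zero =>
    rw [coeff_zero_step]
    exact le_trans (by exact_mod_cast h0) (hb 0)
  | succ d ih =>
    rw [coeff_succ_step]
    have h1 : (g (d + 1) : ℚ) ≤ g1 (d + 1) + g d := by exact_mod_cast hs d
    linarith [hb (d + 1)]

lemma Bd.mono {g g1 : ℕ → ℕ} {r : ℕ} {c : ℚ} (h : Bd g1 r c) (hs : ∀ d, g d ≤ g1 d) : Bd g r c := by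
  obtain ⟨p, hp, hb⟩ := h
  exact ⟨p, hp, fun d => le_trans (by exact_mod_cast hs d) (hb d)⟩

lemma Bd.mono_c {g : ℕ → ℕ} {r : ℕ} {c c' : ℚ} (h : Bd g r c) (hs : c ≤ c') : Bd g r c' := by
  obtain ⟨p, hp, hb⟩ := h
  exact ⟨p, hp.trans hs, hb⟩

lemma Bd.add {g g1 g2 : ℕ → ℕ} {r : ℕ} {c c' : ℚ} (h1 : Bd g1 (r + 1) c) (h2 : Bd g2 r c')
    (h0 : g 0 ≤ g2 0) (hs : ∀ d, g (d + 1) ≤ g2 (d + 1) + g1 d) : Bd g (r + 1) c := by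
  obtain ⟨p, hp, hb⟩ := h1
  obtain ⟨p', hp', hb'⟩ := h2
  refine ⟨X * p + (1 - X) * p', by simpa using hp, fun d => ?_⟩
  have e : (((X * p + (1 - X) * p' : ℚ[X]) : PowerSeries ℚ)) *
      (PowerSeries.invOneSubPow ℚ (r + 1) : PowerSeries ℚ) =
      ((p : PowerSeries ℚ) * (PowerSeries.invOneSubPow ℚ (r + 1) : PowerSeries ℚ)) * PowerSeries.X +
      (p' : PowerSeries ℚ) * (PowerSeries.invOneSubPow ℚ r : PowerSeries ℚ) := by
    rw [← inv_succ r]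
    push_cast
    ring
  rw [e, map_add]
  cases d with
  | zero =>
    rw [PowerSeries.coeff_zero_mul_X, zero_add]
    exact le_trans (by exact_mod_cast h0) (hb' 0)
  | succ d =>
    rw [PowerSeries.coeff_succ_mul_X]
    have h1 : (g (d + 1) : ℚ) ≤ g2 (d + 1) + g1 d := by exact_mod_cast hs d
    linarith [hb' (d + 1), hb d]

lemma Bd.base {g : ℕ → ℕ} {m : ℕ} (h : ∀ d, m ≤ d → g d = 0) {c : ℚ}
    (hc : ((∑ i ∈ Finset.range m, g i : ℕ) : ℚ) ≤ c) : Bd g 0 c := by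
  refine ⟨∑ i ∈ Finset.range m, Polynomial.C (g i : ℚ) * X ^ i, ?_, fun d => ?_⟩
  · simp [eval_finsetSum]
    exact_mod_cast hc
  · simp only [PowerSeries.invOneSubPow_zero, Units.val_one, mul_one, Polynomial.coeff_coe,
      finsetSum_coeff, coeff_C_mul, coeff_X_pow]
    simp
    split_ifs with hd
    · exact le_rfl
    · simp [h d (not_lt.1 hd)]

lemma Bd.final_zero {g : ℕ → ℕ} {c : ℚ} (h : Bd g 0 c) (P : ℚ[X])
    (hP : ∀ᶠ d : ℕ in Filter.atTop, (g d : ℚ) = P.eval (d : ℚ)) : P = 0 := by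
  obtain ⟨p, hp, hb⟩ := h
  have h1 : ∀ᶠ d : ℕ in Filter.atTop, P.eval (d : ℚ) = 0 := by
    filter_upwards [hP, Filter.eventually_gt_atTop p.natDegree] with d h1 h2
    have := hb d
    simp only [PowerSeries.invOneSubPow_zero, Units.val_one, mul_one, Polynomial.coeff_coe,
      Polynomial.coeff_eq_zero_of_natDegree_lt h2] at this
    rw [← h1]
    exact le_antisymm this (by positivity)
  obtain ⟨M, hM⟩ := Filter.eventually_atTop.1 h1
  apply Polynomial.eq_zero_of_infinite_isRoot
  apply Set.Infinite.mono (s := (fun d : ℕ => (d : ℚ)) '' Set.Ici M)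
  · rintro _ ⟨d, hd, rfl⟩
    exact hM d hd
  · exact (Set.Ici_infinite M).image (fun _ _ _ _ h => by exact_mod_cast h)

lemma hilbertPoly_natDegree_le (p : ℚ[X]) (r : ℕ) : (hilbertPoly p (r + 1)).natDegree ≤ r := by
  rw [hilbertPoly_succ]
  apply Polynomial.natDegree_sum_le_of_forall_le
  intro i _
  exact (natDegree_smul_le _ _).trans (natDegree_preHilbertPoly ℚ r i).le

lemma hilbertPoly_coeff (p : ℚ[X]) (r : ℕ) :
    (hilbertPoly p (r + 1)).coeff r = p.eval 1 / r.factorial := by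
  rw [hilbertPoly_succ, finsetSum_coeff, eval_eq_sum, Polynomial.sum, Finset.sum_div]
  apply Finset.sum_congr rfl
  intro i _
  rw [coeff_smul, coeff_preHilbertPoly_self]
  simp [div_eq_mul_inv]

/-- comparing polynomials at infinity -/
lemma poly_cmp {P F : ℚ[X]} {r : ℕ} (hF : F.natDegree ≤ r) (hr : r ≤ P.natDegree)
    (hPF : ∀ᶠ d : ℕ in Filter.atTop, P.eval (d : ℚ) ≤ F.eval (d : ℚ))
    (hP0 : ∀ᶠ d : ℕ in Filter.atTop, 0 ≤ P.eval (d : ℚ)) :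
    P.leadingCoeff ≤ F.coeff r ∧ (P.leadingCoeff ≠ 0 → P.natDegree = r) := by
  by_cases hPz : P = 0
  · subst hPz
    simp at hr
    subst hr
    have hFc : F = Polynomial.C (F.coeff 0) := Polynomial.eq_C_of_natDegree_le_zero hF
    obtain ⟨d, hd⟩ := hPF.exists
    rw [hFc] at hd
    simpa using hd
  -- the difference has nonnegative leading coefficient
  have key : ∀ G : ℚ[X], (∀ᶠ d : ℕ in Filter.atTop, 0 ≤ G.eval (d : ℚ)) → 0 ≤ G.leadingCoeff := by
    intro G hG
    by_contra hlt
    push Not at hlt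
    by_cases hdeg : 0 < G.degree
    · have ht := Polynomial.tendsto_atBot_of_leadingCoeff_nonpos G hdeg hlt.le
      have ht2 := ht.comp (tendsto_natCast_atTop_atTop (R := ℚ))
      obtain ⟨d, hd1, hd2⟩ := (hG.and (ht2.eventually_lt_atBot 0)).exists
      simp only [Function.comp] at hd2
      linarith
    · have : G = Polynomial.C (G.coeff 0) := Polynomial.eq_C_of_degree_le_zero (not_lt.1 hdeg)
      obtain ⟨d, hd⟩ := hG.exists
      rw [this] at hd hlt
      simp at hd hlt
      linarith
  have hPpos : 0 < P.leadingCoeff := lt_of_le_of_ne (key P hP0)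
    (Ne.symm (by simpa using hPz))
  have hd : 0 ≤ (F - P).leadingCoeff := key _ (by
    filter_upwards [hPF] with d hd; simpa using hd)
  have hdeg : P.natDegree = r := by
    by_contra hne
    have hlt : F.natDegree < P.natDegree := by omega
    have : (F - P).leadingCoeff = - P.leadingCoeff := by
      rw [← neg_sub, Polynomial.leadingCoeff_neg, Polynomial.leadingCoeff_sub_of_degree_lt (Polynomial.degree_lt_degree hlt)]
    linarith
  refine ⟨?_, fun _ => hdeg⟩
  by_contra hlt
  push Not at hlt
  have hPc : P.leadingCoeff = P.coeff r := by rw [Polynomial.leadingCoeff, hdeg]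
  have hc : (F - P).coeff r < 0 := by rw [coeff_sub]; linarith
  have hn : (F - P).natDegree = r := by
    apply le_antisymm
    · exact (natDegree_sub_le _ _).trans (by omega)
    · exact le_natDegree_of_ne_zero hc.ne
  rw [Polynomial.leadingCoeff, hn] at hd
  linarith

lemma Bd.final {g : ℕ → ℕ} {r : ℕ} {c : ℚ} (h : Bd g (r + 1) c) (P : ℚ[X])
    (hP : ∀ᶠ d : ℕ in Filter.atTop, (g d : ℚ) = P.eval (d : ℚ)) (hr : r ≤ P.natDegree) (hc0 : 0 ≤ c) :
    (P.natDegree.factorial : ℚ) * P.leadingCoeff ≤ c := by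
  obtain ⟨p, hp, hb⟩ := h
  have h1 := poly_cmp (P := P) (hilbertPoly_natDegree_le p r) hr (by
    filter_upwards [hP, Filter.eventually_gt_atTop p.natDegree] with d h1 h2
    rw [← h1, ← coeff_mul_invOneSubPow_eq_hilbertPoly_eval (r + 1) h2]
    exact hb d) (by filter_upwards [hP] with d h1; rw [← h1]; positivity)
  by_cases hz : P.leadingCoeff = 0
  · rw [hz]; simpa using hc0
  · rw [h1.2 hz]
    have h2 := h1.1
    rw [hilbertPoly_coeff, le_div_iff₀ (by positivity)] at h2
    linarith

/-- lower bound on the degree -/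
lemma natDegree_ge {g : ℕ → ℕ} {r : ℕ} (P : ℚ[X])
    (hP : ∀ᶠ d : ℕ in Filter.atTop, (g d : ℚ) = P.eval (d : ℚ))
    (hg : ∀ d, (r + 1).multichoose d ≤ g d) : r ≤ P.natDegree := by
  by_contra hlt
  push Not at hlt
  have hx := poly_cmp (P := preHilbertPoly ℚ r 0) (F := P) (r := r) hlt.le
    (natDegree_preHilbertPoly ℚ r 0).ge (by
      filter_upwards [hP] with d h1
      rw [← h1, preHilbertPoly_eq_choose_sub_add ℚ r (Nat.zero_le d)]
      have := hg d
      rw [Nat.multichoose_eq, show r + 1 + d - 1 = d + r by omega,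
        Nat.choose_symm_add] at this
      simpa using (by exact_mod_cast this : ((d + r).choose r : ℚ) ≤ g d)) (by
      filter_upwards with d
      rw [preHilbertPoly_eq_choose_sub_add ℚ r (Nat.zero_le d)]
      positivity)
  rw [leadingCoeff_preHilbertPoly, Polynomial.coeff_eq_zero_of_natDegree_lt hlt] at hx
  have : (0 : ℚ) < (r.factorial : ℚ)⁻¹ := by positivity
  linarith [hx.1]

end bound

end MQ

namespace MQ

open MvPolynomial Module

section heights

lemma le_height_iff {R : Type*} [CommRing R] {J : Ideal R} {h : ℕ∞} :
    h ≤ J.height ↔ ∀ P : Ideal R, P.IsPrime → J ≤ P → h ≤ P.height := by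
  constructor
  · intro hh P _ hP
    exact hh.trans (Ideal.height_mono hP)
  · intro hh
    rw [Ideal.height_eq_inf_minimalPrimes]
    refine le_iInf₂ fun P hP => hh P hP.isPrime hP.1.2

lemma heightENat_eq {R : Type u} [CommRing R] (J : Ideal R) : J.heightENat = J.height := by
  apply le_antisymm
  · rw [le_height_iff]
    intro P hP hJ
    unfold Ideal.heightENat
    rw [show P.height = Order.height (⟨P, hP⟩ : PrimeSpectrum R) from
      PrimeSpectrum.height_eq_orderHeight ⟨P, hP⟩]
    exact iInf₂_le (⟨P, hP⟩ : PrimeSpectrum R) hJ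
  · unfold Ideal.heightENat
    refine le_iInf₂ fun p hp => ?_
    rw [← PrimeSpectrum.height_eq_orderHeight]
    exact Ideal.height_mono hp

lemma height_map_C_ge {R : Type*} [CommRing R] [IsNoetherianRing R] (p : Ideal R) [p.IsPrime] :
    p.height ≤ (p.map (Polynomial.C)).height := by
  have : (p.map (Polynomial.C)).IsPrime := Ideal.isPrime_map_C_of_isPrime
  have : (p.map (Polynomial.C)).LiesOver p := ⟨by
    ext x
    simp only [Ideal.under_def, Ideal.mem_comap, Ideal.mem_map_C_iff, Polynomial.algebraMap_eq,
      Polynomial.coeff_C]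
    constructor
    · intro hx n
      split_ifs
      · exact hx
      · exact p.zero_mem
    · intro hx; simpa using hx 0⟩
  rw [Ideal.height_eq_height_add_of_liesOver_of_hasGoingDown p (p.map (Polynomial.C))]
  exact le_self_add

variable {K : Type u} [Field K]

lemma indep (n : ℕ) : ∀ (P : Ideal (MvPolynomial (Fin n) K)), P.IsPrime →
    ∃ s : Finset (Fin n), (n : ℕ∞) ≤ s.card + P.height ∧
      ∀ f ∈ P, (∀ m ∈ f.support, m.support ⊆ s) → f = 0 := by
  induction n with
  | zero =>
    intro P hP
    refine ⟨∅, by simp, fun f hf _ => ?_⟩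
    by_contra hne
    have : f = C (f.coeff 0) := by
      ext m
      rw [Subsingleton.elim m 0]; simp
    apply hP.ne_top
    apply Ideal.eq_top_of_isUnit_mem _ hf
    rw [this]
    apply IsUnit.map
    rw [isUnit_iff_ne_zero]
    intro h0
    apply hne
    rw [this, h0, C_0]
  | succ n ih =>
    intro P hP
    set e := (finSuccEquiv K n).symm.toRingEquiv with he
    set P' : Ideal (Polynomial (MvPolynomial (Fin n) K)) := P.comap e with hP'
    have hht : P'.height = P.height := RingEquiv.height_comap e P
    have hP'p : P'.IsPrime := Ideal.comap_isPrime e P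
    set p0 := P'.comap Polynomial.C with hp0
    have hp0p : p0.IsPrime := Ideal.comap_isPrime _ _
    obtain ⟨s0, hs0, hf0⟩ := ih p0 hp0p
    have hle : p0.map Polynomial.C ≤ P' := Ideal.map_comap_le
    have hmem : ∀ f, f ∈ P → finSuccEquiv K n f ∈ P' := by
      intro f hf
      rw [hP', Ideal.mem_comap]
      simpa [he] using hf
    have hzero : ∀ f, (∀ i, (finSuccEquiv K n f).coeff i = 0) → f = 0 := by
      intro f hf
      have : finSuccEquiv K n f = 0 := Polynomial.ext (by simpa using hf)
      simpa using this
    by_cases hc : p0.map Polynomial.C = P'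
    · refine ⟨insert 0 (s0.map (Fin.succEmb n)), ?_, fun f hf hs => ?_⟩
      · rw [Finset.card_insert_of_notMem (by simp [Fin.succ_ne_zero]), Finset.card_map]
        have h1 := height_map_C_ge p0
        rw [hc, hht] at h1
        push_cast
        calc ((n : ℕ∞) + 1) ≤ (s0.card + p0.height) + 1 := by gcongr
          _ ≤ (s0.card + P.height) + 1 := by gcongr
          _ = _ := by ring
      · apply hzero
        intro i
        apply hf0
        · have := hmem f hf
          rw [← hc, Ideal.mem_map_C_iff] at this
          exact this i
        · intro m hm j hj
          rw [mem_support_coeff_finSuccEquiv] at hm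
          have := hs _ hm (show j.succ ∈ _ by simpa using hj)
          simpa [Fin.succ_ne_zero] using this
    · have hlt : p0.map Polynomial.C < P' := lt_of_le_of_ne hle hc
      have : (p0.map (Polynomial.C)).IsPrime := Ideal.isPrime_map_C_of_isPrime
      have h2 := Ideal.height_add_one_le_of_lt_of_isPrime hlt
      refine ⟨s0.map (Fin.succEmb n), ?_, fun f hf hs => ?_⟩
      · rw [Finset.card_map]
        have h1 := height_map_C_ge p0
        rw [hht] at h2
        push_cast
        calc ((n : ℕ∞) + 1) ≤ (s0.card + p0.height) + 1 := by gcongr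
          _ ≤ (s0.card + (p0.map (Polynomial.C)).height) + 1 := by gcongr
          _ = s0.card + ((p0.map (Polynomial.C)).height + 1) := by ring
          _ ≤ _ := by gcongr
      · have hi : ∀ i ≠ 0, (finSuccEquiv K n f).coeff i = 0 := by
          intro i hi
          rw [← MvPolynomial.support_eq_empty, Finset.eq_empty_iff_forall_notMem]
          intro m hm
          rw [mem_support_coeff_finSuccEquiv] at hm
          have := hs _ hm (show (0 : Fin (n + 1)) ∈ _ by simpa using hi)
          simp [Fin.succ_ne_zero] at this
        have h0 : (finSuccEquiv K n f).coeff 0 = 0 := by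
          apply hf0
          · rw [hp0, Ideal.mem_comap]
            have := hmem f hf
            convert this
            ext1 i
            rw [Polynomial.coeff_C]
            split_ifs with h
            · rw [h]
            · rw [hi i h]
          · intro m hm j hj
            rw [mem_support_coeff_finSuccEquiv] at hm
            have := hs _ hm (show j.succ ∈ _ by simpa using hj)
            simpa [Fin.succ_ne_zero] using this
        apply hzero
        intro i
        by_cases h : i = 0
        · rw [h, h0]
        · exact hi i h

/-- a prime containing all variables has height at least n -/
lemma height_vars {n : ℕ} {P : Ideal (MvPolynomial (Fin n) K)} (hP : P.IsPrime)
    (hX : ∀ i, X i ∈ P) : (n : ℕ∞) ≤ P.height := by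
  obtain ⟨s, hs, hf⟩ := indep n P hP
  have : s = ∅ := by
    rw [Finset.eq_empty_iff_forall_notMem]
    intro i hi
    have := hf (X i) (hX i) (by
      intro m hm
      rw [support_X] at hm
      simp at hm
      subst hm
      intro j hj
      simp at hj
      rwa [hj])
    exact X_ne_zero i this
  simpa [this] using hs

lemma hf_lower {n : ℕ} {J P : Ideal (MvPolynomial (Fin n) K)} (hP : P.IsPrime) (hJ : J ≤ P)
    {h r : ℕ} (hh : P.height = h) (hr : r + h ≤ n) (d : ℕ) :
    r.multichoose d ≤ hilbertFunction K J d := by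
  obtain ⟨s, hs, hf⟩ := indep n P hP
  rw [hh] at hs
  have hs' : n ≤ s.card + h := by exact_mod_cast hs
  have hrs : r ≤ s.card := by omega
  obtain ⟨t, hts, htc⟩ := Finset.exists_subset_card_eq hrs
  let ι : Fin r → Fin n := fun i => t.orderEmbOfFin htc i
  have hι : Function.Injective ι := (t.orderEmbOfFin htc).injective
  have hιs : ∀ i, ι i ∈ s := fun i => hts (Finset.orderEmbOfFin_mem t htc i)
  have h1 : hilbertFunction K (⊥ : Ideal (MvPolynomial (Fin r) K)) d ≤ hilbertFunction K J d := by
    apply hf_le_of _ _ _ _ (rename ι : MvPolynomial (Fin r) K →ₐ[K] _).toLinearMap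
    · intro p hp
      exact hp.rename_isHomogeneous
    · intro p _ hp
      have h0 : rename ι p = 0 := by
        apply hf _ (hJ hp)
        intro m hm
        have hm' : m ∈ (rename ι p).support := hm
        rw [support_rename_of_injective hι] at hm'
        obtain ⟨m', _, rfl⟩ := Finset.mem_image.1 hm'
        intro j hj
        have := Finsupp.mapDomain_support hj
        obtain ⟨i, _, rfl⟩ := Finset.mem_image.1 this
        exact hιs i
      rw [Ideal.mem_bot]
      exact rename_injective ι hι (by rw [h0, map_zero])
  have h2 := hf_add (⊥ : Ideal (MvPolynomial (Fin r) K)) d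
  rw [finrank_hom] at h2
  have h3 : part (⊥ : Ideal (MvPolynomial (Fin r) K)) d = ⊥ := by
    rw [eq_bot_iff]
    intro p hp
    simpa using (mem_part.1 hp).2
  rw [h3, finrank_bot] at h2
  omega

lemma avoid {S : Type*} [CommRing S] [Algebra K S] [IsNoetherianRing S] [Infinite K] {J : Ideal S} {h : ℕ}
    (hJ : (h : ℕ∞) ≤ J.height) (V : Submodule K S)
    (hV : ∀ P : Ideal S, P.IsPrime → J ≤ P → (∀ v ∈ V, v ∈ P) → ((h + 1 : ℕ) : ℕ∞) ≤ P.height) :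
    ∃ v ∈ V, ((h + 1 : ℕ) : ℕ∞) ≤ (J ⊔ Ideal.span {v}).height := by
  classical
  have hfin := Ideal.finite_minimalPrimes_of_isNoetherianRing S J
  let T : Finset (Submodule K V) :=
    (hfin.toFinset.image (fun P => (P.restrictScalars K).comap V.subtype)).filter (· ≠ ⊤)
  have hT : (⊤ : Submodule K V) ∉ T := by simp [T]
  have := Subspace.biUnion_ne_univ_of_top_notMem hT
  rw [Set.ne_univ_iff_exists_notMem] at this
  obtain ⟨v, hv⟩ := this
  refine ⟨v.1, v.2, ?_⟩
  rw [le_height_iff]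
  intro P' hP' hJP
  obtain ⟨hJP1, hvP⟩ := sup_le_iff.1 hJP
  have hvP : v.1 ∈ P' := (Ideal.span_singleton_le_iff_mem _).1 hvP
  obtain ⟨P, hP, hPP'⟩ := Ideal.exists_minimalPrimes_le hJP1
  have hPp : P.IsPrime := hP.isPrime
  by_cases hVP : ∀ v ∈ V, v ∈ P
  · exact (hV P hPp hP.1.2 hVP).trans (Ideal.height_mono hPP')
  · have hvn : v.1 ∉ P := by
      intro hvP
      apply hv
      rw [Set.mem_iUnion₂]
      refine ⟨(P.restrictScalars K).comap V.subtype, ?_, hvP⟩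
      simp only [T, Finset.mem_filter, Finset.mem_image, Set.Finite.mem_toFinset]
      refine ⟨⟨P, hP, rfl⟩, fun htop => hVP fun w hw => ?_⟩
      have : (⟨w, hw⟩ : V) ∈ (P.restrictScalars K).comap V.subtype := by rw [htop]; trivial
      exact this
    have hlt : P < P' := lt_of_le_of_ne hPP' (fun h => hvn (h ▸ hvP))
    have h1 := Ideal.height_add_one_le_of_lt_of_isPrime hlt
    have h2 := le_height_iff.1 hJ P hPp hP.1.2
    push_cast
    calc (h : ℕ∞) + 1 ≤ P.height + 1 := by gcongr
      _ ≤ _ := h1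

/-- choosing a general linear form -/
lemma avoid_linear [Infinite K] {n h : ℕ} {J : Ideal (MvPolynomial (Fin n) K)}
    (hJ : (h : ℕ∞) ≤ J.height) (hn : h + 1 ≤ n) :
    ∃ l : MvPolynomial (Fin n) K, l.IsHomogeneous 1 ∧ l ≠ 0 ∧
      ((h + 1 : ℕ) : ℕ∞) ≤ (J ⊔ Ideal.span {l}).height := by
  obtain ⟨v, hv, h1⟩ := avoid hJ (homogeneousSubmodule (Fin n) K 1) (by
    intro P hP _ hV
    refine le_trans ?_ (height_vars hP fun i => hV _ (isHomogeneous_X K i))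
    exact_mod_cast hn)
  by_cases hv0 : v = 0
  · refine ⟨X ⟨0, by omega⟩, isHomogeneous_X _ _, X_ne_zero _, h1.trans (Ideal.height_mono ?_)⟩
    rw [hv0]
    simp
  · exact ⟨v, hv, hv0, h1⟩

attribute [local instance] MvPolynomial.gradedAlgebra in
lemma core_exists {n : ℕ} {P : Ideal (MvPolynomial (Fin n) K)} (hP : P.IsPrime) :
    ∃ P0 : Ideal (MvPolynomial (Fin n) K), P0.IsPrime ∧ HomI P0 ∧ P0 ≤ P ∧
      ∀ J, HomI J → J ≤ P → J ≤ P0 := by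
  refine ⟨(P.homogeneousCore (homogeneousSubmodule (Fin n) K)).toIdeal, hP.homogeneousCore, ?_,
    Ideal.toIdeal_homogeneousCore_le _ _, ?_⟩
  · rw [homI_iff]
    exact (P.homogeneousCore (homogeneousSubmodule (Fin n) K)).isHomogeneous
  · intro J hJ hle
    rw [homI_iff] at hJ
    rw [← hJ.toIdeal_homogeneousCore_eq_self]
    exact Ideal.homogeneousCore_mono _ hle

lemma homI_coeff_zero {n : ℕ} {J : Ideal (MvPolynomial (Fin n) K)} (hJ : HomI J) (hne : J ≠ ⊤)
    {f : MvPolynomial (Fin n) K} (hf : f ∈ J) : constantCoeff f = 0 := by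
  by_contra h
  apply hne
  have := hJ f hf 0
  rw [homogeneousComponent_zero] at this
  apply Ideal.eq_top_of_isUnit_mem _ this
  exact IsUnit.map _ (isUnit_iff_ne_zero.2 h)

/-- In `n` variables, an ideal of height `n` contains all forms of large degree. -/
lemma hf_eventually_zero {n : ℕ} {J : Ideal (MvPolynomial (Fin n) K)}
    (hJ : (n : ℕ∞) ≤ J.height) (hh : HomI J) : ∃ m, ∀ d, m ≤ d → ∀ p : MvPolynomial (Fin n) K,
      p.IsHomogeneous d → p ∈ J := by
  have hrad : idealOfVars (Fin n) K ≤ J.radical := by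
    rw [Ideal.radical_eq_sInf]
    refine le_sInf ?_
    rintro P ⟨hJP, hP⟩
    obtain ⟨P0, hP0, hP0h, hle, hmax⟩ := core_exists hP
    refine le_trans ?_ hle
    have h1 := le_height_iff.1 hJ P0 hP0 (hmax J hh hJP)
    have hdim : ringKrullDim (MvPolynomial (Fin n) K) = n := by
      rw [MvPolynomial.ringKrullDim_of_isNoetherianRing, ringKrullDim_eq_zero_of_field]
      simp
    have hP0max : P0.IsMaximal := by
      have : FiniteRingKrullDim (MvPolynomial (Fin n) K) := by
        rw [finiteRingKrullDim_iff_ne_bot_and_top, hdim]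
        exact ⟨WithBot.coe_ne_bot (a := (n : ℕ∞)), fun h => ENat.natCast_ne_top n (WithBot.coe_injective h)⟩
      apply Ideal.isMaximal_of_height_eq_ringKrullDim
      apply le_antisymm
      · exact Ideal.height_le_ringKrullDim_of_isPrime
      · rw [hdim]
        exact_mod_cast h1
    have hker : P0 = RingHom.ker (constantCoeff (σ := Fin n) (R := K)) := by
      apply hP0max.eq_of_le
      · exact RingHom.ker_ne_top _
      · intro f hf
        exact homI_coeff_zero hP0h hP0.ne_top hf
    rw [hker]
    unfold idealOfVars
    rw [Ideal.span_le]
    rintro _ ⟨i, rfl⟩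
    simp
  obtain ⟨m, hm⟩ := Ideal.exists_pow_le_of_le_radical_of_fg hrad (idealOfVars_fg _ _)
  refine ⟨m, fun d hd p hp => hm ?_⟩
  rw [mem_pow_idealOfVars_iff']
  intro x hx
  by_contra hne
  have := hp hne
  rw [show (1 : Fin n → ℕ) = fun _ => 1 from rfl, ← Finsupp.degree_eq_weight_one] at this
  omega

lemma hf_zero_of {n : ℕ} {J : Ideal (MvPolynomial (Fin n) K)} {d : ℕ}
    (h : ∀ p : MvPolynomial (Fin n) K, p.IsHomogeneous d → p ∈ J) : hilbertFunction K J d = 0 := by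
  have h1 := hf_add J d
  have h2 : part J d = homogeneousSubmodule (Fin n) K d := by
    apply le_antisymm inf_le_left
    intro p hp
    exact mem_part.2 ⟨hp, h p hp⟩
  rw [h2] at h1
  omega

end heights

end MQ

namespace MQ

open MvPolynomial Module

section elimination

variable {K : Type u} [Field K]

lemma linear_eq {n : ℕ} {l : MvPolynomial (Fin n) K} (hl : l.IsHomogeneous 1) :
    ∃ a : Fin n → K, l = ∑ i, C (a i) * X i := by
  have : l ∈ homogeneousSubmodule (Fin n) K 1 := hl
  rw [homogeneousSubmodule_one_eq_span_X, Submodule.mem_span_range_iff_exists_fun] at this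
  obtain ⟨a, ha⟩ := this
  exact ⟨a, by rw [← ha]; simp [smul_eq_C_mul]⟩

/-- `φ` identifies the quotient by the linear form `l` with a polynomial ring. -/
structure Elim {n : ℕ} (l : MvPolynomial (Fin (n + 1)) K)
    (φ : MvPolynomial (Fin (n + 1)) K →ₐ[K] MvPolynomial (Fin n) K) : Prop where
  surj : Function.Surjective φ
  hom : ∀ p d, p.IsHomogeneous d → (φ p).IsHomogeneous d
  ker : ∀ p, φ p = 0 ↔ l ∣ p

lemma elim_exists {n : ℕ} {l : MvPolynomial (Fin (n + 1)) K} (hl : l.IsHomogeneous 1) (hl0 : l ≠ 0) :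
    ∃ φ, Elim l φ := by
  obtain ⟨a, ha⟩ := linear_eq hl
  obtain ⟨j, hj⟩ : ∃ j, a j ≠ 0 := by
    by_contra hcon
    push Not at hcon
    apply hl0
    rw [ha]
    simp [hcon]
  let y : MvPolynomial (Fin n) K := - (C (a j)⁻¹ * ∑ i, C (a (j.succAbove i)) * X i)
  let φ : MvPolynomial (Fin (n + 1)) K →ₐ[K] MvPolynomial (Fin n) K :=
    aeval (Fin.insertNth (α := fun _ => MvPolynomial (Fin n) K) j y (fun i => X i))
  let ψ : MvPolynomial (Fin n) K →ₐ[K] MvPolynomial (Fin (n + 1)) K := rename j.succAbove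
  have hφj : φ (X j) = y := by simp [φ]
  have hφi : ∀ i, φ (X (j.succAbove i)) = X i := by intro i; simp [φ]
  have hφψ : ∀ p, φ (ψ p) = p := by
    intro p
    have : φ.comp ψ = AlgHom.id K _ := by
      ext1 i
      simp [ψ, hφi]
    exact congrArg (fun f => f p) this
  have hφC : ∀ c, φ (C c) = C c := fun c => φ.commutes c
  have hψC : ∀ c, ψ (C c) = C c := fun c => ψ.commutes c
  have hcc : (C (a j) * C (a j)⁻¹ : MvPolynomial (Fin n) K) = 1 := by
    rw [← C_mul, mul_inv_cancel₀ hj, C_1]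
  have hcc' : (C (a j)⁻¹ * C (a j) : MvPolynomial (Fin (n + 1)) K) = 1 := by
    rw [← C_mul, inv_mul_cancel₀ hj, C_1]
  have hφl : φ l = 0 := by
    rw [ha, Fin.sum_univ_succAbove _ j]
    simp only [map_add, map_mul, map_sum, hφC, hφj, hφi, y]
    rw [mul_neg, ← mul_assoc, hcc]
    ring
  have hψφ : ∀ p, l ∣ ψ (φ p) - p := by
    intro p
    have : (Ideal.Quotient.mkₐ K (Ideal.span {l})).comp (ψ.comp φ) =
        Ideal.Quotient.mkₐ K (Ideal.span {l}) := by
      ext1 i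
      simp only [AlgHom.comp_apply, Ideal.Quotient.mkₐ_eq_mk]
      rw [Ideal.Quotient.eq, Ideal.mem_span_singleton]
      by_cases hij : i = j
      · subst hij
        rw [hφj]
        refine ⟨- C (a i)⁻¹, ?_⟩
        simp only [y, map_neg, map_mul, map_sum, hψC]
        rw [ha, Fin.sum_univ_succAbove _ i]
        simp only [ψ, rename_X]
        linear_combination (X i) * hcc'
      · obtain ⟨i', rfl⟩ := Fin.exists_succAbove_eq hij
        rw [hφi]
        simp [ψ]
    have h2 := congrArg (fun f => f p) this
    simp only [AlgHom.comp_apply, Ideal.Quotient.mkₐ_eq_mk] at h2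
    rwa [Ideal.Quotient.eq, Ideal.mem_span_singleton] at h2
  refine ⟨φ, fun p => ⟨ψ p, hφψ p⟩, ?_, ?_⟩
  · intro p d hp
    have := hp.aeval (Fin.insertNth (α := fun _ => MvPolynomial (Fin n) K) j y (fun i => X i)) (n := 1) (by
      intro i
      by_cases hij : i = j
      · subst hij
        simp only [Fin.insertNth_apply_same, y]
        apply IsHomogeneous.neg
        apply IsHomogeneous.C_mul
        apply IsHomogeneous.sum
        intro i _
        exact isHomogeneous_C_mul_X _ _
      · obtain ⟨i', rfl⟩ := Fin.exists_succAbove_eq hij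
        simp only [Fin.insertNth_apply_succAbove]
        exact isHomogeneous_X _ _)
    rwa [one_mul] at this
  · intro p
    constructor
    · intro hp
      have := hψφ p
      rw [hp, map_zero, zero_sub] at this
      exact (dvd_neg).1 this
    · rintro ⟨q, rfl⟩
      rw [map_mul, hφl, zero_mul]

variable {n : ℕ} {l : MvPolynomial (Fin (n + 1)) K}
    {φ : MvPolynomial (Fin (n + 1)) K →ₐ[K] MvPolynomial (Fin n) K}

lemma Elim.mem_map (e : Elim l φ) {J : Ideal (MvPolynomial (Fin (n + 1)) K)} {p} :
    φ p ∈ J.map φ ↔ p ∈ J ⊔ Ideal.span {l} := by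
  constructor
  · intro hp
    obtain ⟨q, hq, hqp⟩ := (Ideal.mem_map_iff_of_surjective φ e.surj).1 hp
    have : l ∣ p - q := (e.ker _).1 (by rw [map_sub, hqp, sub_self])
    have h2 := Submodule.add_mem_sup hq (Ideal.mem_span_singleton.2 this)
    simpa using h2
  · intro hp
    obtain ⟨a, ha, b, hb, rfl⟩ := Submodule.mem_sup.1 hp
    rw [map_add, (e.ker b).2 (Ideal.mem_span_singleton.1 hb), add_zero]
    exact Ideal.mem_map_of_mem _ ha

lemma Elim.hf (e : Elim l φ) (J : Ideal (MvPolynomial (Fin (n + 1)) K)) (d : ℕ) :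
    hilbertFunction K (J ⊔ Ideal.span {l}) d ≤ hilbertFunction K (J.map φ) d := by
  apply hf_le_of _ _ _ _ φ.toLinearMap
  · intro p hp; exact e.hom p d hp
  · intro p _ hp; exact e.mem_map.1 hp

lemma Elim.ht (e : Elim l φ) {J : Ideal (MvPolynomial (Fin (n + 1)) K)} {h : ℕ}
    (hh : ((h + 1 : ℕ) : ℕ∞) ≤ (J ⊔ Ideal.span {l}).height) : (h : ℕ∞) ≤ (J.map φ).height := by
  rw [le_height_iff]
  intro P hP hJP
  let P' := P.comap φ
  have hP' : P'.IsPrime := Ideal.comap_isPrime φ P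
  have hl : l ∈ P' := by
    change φ l ∈ P
    rw [(e.ker l).2 dvd_rfl]
    exact P.zero_mem
  have h1 : ((h + 1 : ℕ) : ℕ∞) ≤ P'.height := le_height_iff.1 hh P' hP' (by
    rw [sup_le_iff, Ideal.span_singleton_le_iff_mem]
    exact ⟨Ideal.map_le_iff_le_comap.1 hJP, hl⟩)
  have h2 := Ideal.height_le_height_add_one_of_mem hl
  have hker : RingHom.ker (φ : MvPolynomial (Fin (n + 1)) K →+* MvPolynomial (Fin n) K) = Ideal.span {l} := by
    ext p
    rw [Ideal.mem_span_singleton]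
    exact e.ker p
  let ε := (Ideal.quotEquivOfEq hker.symm).trans (RingHom.quotientKerEquivOfSurjective
    (f := (φ : MvPolynomial (Fin (n + 1)) K →+* MvPolynomial (Fin n) K)) e.surj)
  have hε : ∀ p, ε (Ideal.Quotient.mk _ p) = φ p := by
    intro p
    rfl
  have h3 : (P'.map (Ideal.Quotient.mk (Ideal.span {l}))) = P.comap ε := by
    ext x
    obtain ⟨p, rfl⟩ := Ideal.Quotient.mk_surjective x
    rw [Ideal.mem_comap]
    change _ ↔ ε _ ∈ P
    rw [hε]
    constructor
    · intro hx
      obtain ⟨q, hq, hqp⟩ := (Ideal.mem_map_iff_of_surjective _ Ideal.Quotient.mk_surjective).1 hx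
      have := congrArg ε hqp
      rw [hε, hε] at this
      rw [← this]
      exact hq
    · intro hx
      exact Ideal.mem_map_of_mem _ hx
  have h4 : (P.comap ε).height = P.height := RingEquiv.height_comap ε P
  rw [h3, h4] at h2
  have h5 := h1.trans h2
  push_cast at h5
  exact (ENat.add_le_add_iff_right ENat.one_ne_top).1 h5

lemma Elim.bd (e : Elim l φ) {J : Ideal (MvPolynomial (Fin (n + 1)) K)} (hJ : HomI J)
    (hl : l.IsHomogeneous 1) {r : ℕ} {c : ℚ} (h : Bd (hilbertFunction K (J.map φ)) r c) :
    Bd (hilbertFunction K J) (r + 1) c := by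
  apply h.sum
  · exact (hf_step0 hJ hl 0 one_pos).trans (e.hf J 0)
  · intro d
    exact (hf_step (J' := J) hJ hl (fun p hp => J.mul_mem_left _ hp) d).trans
      (Nat.add_le_add_right (e.hf J (d + 1)) _)

lemma Elim.homI (e : Elim l φ) {s : Set (MvPolynomial (Fin (n + 1)) K)}
    (hs : ∀ p ∈ s, ∃ d, p.IsHomogeneous d) : HomI ((Ideal.span s).map φ) := by
  rw [Ideal.map_span]
  apply homI_span
  rintro _ ⟨p, hp, rfl⟩
  obtain ⟨d, hd⟩ := hs p hp
  exact ⟨d, e.hom p d hd⟩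

end elimination

end MQ

namespace MQ

open MvPolynomial Module

section koszul

variable {S : Type*} [CommRing S] [IsDomain S]

/-- A regular sequence of length three (in a domain). -/
structure Reg3 (x y z : S) : Prop where
  ne : x ≠ 0
  dvd : ∀ t, x ∣ y * t → x ∣ t
  nzd : ∀ t, z * t ∈ Ideal.span {x, y} → t ∈ Ideal.span {x, y}

lemma Reg3.koszul {x y z : S} (h : Reg3 x y z) {A B D : S} (hs : x * A + y * B + z * D = 0) :
    ∃ p q r, A = - (z * p) - y * r ∧ B = - (z * q) + x * r ∧ D = x * p + y * q := by
  have h1 : D ∈ Ideal.span {x, y} := h.nzd D (by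
    rw [Ideal.mem_span_pair]
    exact ⟨-A, -B, by linear_combination -hs⟩)
  obtain ⟨p, q, hD⟩ := Ideal.mem_span_pair.1 h1
  obtain ⟨r, hr⟩ := h.dvd (B + z * q) ⟨-(A + z * p), by
    linear_combination hs + z * hD⟩
  refine ⟨p, q, r, ?_, by linear_combination hr, by linear_combination -hD⟩
  apply mul_left_cancel₀ h.ne
  linear_combination hs - y * hr + z * hD

lemma Reg3.koszul1 {x y z : S} (h : Reg3 x y z) {a0 a1 a2 : S} (h1 : y * a0 = x * a1)
    (h2 : z * a0 = x * a2) : ∃ α, a0 = x * α ∧ a1 = y * α ∧ a2 = z * α := by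
  obtain ⟨α, hα⟩ := h.dvd a0 ⟨a1, h1⟩
  refine ⟨α, hα, ?_, ?_⟩
  · apply mul_left_cancel₀ h.ne
    rw [← h1, hα]; ring
  · apply mul_left_cancel₀ h.ne
    rw [← h2, hα]; ring

/-- depth of a complete intersection of codimension two with respect to three elements -/
lemma Reg3.depth {x y z f g u : S} (h : Reg3 x y z) (hf : f ≠ 0) (hg : ∀ t, f ∣ g * t → f ∣ t)
    (hx : x * u ∈ Ideal.span {f, g}) (hy : y * u ∈ Ideal.span {f, g})
    (hz : z * u ∈ Ideal.span {f, g}) : u ∈ Ideal.span {f, g} := by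
  obtain ⟨a0, b0, h0⟩ := Ideal.mem_span_pair.1 hx
  obtain ⟨a1, b1, h1⟩ := Ideal.mem_span_pair.1 hy
  obtain ⟨a2, b2, h2⟩ := Ideal.mem_span_pair.1 hz
  obtain ⟨c01, hc01⟩ := hg (y * b0 - x * b1) ⟨-(y * a0 - x * a1), by
    linear_combination y * h0 - x * h1⟩
  obtain ⟨c12, hc12⟩ := hg (z * b1 - y * b2) ⟨-(z * a1 - y * a2), by
    linear_combination z * h1 - y * h2⟩
  obtain ⟨c20, hc20⟩ := hg (x * b2 - z * b0) ⟨-(x * a2 - z * a0), by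
    linear_combination x * h2 - z * h0⟩
  have hcyc : x * c12 + y * c20 + z * c01 = 0 := by
    apply mul_left_cancel₀ hf
    linear_combination -x * hc12 - y * hc20 - z * hc01
  obtain ⟨p, q, r, e1, e2, e3⟩ := h.koszul hcyc
  have e01 : - g * c01 = y * a0 - x * a1 := by
    apply mul_left_cancel₀ hf
    linear_combination g * hc01 - y * h0 + x * h1
  have e20 : - g * c20 = x * a2 - z * a0 := by
    apply mul_left_cancel₀ hf
    linear_combination g * hc20 - x * h2 + z * h0
  -- corrected coefficients
  obtain ⟨α, hα0, -, -⟩ := h.koszul1 (a0 := a0 + g * q) (a1 := a1 - g * p) (a2 := a2 + g * r)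
    (by linear_combination -e01 - g * e3) (by linear_combination e20 + g * e2)
  obtain ⟨β, hβ0, -, -⟩ := h.koszul1 (a0 := b0 - f * q) (a1 := b1 + f * p) (a2 := b2 - f * r)
    (by linear_combination hc01 + f * e3) (by linear_combination -hc20 - f * e2)
  rw [Ideal.mem_span_pair]
  refine ⟨α, β, ?_⟩
  apply mul_left_cancel₀ h.ne
  linear_combination h0 - f * hα0 - g * hβ0

end koszul

section vars

variable {K : Type u} [Field K]

lemma reg3_X : Reg3 (X 0 : MvPolynomial (Fin 3) K) (X 1) (X 2) where
  ne := X_ne_zero _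
  dvd := by
    intro t ht
    rcases (X_prime (R := K) (i := (0 : Fin 3))).dvd_or_dvd ht with h | h
    · rw [X_dvd_X] at h
      simp at h
    · exact h
  nzd := by
    intro t ht
    have himg : ({X 0, X 1} : Set (MvPolynomial (Fin 3) K)) = X '' {0, 1} := by
      rw [Set.image_pair]
    rw [himg, mem_ideal_span_X_image] at ht ⊢
    intro m hm
    have h1 : Finsupp.single 2 1 + m ∈ (X 2 * t).support := by
      rw [MvPolynomial.mem_support_iff] at hm ⊢
      rwa [coeff_X_mul]
    obtain ⟨i, hi, him⟩ := ht _ h1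
    refine ⟨i, hi, ?_⟩
    rcases hi with rfl | hi
    · simpa using him
    · rw [Set.mem_singleton_iff] at hi
      subst hi
      simpa using him

end vars

section base

variable {K : Type u} [Field K] {n : ℕ}

lemma deg_dvd {g a : MvPolynomial (Fin n) K} {d e : ℕ} (hg : g.IsHomogeneous e) (ha : a.IsHomogeneous d)
    (hde : d < e) (h : g ∣ a) : a = 0 := by
  by_contra ha0
  have hg0 : g ≠ 0 := by
    rintro rfl
    exact ha0 (zero_dvd_iff.1 h)
  have := totalDegree_le_of_dvd_of_isDomain h ha0
  rw [hg.totalDegree hg0, ha.totalDegree ha0] at this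
  omega

lemma deg_mem {f g a : MvPolynomial (Fin n) K} {d : ℕ} (hf : f.IsHomogeneous 2)
    (hg : g.IsHomogeneous 2) (ha : a.IsHomogeneous d)
    (hd : d < 2) (h : a ∈ Ideal.span {f, g}) : a = 0 := by
  obtain ⟨p, q, hpq⟩ := Ideal.mem_span_pair.1 h
  rw [← homogeneousComponent_eq_self ha, ← hpq, map_add, mul_comm p, mul_comm q,
    comp_mul_zero hf d hd, comp_mul_zero hg d hd, add_zero]

lemma relPrime_of_height {f g : MvPolynomial (Fin n) K} (h : ((2 : ℕ) : ℕ∞) ≤ (Ideal.span {f, g}).height) :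
    IsRelPrime f g := by
  intro d hf hg
  by_contra hu
  have h1 : Ideal.span {f, g} ≤ Ideal.span {d} := by
    rw [Ideal.span_le]
    rintro _ (rfl | rfl)
    · exact Ideal.mem_span_singleton.2 hf
    · exact Ideal.mem_span_singleton.2 hg
  have h2 := (h.trans (Ideal.height_mono h1)).trans (Ideal.height_span_singleton_le_one hu)
  exact absurd h2 (by decide)

lemma height_pair_le {f g : MvPolynomial (Fin n) K} (hf : constantCoeff f = 0)
    (hg : constantCoeff g = 0) : (Ideal.span {f, g}).height ≤ 2 := by
  have hne : Ideal.span {f, g} ≠ ⊤ := by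
    intro htop
    have : Ideal.span {f, g} ≤ RingHom.ker (constantCoeff (σ := Fin n) (R := K)) := by
      rw [Ideal.span_le]
      rintro _ (rfl | rfl)
      · exact hf
      · exact hg
    rw [htop, top_le_iff] at this
    exact RingHom.ker_ne_top _ this
  obtain ⟨P, hP⟩ := Ideal.nonempty_minimalPrimes hne
  have hp := hP.isPrime
  have h1 := Ideal.height_le_card_of_mem_minimalPrimes_span (Set.toFinite _) hP
  refine (Ideal.height_mono hP.1.2).trans (h1.trans ?_)
  have h2 := Set.ncard_insert_le f {g}
  rw [Set.ncard_singleton] at h2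
  exact_mod_cast h2

lemma const_zero {f : MvPolynomial (Fin n) K} {d : ℕ} (hf : f.IsHomogeneous d) (hd : d ≠ 0) :
    constantCoeff f = 0 := by
  apply hf.coeff_eq_zero
  simpa using hd.symm

lemma relPrime_of_height3 {f g k : MvPolynomial (Fin n) K} (hf : f.IsHomogeneous 2)
    (hg : g.IsHomogeneous 2) (hk : k.IsHomogeneous 2)
    (h : ((3 : ℕ) : ℕ∞) ≤ (Ideal.span {f, g, k}).height) : f ≠ 0 ∧ IsRelPrime f g := by
  have hbad : ∀ a, constantCoeff a = 0 → a ∣ f → a ∣ g → False := by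
    intro a ha haf hag
    have h1 : Ideal.span {f, g, k} ≤ Ideal.span {a, k} := by
      rw [Ideal.span_le]
      rintro _ (rfl | rfl | rfl)
      · exact Ideal.mem_of_dvd _ haf (Ideal.subset_span (by simp))
      · exact Ideal.mem_of_dvd _ hag (Ideal.subset_span (by simp))
      · exact Ideal.subset_span (by simp)
    have h2 := (h.trans (Ideal.height_mono h1)).trans (height_pair_le ha (const_zero hk two_ne_zero))
    exact absurd h2 (by decide)
  have hf0 : f ≠ 0 := by
    rintro rfl
    exact hbad g (const_zero hg two_ne_zero) (dvd_zero _) dvd_rfl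
  refine ⟨hf0, ?_⟩
  apply WfDvdMonoid.isRelPrime_of_no_irreducible_factors
  · rintro ⟨h, -⟩; exact hf0 h
  · intro a ha haf hag
    have hap : Prime a := ha.prime
    have hP : (Ideal.span {a}).IsPrime := (Ideal.span_singleton_prime hap.ne_zero).2 hap
    obtain ⟨P0, hP0, hP0h, hle, hmax⟩ := core_exists hP
    have hfP : f ∈ P0 := by
      have : Ideal.span {f} ≤ P0 := hmax _ (homI_span (by rintro _ rfl; exact ⟨2, hf⟩)) (by
        rw [Ideal.span_singleton_le_iff_mem, Ideal.mem_span_singleton]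
        exact haf)
      exact this (Ideal.mem_span_singleton_self f)
    have heq : P0 = Ideal.span {a} := by
      by_contra hne
      have hlt := lt_of_le_of_ne hle hne
      have h1 := (Ideal.height_add_one_le_of_lt_of_isPrime hlt).trans
        (Ideal.height_span_singleton_le_one ha.not_isUnit)
      have h2 : P0.height = 0 := by
        rw [← nonpos_iff_eq_zero]
        exact (ENat.add_le_add_iff_right ENat.one_ne_top).1 (h1.trans (by simp))
      rw [Ideal.height_eq_zero_iff_eq_bot] at h2
      rw [h2, Ideal.mem_bot] at hfP
      exact hf0 hfP
    refine hbad a ?_ haf hag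
    apply homI_coeff_zero hP0h hP0.ne_top
    rw [heq]
    exact Ideal.mem_span_singleton_self a

lemma reg3_of_height {f g k : MvPolynomial (Fin 3) K} (hf : f.IsHomogeneous 2)
    (hg : g.IsHomogeneous 2) (hk : k.IsHomogeneous 2)
    (h : ((3 : ℕ) : ℕ∞) ≤ (Ideal.span {f, g, k}).height) : Reg3 f g k := by
  obtain ⟨hf0, hrel⟩ := relPrime_of_height3 hf hg hk h
  have hdvd : ∀ t, f ∣ g * t → f ∣ t := fun t ht => hrel.dvd_of_dvd_mul_left ht
  refine ⟨hf0, hdvd, fun t ht => ?_⟩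
  obtain ⟨m, hm⟩ := hf_eventually_zero h (homI_span (by
    rintro _ (rfl | rfl | rfl)
    exacts [⟨2, hf⟩, ⟨2, hg⟩, ⟨2, hk⟩]))
  have key : ∀ j ≤ m, ∀ p : MvPolynomial (Fin 3) K, p.IsHomogeneous (m - j) →
      p * t ∈ Ideal.span {f, g} := by
    intro j
    induction j with
    | zero =>
      intro _ p hp
      have h1 := hm m le_rfl p hp
      rw [Ideal.mem_span_insert] at h1
      obtain ⟨a, w, hw, rfl⟩ := h1
      obtain ⟨b, c, rfl⟩ := Ideal.mem_span_pair.1 hw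
      have e : (a * f + (b * g + c * k)) * t = (a * t) * f + (b * t) * g + c * (k * t) := by ring
      rw [e]
      refine Ideal.add_mem _ (Ideal.add_mem _ (Ideal.mul_mem_left _ _ (Ideal.subset_span (by simp)))
        (Ideal.mul_mem_left _ _ (Ideal.subset_span (by simp)))) (Ideal.mul_mem_left _ _ ht)
    | succ j ih =>
      intro hj p hp
      have hx : ∀ i, X i * (p * t) ∈ Ideal.span {f, g} := by
        intro i
        rw [← mul_assoc]
        apply ih (by omega)
        have := (isHomogeneous_X K i).mul hp
        rwa [show 1 + (m - (j + 1)) = m - j by omega] at this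
      exact reg3_X.depth hf0 hdvd (hx 0) (hx 1) (hx 2)
  simpa using key m le_rfl 1 (by simpa using isHomogeneous_one (Fin 3) K)

lemma Reg3.no_syz {f g k a b c : MvPolynomial (Fin n) K} (h : Reg3 f g k) (hf : f.IsHomogeneous 2)
    (hg : g.IsHomogeneous 2) {d : ℕ} (hd : d < 2)
    (hb : b.IsHomogeneous d) (hc : c.IsHomogeneous d)
    (hs : f * a + g * b + k * c = 0) : a = 0 ∧ b = 0 ∧ c = 0 := by
  have hc0 : c = 0 := deg_mem hf hg hc hd (h.nzd c (by
    rw [Ideal.mem_span_pair]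
    exact ⟨-a, -b, by linear_combination -hs⟩))
  subst hc0
  have hb0 : b = 0 := deg_dvd hf hb hd (h.dvd b ⟨-a, by linear_combination hs⟩)
  subst hb0
  refine ⟨?_, rfl, rfl⟩
  have : f * a = 0 := by linear_combination hs
  exact (mul_eq_zero.1 this).resolve_left h.ne

lemma comp_quad {f a : MvPolynomial (Fin n) K} (hf : f.IsHomogeneous 2) (d : ℕ) :
    homogeneousComponent (d + 2) (f * a) = f * homogeneousComponent d a := comp_mul hf d a

lemma Reg3.syz2 {f g k A B D : MvPolynomial (Fin n) K} (h : Reg3 f g k) (hf : f.IsHomogeneous 2)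
    (hg : g.IsHomogeneous 2) (hk : k.IsHomogeneous 2)
    (hA : A.IsHomogeneous 2) (hB : B.IsHomogeneous 2) (hD : D.IsHomogeneous 2)
    (hs : f * A + g * B + k * D = 0) : ∃ p q r : K,
      A = - (k * C p) - g * C r ∧ B = - (k * C q) + f * C r ∧ D = f * C p + g * C q := by
  obtain ⟨p, q, r, e1, e2, e3⟩ := h.koszul hs
  refine ⟨coeff 0 p, coeff 0 q, coeff 0 r, ?_, ?_, ?_⟩
  · have := homogeneousComponent_eq_self hA
    rw [e1, map_sub, map_neg, comp_quad hk 0, comp_quad hg 0, homogeneousComponent_zero,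
      homogeneousComponent_zero, ← e1] at this
    exact this.symm
  · have := homogeneousComponent_eq_self hB
    rw [e2, map_add, map_neg, comp_quad hk 0, comp_quad hf 0, homogeneousComponent_zero,
      homogeneousComponent_zero, ← e2] at this
    exact this.symm
  · have := homogeneousComponent_eq_self hD
    rw [e3, map_add, comp_quad hf 0, comp_quad hg 0, homogeneousComponent_zero,
      homogeneousComponent_zero, ← e3] at this
    exact this.symm

/-- explicit form of membership -/
lemma mem_three {S : Type*} [CommRing S] {f g k w : S} (h : w ∈ Ideal.span {f, g, k}) :
    ∃ a b c, w = f * a + g * b + k * c := by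
  rw [Ideal.mem_span_insert] at h
  obtain ⟨a, w, hw, rfl⟩ := h
  obtain ⟨b, c, rfl⟩ := Ideal.mem_span_pair.1 hw
  exact ⟨a, b, c, by ring⟩

lemma mem_three_hom {f g k w : MvPolynomial (Fin n) K} (hf : f.IsHomogeneous 2)
    (hg : g.IsHomogeneous 2) (hk : k.IsHomogeneous 2) {d : ℕ} (hw : w.IsHomogeneous (d + 2))
    (h : w ∈ Ideal.span {f, g, k}) :
    ∃ a b c, a.IsHomogeneous d ∧ b.IsHomogeneous d ∧ c.IsHomogeneous d ∧
      w = f * a + g * b + k * c := by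
  obtain ⟨a, b, c, e⟩ := mem_three h
  refine ⟨homogeneousComponent d a, homogeneousComponent d b, homogeneousComponent d c,
    homogeneousComponent_isHomogeneous _ _, homogeneousComponent_isHomogeneous _ _,
    homogeneousComponent_isHomogeneous _ _, ?_⟩
  have := homogeneousComponent_eq_self hw
  rw [e, map_add, map_add, comp_quad hf, comp_quad hg, comp_quad hk, ← e] at this
  exact this.symm

lemma lin_indep3 {a b c : K} (h : X 0 * C a + X 1 * C b + X 2 * C c = (0 : MvPolynomial (Fin 3) K)) :
    a = 0 ∧ b = 0 ∧ c = 0 := by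
  have h0 := congrArg (eval (Pi.single 0 1)) h
  have h1 := congrArg (eval (Pi.single 1 1)) h
  have h2 := congrArg (eval (Pi.single 2 1)) h
  simp at h0 h1 h2
  exact ⟨h0, h1, h2⟩

/-- The socle of the complete intersection of three quadrics has no element in degree two. -/
lemma socle {f g k q : MvPolynomial (Fin 3) K} (h : Reg3 f g k) (hf : f.IsHomogeneous 2)
    (hg : g.IsHomogeneous 2) (hk : k.IsHomogeneous 2) (hq : q.IsHomogeneous 2)
    (hs : ∀ i, X i * q ∈ Ideal.span {f, g, k}) : q ∈ Ideal.span {f, g, k} := by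
  have hX : ∀ i : Fin 3, (X i : MvPolynomial (Fin 3) K).IsHomogeneous 1 := fun i => isHomogeneous_X K i
  have hc : ∀ i, ∃ a b c, a.IsHomogeneous 1 ∧ b.IsHomogeneous 1 ∧ c.IsHomogeneous 1 ∧
      X i * q = f * a + g * b + k * c := fun i => mem_three_hom hf hg hk ((hX i).mul hq) (hs i)
  choose a b c ha hb hcc he using hc
  have hp : ∀ i j, ∃ p q r : K,
      X j * a i - X i * a j = - (k * C p) - g * C r ∧
      X j * b i - X i * b j = - (k * C q) + f * C r ∧
      X j * c i - X i * c j = f * C p + g * C q := by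
    intro i j
    apply h.syz2 hf hg hk (((hX j).mul (ha i)).sub ((hX i).mul (ha j)))
      (((hX j).mul (hb i)).sub ((hX i).mul (hb j))) (((hX j).mul (hcc i)).sub ((hX i).mul (hcc j)))
    linear_combination X i * he j - X j * he i
  obtain ⟨p2, q2, r2, A2, B2, C2⟩ := hp 0 1
  obtain ⟨p0, q0, r0, A0, B0, C0⟩ := hp 1 2
  obtain ⟨p1, q1, r1, A1, B1, C1⟩ := hp 2 0
  -- the cocycle condition
  have hlin : ∀ u v w : K, (X 0 * C u + X 1 * C v + X 2 * C w : MvPolynomial (Fin 3) K).IsHomogeneous 1 := by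
    intro u v w
    have : ∀ (i : Fin 3) (u : K), (X i * C u : MvPolynomial (Fin 3) K).IsHomogeneous 1 := by
      intro i u
      rw [mul_comm]; exact isHomogeneous_C_mul_X u i
    exact ((this 0 u).add (this 1 v)).add (this 2 w)
  have hrel : ∀ t, f ∣ g * t → f ∣ t := h.dvd
  have hPQ : f * (X 0 * C p0 + X 1 * C p1 + X 2 * C p2) + g * (X 0 * C q0 + X 1 * C q1 + X 2 * C q2)
      + k * 0 = 0 := by
    linear_combination -(X 0 * C0 + X 1 * C1 + X 2 * C2)
  obtain ⟨hP, hQ, -⟩ := h.no_syz hf hg one_lt_two (hlin _ _ _) (isHomogeneous_zero _ _ _) hPQ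
  have hR : f * (X 0 * C r0 + X 1 * C r1 + X 2 * C r2) = 0 := by
    linear_combination -(X 0 * B0 + X 1 * B1 + X 2 * B2) + k * hQ
  have hR' := (mul_eq_zero.1 hR).resolve_left h.ne
  obtain ⟨hp0, hp1, hp2⟩ := lin_indep3 hP
  obtain ⟨hq0, hq1, hq2⟩ := lin_indep3 hQ
  obtain ⟨hr0, hr1, hr2⟩ := lin_indep3 hR'
  subst hp0 hp1 hp2 hq0 hq1 hq2 hr0 hr1 hr2
  simp only [C_0, mul_zero, neg_zero, sub_zero, add_zero] at A0 A1 A2 B0 B1 B2 C0 C1 C2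
  obtain ⟨α, hα, -, -⟩ := reg3_X.koszul1 (a0 := a 0) (a1 := a 1) (a2 := a 2)
    (by linear_combination A2) (by linear_combination -A1)
  obtain ⟨β, hβ, -, -⟩ := reg3_X.koszul1 (a0 := b 0) (a1 := b 1) (a2 := b 2)
    (by linear_combination B2) (by linear_combination -B1)
  obtain ⟨γ, hγ, -, -⟩ := reg3_X.koszul1 (a0 := c 0) (a1 := c 1) (a2 := c 2)
    (by linear_combination C2) (by linear_combination -C1)
  have hfin : q = α * f + (β * g + γ * k) := by
    apply mul_left_cancel₀ (X_ne_zero (R := K) (0 : Fin 3))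
    rw [he 0, hα, hβ, hγ]
    ring
  rw [hfin]
  refine Ideal.add_mem _ (Ideal.mul_mem_left _ _ (Ideal.subset_span (by simp)))
    (Ideal.add_mem _ (Ideal.mul_mem_left _ _ (Ideal.subset_span (by simp)))
      (Ideal.mul_mem_left _ _ (Ideal.subset_span (by simp))))

end base

end MQ

namespace MQ

open MvPolynomial Module

section

variable {K : Type u} [Field K] {n : ℕ}

lemma all_ge {J : Ideal (MvPolynomial (Fin n) K)} {m : ℕ}
    (h : ∀ p : MvPolynomial (Fin n) K, p.IsHomogeneous m → p ∈ J) (d : ℕ) (hd : m ≤ d) :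
    ∀ p : MvPolynomial (Fin n) K, p.IsHomogeneous d → p ∈ J := by
  induction d, hd using Nat.le_induction with
  | base => exact h
  | succ d hd ih =>
    intro p hp
    have hp' : p ∈ homogeneousSubmodule (Fin n) K (d + 1) := hp
    rw [← homogeneousSubmodule_one_pow, pow_succ, homogeneousSubmodule_one_pow] at hp'
    refine Submodule.mul_induction_on hp' ?_ ?_
    · intro a ha b _
      exact Ideal.mul_mem_right _ _ (ih a ha)
    · intro a b ha hb
      exact Ideal.add_mem _ ha hb

lemma all_of_hf {J : Ideal (MvPolynomial (Fin n) K)} {d : ℕ}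
    (h : n.multichoose d ≤ finrank K (part J d)) :
    ∀ p : MvPolynomial (Fin n) K, p.IsHomogeneous d → p ∈ J := by
  rw [← finrank_hom (K := K)] at h
  have h2 : part J d = homogeneousSubmodule (Fin n) K d :=
    Submodule.eq_of_le_of_finrank_le inf_le_left h
  intro p hp
  have : p ∈ part J d := by rw [h2]; exact hp
  exact (mem_part.1 this).2

lemma hf_le_sub {J : Ideal (MvPolynomial (Fin n) K)} {d c : ℕ}
    (h : c ≤ finrank K (part J d)) : hilbertFunction K J d + c ≤ n.multichoose d := by
  rw [← finrank_hom (K := K), ← hf_add J d]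
  omega

noncomputable def mulMap (f : MvPolynomial (Fin n) K) (d : ℕ) :
    homogeneousSubmodule (Fin n) K d →ₗ[K] MvPolynomial (Fin n) K :=
  (LinearMap.mulLeft K f).comp (Submodule.subtype _)

lemma count2 {J : Ideal (MvPolynomial (Fin n) K)} {f g : MvPolynomial (Fin n) K}
    (hf : f.IsHomogeneous 2) (hg : g.IsHomogeneous 2) (hfJ : f ∈ J) (hgJ : g ∈ J) (d : ℕ)
    (hs : ∀ a b : MvPolynomial (Fin n) K, a.IsHomogeneous d → b.IsHomogeneous d →
      f * a + g * b = 0 → a = 0 ∧ b = 0) :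
    2 * n.multichoose d ≤ finrank K (part J (d + 2)) := by
  let T := (mulMap f d).coprod (mulMap g d)
  have hT : ∀ x, T x = f * x.1 + g * x.2 := fun x => rfl
  have hinj : Function.Injective T := by
    rw [← LinearMap.ker_eq_bot, LinearMap.ker_eq_bot']
    intro x hx
    obtain ⟨h1, h2⟩ := hs x.1 x.2 x.1.2 x.2.2 (by rw [← hT, hx])
    exact Prod.ext (Subtype.ext h1) (Subtype.ext h2)
  have hle : LinearMap.range T ≤ part J (d + 2) := by
    rintro _ ⟨x, rfl⟩
    rw [mem_part, hT]
    have h1 := hf.mul x.1.2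
    have h2 := hg.mul x.2.2
    rw [add_comm] at h1 h2
    exact ⟨h1.add h2, J.add_mem (J.mul_mem_right _ hfJ) (J.mul_mem_right _ hgJ)⟩
  have h1 := Submodule.finrank_mono hle
  rw [LinearMap.finrank_range_of_inj hinj, finrank_prod, finrank_hom] at h1
  omega

lemma count3 {J : Ideal (MvPolynomial (Fin n) K)} {f g k w : MvPolynomial (Fin n) K}
    (hf : f.IsHomogeneous 2) (hg : g.IsHomogeneous 2) (hk : k.IsHomogeneous 2)
    (hfJ : f ∈ J) (hgJ : g ∈ J) (hkJ : k ∈ J) (d : ℕ)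
    (hw : w.IsHomogeneous (d + 2)) (hwJ : w ∈ J) (hwn : w ∉ Ideal.span {f, g, k})
    (hs : ∀ a b c : MvPolynomial (Fin n) K, a.IsHomogeneous d → b.IsHomogeneous d → c.IsHomogeneous d →
      f * a + g * b + k * c = 0 → a = 0 ∧ b = 0 ∧ c = 0) :
    3 * n.multichoose d + 1 ≤ finrank K (part J (d + 2)) := by
  let T := ((mulMap f d).coprod (mulMap g d)).coprod (mulMap k d)
  have hT : ∀ x, T x = f * x.1.1 + g * x.1.2 + k * x.2 := fun x => rfl
  have hinj : Function.Injective T := by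
    rw [← LinearMap.ker_eq_bot, LinearMap.ker_eq_bot']
    intro x hx
    obtain ⟨h1, h2, h3⟩ := hs x.1.1 x.1.2 x.2 x.1.1.2 x.1.2.2 x.2.2 (by rw [← hT, hx])
    exact Prod.ext (Prod.ext (Subtype.ext h1) (Subtype.ext h2)) (Subtype.ext h3)
  have hle : LinearMap.range T ≤ part J (d + 2) := by
    rintro _ ⟨x, rfl⟩
    rw [mem_part, hT]
    have h1 := hf.mul x.1.1.2
    have h2 := hg.mul x.1.2.2
    have h3 := hk.mul x.2.2
    rw [add_comm] at h1 h2 h3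
    exact ⟨(h1.add h2).add h3, J.add_mem (J.add_mem (J.mul_mem_right _ hfJ) (J.mul_mem_right _ hgJ))
      (J.mul_mem_right _ hkJ)⟩
  have hlt : LinearMap.range T < part J (d + 2) := by
    refine lt_of_le_of_ne hle ?_
    intro heq
    have : w ∈ LinearMap.range T := by
      rw [heq, mem_part]; exact ⟨hw, hwJ⟩
    obtain ⟨x, hx⟩ := this
    apply hwn
    rw [← hx, hT]
    exact Ideal.add_mem _ (Ideal.add_mem _ (Ideal.mul_mem_right _ _ (Ideal.subset_span (by simp)))
      (Ideal.mul_mem_right _ _ (Ideal.subset_span (by simp))))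
      (Ideal.mul_mem_right _ _ (Ideal.subset_span (by simp)))
  have h1 := Submodule.finrank_lt_finrank_of_lt hlt
  rw [LinearMap.finrank_range_of_inj hinj, finrank_prod, finrank_prod, finrank_hom] at h1
  omega

lemma bd_any [Infinite K] (h r : ℕ) : ∀ (n : ℕ), n = r + h → ∀ s : Set (MvPolynomial (Fin n) K),
    (∀ p ∈ s, ∃ d, p.IsHomogeneous d) → (h : ℕ∞) ≤ (Ideal.span s).height →
    ∃ c, Bd (hilbertFunction K (Ideal.span s)) r c := by
  induction r with
  | zero =>
    intro n hn s hs hh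
    obtain rfl : n = h := by omega
    obtain ⟨m, hm⟩ := hf_eventually_zero hh (homI_span hs)
    exact ⟨_, Bd.base (m := m) (fun d hd => hf_zero_of (hm d hd)) le_rfl⟩
  | succ r ih =>
    intro n hn s hs hh
    obtain ⟨n, rfl⟩ : ∃ m, n = m + 1 := ⟨r + h, by omega⟩
    obtain ⟨l, hl, hl0, hlh⟩ := avoid_linear hh (by omega)
    obtain ⟨φ, e⟩ := elim_exists hl hl0
    have h1 := e.ht hlh
    rw [Ideal.map_span] at h1
    obtain ⟨c, hc⟩ := ih n (by omega) _ (by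
      rintro _ ⟨p, hp, rfl⟩
      obtain ⟨d, hd⟩ := hs p hp
      exact ⟨d, e.hom p d hd⟩) h1
    refine ⟨c, e.bd (homI_span hs) hl ?_⟩
    rw [Ideal.map_span]
    exact hc

lemma bd4 [Infinite K] (r : ℕ) : ∀ (n : ℕ), n = r + 2 → ∀ f g : MvPolynomial (Fin n) K,
    f.IsHomogeneous 2 → g.IsHomogeneous 2 → ((2 : ℕ) : ℕ∞) ≤ (Ideal.span {f, g}).height →
    Bd (hilbertFunction K (Ideal.span {f, g})) r 4 := by
  induction r with
  | zero =>
    intro n hn f g hf hg hh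
    obtain rfl : n = 2 := by omega
    have hrel := relPrime_of_height hh
    have hf0 : f ≠ 0 := by
      rintro rfl
      have hu : IsUnit g := hrel (dvd_zero _) dvd_rfl
      obtain ⟨v, hv⟩ := hu.exists_right_inv
      have h0 := congrArg constantCoeff hv
      rw [map_mul, const_zero hg two_ne_zero, zero_mul, map_one] at h0
      exact zero_ne_one h0
    have hsyz : ∀ d < 2, ∀ a b : MvPolynomial (Fin 2) K, a.IsHomogeneous d → b.IsHomogeneous d →
      f * a + g * b = 0 → a = 0 ∧ b = 0 := by
      intro d hd a b _ hb hs
      have hb0 : b = 0 := deg_dvd hf hb hd (hrel.dvd_of_dvd_mul_left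
        ⟨-a, by linear_combination hs⟩)
      subst hb0
      refine ⟨?_, rfl⟩
      rw [mul_zero, add_zero] at hs
      exact (mul_eq_zero.1 hs).resolve_left hf0
    have hfm : f ∈ Ideal.span {f, g} := Ideal.subset_span (by simp)
    have hgm : g ∈ Ideal.span {f, g} := Ideal.subset_span (by simp)
    have c0 := count2 hf hg hfm hgm 0 (hsyz 0 (by omega))
    have c1 := count2 hf hg hfm hgm 1 (hsyz 1 (by omega))
    have z3 := all_ge (all_of_hf (d := 1 + 2) (le_trans (by simp [Nat.multichoose_eq]) c1))
    have e0 := hf_le_sub (J := Ideal.span {f, g}) (d := 0) (Nat.zero_le _)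
    have e1 := hf_le_sub (J := Ideal.span {f, g}) (d := 1) (Nat.zero_le _)
    have e2 := hf_le_sub c0
    have m0 : Nat.multichoose 2 0 = 1 := by simp [Nat.multichoose_eq, Nat.choose]
    have m1 : Nat.multichoose 2 1 = 2 := by simp [Nat.multichoose_eq, Nat.choose]
    have m2 : Nat.multichoose 2 2 = 3 := by simp [Nat.multichoose_eq, Nat.choose]
    refine Bd.base (m := 3) (fun d hd => hf_zero_of (z3 d hd)) ?_
    rw [Finset.sum_range_succ, Finset.sum_range_succ, Finset.sum_range_one]
    rw [m0] at e0 e2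
    rw [m1] at e1
    simp only [zero_add] at e2
    rw [m2] at e2
    exact_mod_cast (show _ ≤ 4 by omega)
  | succ r ih =>
    intro n hn f g hf hg hh
    obtain ⟨n, rfl⟩ : ∃ m, n = m + 1 := ⟨r + 2, by omega⟩
    obtain ⟨l, hl, hl0, hlh⟩ := avoid_linear hh (by omega)
    obtain ⟨φ, e⟩ := elim_exists hl hl0
    have h1 := e.ht hlh
    rw [Ideal.map_span, Set.image_pair] at h1
    refine e.bd (homI_span (by rintro _ (rfl | rfl); exacts [⟨2, hf⟩, ⟨2, hg⟩])) hl ?_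
    rw [Ideal.map_span, Set.image_pair]
    exact ih n (by omega) _ _ (e.hom _ _ hf) (e.hom _ _ hg) h1

lemma avoid_gen [Infinite K] {J : Ideal (MvPolynomial (Fin n) K)} {h H : ℕ} (hJ : (h : ℕ∞) ≤ J.height)
    (V : Submodule K (MvPolynomial (Fin n) K))
    (hV : (H : ℕ∞) ≤ (Ideal.span (V : Set (MvPolynomial (Fin n) K))).height) (hH : h + 1 ≤ H) :
    ∃ v ∈ V, ((h + 1 : ℕ) : ℕ∞) ≤ (J ⊔ Ideal.span {v}).height := by
  apply avoid hJ V
  intro P hP _ hv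
  refine le_trans (by exact_mod_cast hH) (hV.trans (Ideal.height_mono (Ideal.span_le.2 hv)))

lemma avoid_gen2 [Infinite K] 
    (V : Submodule K (MvPolynomial (Fin n) K))
    (hV : ((2 : ℕ) : ℕ∞) ≤ (Ideal.span (V : Set (MvPolynomial (Fin n) K))).height) :
    ∃ f ∈ V, ∃ g ∈ V, ((2 : ℕ) : ℕ∞) ≤ (Ideal.span {f, g}).height := by
  obtain ⟨f, hf, h1⟩ := avoid_gen (J := ⊥) (h := 0) (by simp) V hV (by omega)
  obtain ⟨g, hg, h2⟩ := avoid_gen h1 V hV (by omega)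
  refine ⟨f, hf, g, hg, ?_⟩
  rwa [bot_sup_eq, ← Ideal.span_union, Set.singleton_union] at h2

lemma avoid_gen3 [Infinite K] 
    (V : Submodule K (MvPolynomial (Fin n) K))
    (hV : ((3 : ℕ) : ℕ∞) ≤ (Ideal.span (V : Set (MvPolynomial (Fin n) K))).height) :
    ∃ f ∈ V, ∃ g ∈ V, ∃ k ∈ V, ((3 : ℕ) : ℕ∞) ≤ (Ideal.span {f, g, k}).height := by
  obtain ⟨f, hf, h1⟩ := avoid_gen (J := ⊥) (h := 0) (by simp) V hV (by omega)
  obtain ⟨g, hg, h2⟩ := avoid_gen h1 V hV (by omega)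
  obtain ⟨k, hk, h3⟩ := avoid_gen h2 V hV (by omega)
  refine ⟨f, hf, g, hg, k, hk, ?_⟩
  rwa [bot_sup_eq, ← Ideal.span_union, ← Ideal.span_union, Set.singleton_union, Set.insert_union,
    Set.singleton_union] at h3

lemma span_hom {s : Set (MvPolynomial (Fin n) K)} {d : ℕ} (hs : ∀ p ∈ s, p.IsHomogeneous d) :
    ∀ p ∈ Submodule.span K s, p.IsHomogeneous d := by
  intro p hp
  exact (Submodule.span_le.2 (fun q hq => hs q hq) : Submodule.span K s ≤ homogeneousSubmodule (Fin n) K d) hp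

lemma ideal_span_span (s : Set (MvPolynomial (Fin n) K)) :
    Ideal.span (Submodule.span K s : Set (MvPolynomial (Fin n) K)) = Ideal.span s := by
  apply le_antisymm
  · rw [Ideal.span_le]
    exact (Submodule.span_le.2 Ideal.subset_span :
      Submodule.span K s ≤ (Ideal.span s).restrictScalars K)
  · exact Ideal.span_mono Submodule.subset_span

/-- three quadrics generating an ideal of height at least two. -/
lemma bd4' [Infinite K] (r : ℕ) (n : ℕ) (hn : n = r + 2) (s : Set (MvPolynomial (Fin n) K))
    (hs : ∀ p ∈ s, p.IsHomogeneous 2) (hh : ((2 : ℕ) : ℕ∞) ≤ (Ideal.span s).height) :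
    Bd (hilbertFunction K (Ideal.span s)) r 4 := by
  rw [← ideal_span_span] at hh
  obtain ⟨f, hf, g, hg, h2⟩ := avoid_gen2 _ hh
  refine (bd4 r n hn f g (span_hom hs f hf) (span_hom hs g hg) h2).mono (hf_anti ?_)
  rw [← ideal_span_span s]
  apply Ideal.span_mono
  rintro _ (rfl | rfl)
  exacts [hf, hg]

lemma bd6 [Infinite K] (r : ℕ) : ∀ (n : ℕ), n = r + 3 → ∀ f g k q : MvPolynomial (Fin n) K,
    f.IsHomogeneous 2 → g.IsHomogeneous 2 → k.IsHomogeneous 2 → q.IsHomogeneous 2 →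
    ((3 : ℕ) : ℕ∞) ≤ (Ideal.span {f, g, k}).height → q ∉ Ideal.span {f, g, k} →
    Bd (hilbertFunction K (Ideal.span {f, g, k} ⊔ Ideal.span {q})) r 6 := by
  induction r with
  | zero =>
    intro n hn f g k q hf hg hk hq hh hqn
    obtain rfl : n = 3 := by omega
    have hreg := reg3_of_height hf hg hk hh
    set I := Ideal.span {f, g, k} with hI
    have hfm : f ∈ I ⊔ Ideal.span {q} := Ideal.mem_sup_left (Ideal.subset_span (by simp))
    have hgm : g ∈ I ⊔ Ideal.span {q} := Ideal.mem_sup_left (Ideal.subset_span (by simp))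
    have hkm : k ∈ I ⊔ Ideal.span {q} := Ideal.mem_sup_left (Ideal.subset_span (by simp))
    have hqm : q ∈ I ⊔ Ideal.span {q} := Ideal.mem_sup_right (Ideal.subset_span (by simp))
    obtain ⟨i, hi⟩ : ∃ i, X i * q ∉ I := by
      by_contra hcon
      push Not at hcon
      exact hqn (socle hreg hf hg hk hq hcon)
    have c0 := count3 hf hg hk hfm hgm hkm 0 hq hqm hqn
      (fun a b c _ hb hc hs => hreg.no_syz hf hg (by omega) hb hc hs)
    have c1 := count3 hf hg hk hfm hgm hkm 1 ((isHomogeneous_X K i).mul hq)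
      (Ideal.mul_mem_left _ _ hqm) hi
      (fun a b c _ hb hc hs => hreg.no_syz hf hg (by omega) hb hc hs)
    have z3 := all_ge (all_of_hf (d := 1 + 2) (le_trans (by simp [Nat.multichoose_eq, Nat.choose]) c1))
    have e0 := hf_le_sub (J := I ⊔ Ideal.span {q}) (d := 0) (Nat.zero_le _)
    have e1 := hf_le_sub (J := I ⊔ Ideal.span {q}) (d := 1) (Nat.zero_le _)
    have e2 := hf_le_sub c0
    have m0 : Nat.multichoose 3 0 = 1 := by simp [Nat.multichoose_eq, Nat.choose]
    have m1 : Nat.multichoose 3 1 = 3 := by simp [Nat.multichoose_eq, Nat.choose]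
    have m2 : Nat.multichoose 3 2 = 6 := by simp [Nat.multichoose_eq, Nat.choose]
    refine Bd.base (m := 3) (fun d hd => hf_zero_of (z3 d hd)) ?_
    rw [Finset.sum_range_succ, Finset.sum_range_succ, Finset.sum_range_one]
    rw [m0] at e0 e2
    rw [m1] at e1
    simp only [zero_add] at e2
    rw [m2] at e2
    exact_mod_cast (show _ ≤ 6 by omega)
  | succ r ih =>
    intro n hn f g k q hf hg hk hq hh hqn
    obtain ⟨n, rfl⟩ : ∃ m, n = m + 1 := ⟨r + 3, by omega⟩
    obtain ⟨l, hl, hl0, hlh⟩ := avoid_linear hh (by omega)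
    obtain ⟨φ, e⟩ := elim_exists hl hl0
    have hq3 : ∀ p ∈ ({f, g, k} : Set (MvPolynomial (Fin (n + 1)) K)), p.IsHomogeneous 2 := by
      rintro _ (rfl | rfl | rfl) <;> assumption
    have hI3 : HomI (Ideal.span {f, g, k}) := homI_span (fun p hp => ⟨2, hq3 p hp⟩)
    have hIq : HomI (Ideal.span {f, g, k} ⊔ Ideal.span {q}) :=
      homI_sup hI3 (homI_span (by rintro _ rfl; exact ⟨2, hq⟩))
    have himg : (φ '' ({f, g, k} : Set (MvPolynomial (Fin (n + 1)) K))) = {φ f, φ g, φ k} := by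
      rw [Set.image_insert_eq, Set.image_pair]
    have h1 := e.ht hlh
    by_cases hφq : φ q ∈ (Ideal.span {f, g, k}).map φ
    · rw [e.mem_map] at hφq
      obtain ⟨s, hs, t, ht, hst⟩ := Submodule.mem_sup.1 hφq
      obtain ⟨t', rfl⟩ := Ideal.mem_span_singleton.1 ht
      set m := homogeneousComponent 1 t' with hm
      have hmh : m.IsHomogeneous 1 := homogeneousComponent_isHomogeneous _ _
      have hqe : homogeneousComponent 2 s + l * m = q := by
        have h2 := homogeneousComponent_eq_self hq
        rw [← hst, map_add, comp_mul hl 1, hst] at h2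
        exact h2
      have hs2 : homogeneousComponent 2 s ∈ Ideal.span {f, g, k} := hI3 s hs 2
      have hm0 : m ≠ 0 := by
        intro h0
        rw [h0, mul_zero, add_zero] at hqe
        exact hqn (hqe ▸ hs2)
      have hlm : ∀ p ∈ Ideal.span {f, g, k} ⊔ Ideal.span {m},
          l * p ∈ Ideal.span {f, g, k} ⊔ Ideal.span {q} := by
        intro p hp
        obtain ⟨a, ha, b, hb, rfl⟩ := Submodule.mem_sup.1 hp
        obtain ⟨b', rfl⟩ := Ideal.mem_span_singleton.1 hb
        rw [show l * (a + m * b') = (l * a - b' * homogeneousComponent 2 s) + q * b' by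
          rw [← hqe]; ring]
        refine Ideal.add_mem _ (Ideal.mem_sup_left (Ideal.sub_mem _ (Ideal.mul_mem_left _ _ ha)
          (Ideal.mul_mem_left _ _ hs2))) (Ideal.mem_sup_right (Ideal.mul_mem_right _ _
            (Ideal.mem_span_singleton_self q)))
      obtain ⟨ψ, e'⟩ := elim_exists hmh hm0
      have h2 : ((2 : ℕ) : ℕ∞) ≤ ((Ideal.span {f, g, k}).map ψ).height :=
        e'.ht (hh.trans (Ideal.height_mono le_sup_left))
      have b4 : Bd (hilbertFunction K (Ideal.span {f, g, k} ⊔ Ideal.span {m})) (r + 1) 4 := by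
        refine Bd.mono ?_ (e'.hf _)
        rw [Ideal.map_span] at h2 ⊢
        apply bd4' (r + 1) n (by omega) _ ?_ h2
        rintro _ ⟨p, hp, rfl⟩
        exact e'.hom _ _ (hq3 p hp)
      have hex : ∃ c, Bd (hilbertFunction K (Ideal.span {f, g, k} ⊔ Ideal.span {q} ⊔ Ideal.span {l})) r c := by
        rw [Ideal.map_span] at h1
        obtain ⟨c, hc⟩ := bd_any 3 r n (by omega) _ (by
          rintro _ ⟨p, hp, rfl⟩
          exact ⟨2, e.hom _ _ (hq3 p hp)⟩) h1
        refine ⟨c, hc.mono fun d => ?_⟩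
        have h3 := e.hf (Ideal.span {f, g, k}) d
        rw [Ideal.map_span] at h3
        exact (hf_anti (sup_le_sup_right le_sup_left _) d).trans h3
      obtain ⟨c, hc⟩ := hex
      exact (b4.add hc (hf_step0 hIq hl 0 one_pos) (hf_step hIq hl hlm)).mono_c (by norm_num)
    · refine e.bd hIq hl ?_
      rw [Ideal.map_sup, Ideal.map_span, Ideal.map_span, Set.image_singleton, himg]
      rw [Ideal.map_span, himg] at h1 hφq
      exact ih n (by omega) _ _ _ _ (e.hom _ _ hf) (e.hom _ _ hg) (e.hom _ _ hk) (e.hom _ _ hq) h1 hφq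

end

end MQ

namespace MQ

open MvPolynomial Module

section

variable {k : Type u} {K : Type u} [Field k] [Field K] [Algebra k K] {n : ℕ}

lemma base_height (J : Ideal (MvPolynomial (Fin n) k)) {h : ℕ∞} (hJ : h ≤ J.height) :
    h ≤ (J.map (MvPolynomial.map (σ := Fin n) (algebraMap k K))).height := by
  let : Algebra (MvPolynomial (Fin n) k) (MvPolynomial (Fin n) K) := MvPolynomial.algebraMvPolynomial
  have : Module.Flat (MvPolynomial (Fin n) k) (MvPolynomial (Fin n) K) :=
    Module.Flat.isBaseChange k (MvPolynomial (Fin n) k) K (MvPolynomial (Fin n) K)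
      (Algebra.IsPushout.out (R := k) (S := MvPolynomial (Fin n) k) (R' := K)
        (S' := MvPolynomial (Fin n) K))
  rw [le_height_iff]
  intro P hP hJP
  let p := P.under (MvPolynomial (Fin n) k)
  have hp : p.IsPrime := inferInstance
  have : P.LiesOver p := ⟨rfl⟩
  have hJp : J ≤ p := Ideal.map_le_iff_le_comap.1 hJP
  refine (hJ.trans (Ideal.height_mono hJp)).trans ?_
  rw [Ideal.height_eq_height_add_of_liesOver_of_hasGoingDown p P]
  exact le_self_add

/-- extension of scalars for subspaces -/
noncomputable def ext (K : Type u) [Field K] [Algebra k K] (V : Submodule k (MvPolynomial (Fin n) k)) :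
    Submodule K (MvPolynomial (Fin n) K) :=
  Submodule.span K (MvPolynomial.map (algebraMap k K) '' V)

lemma map_smul' (c : k) (p : MvPolynomial (Fin n) k) :
    MvPolynomial.map (algebraMap k K) (c • p) = algebraMap k K c • MvPolynomial.map (algebraMap k K) p := by
  rw [smul_eq_C_mul, smul_eq_C_mul, map_mul, map_C]

lemma ext_span (s : Set (MvPolynomial (Fin n) k)) :
    ext K (Submodule.span k s) = Submodule.span K (MvPolynomial.map (algebraMap k K) '' s) := by
  apply le_antisymm
  · unfold ext
    rw [Submodule.span_le]
    rintro _ ⟨p, hp, rfl⟩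
    refine Submodule.span_induction ?_ ?_ ?_ ?_ hp
    · intro x hx
      exact Submodule.subset_span ⟨x, hx, rfl⟩
    · rw [map_zero]; exact Submodule.zero_mem _
    · intro x y _ _ hx hy
      rw [map_add]; exact Submodule.add_mem _ hx hy
    · intro c x _ hx
      rw [map_smul']; exact Submodule.smul_mem _ _ hx
  · exact Submodule.span_mono (Set.image_mono Submodule.subset_span)

lemma ext_finrank_le (V : Submodule k (MvPolynomial (Fin n) k)) [FiniteDimensional k V] :
    finrank K (ext K V) ≤ finrank k V := by
  let b := Module.finBasis k V
  have hb : Submodule.span k (Set.range (fun i => (b i : MvPolynomial (Fin n) k))) = V := by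
    have := congrArg (Submodule.map V.subtype) b.span_eq
    rw [Submodule.map_span, Submodule.map_top, Submodule.range_subtype, ← Set.range_comp] at this
    exact this
  have h : ext K V = Submodule.span K (Set.range (fun i => MvPolynomial.map (algebraMap k K) (b i : MvPolynomial (Fin n) k))) := by
    conv_lhs => rw [← hb]
    rw [ext_span, ← Set.range_comp]
    rfl
  rw [h]
  exact (finrank_range_le_card _).trans (by simp)

lemma ext_hom (d : ℕ) : ext K (homogeneousSubmodule (Fin n) k d) = homogeneousSubmodule (Fin n) K d := by
  apply le_antisymm
  · unfold ext
    rw [Submodule.span_le]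
    rintro _ ⟨p, hp, rfl⟩
    exact IsHomogeneous.map hp _
  · intro p hp
    rw [p.as_sum]
    refine Submodule.sum_mem _ fun m hm => ?_
    have : monomial m (coeff m p) = coeff m p • MvPolynomial.map (algebraMap k K) (monomial m (1 : k)) := by
      rw [map_monomial, map_one, smul_monomial, smul_eq_mul, mul_one]
    rw [this]
    refine Submodule.smul_mem _ _ (Submodule.subset_span ⟨_, ?_, rfl⟩)
    apply isHomogeneous_monomial
    by_contra hdeg
    exact MvPolynomial.mem_support_iff.1 hm (IsHomogeneous.coeff_eq_zero hp hdeg)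

lemma ext_sup (V W : Submodule k (MvPolynomial (Fin n) k)) : ext K (V ⊔ W) = ext K V ⊔ ext K W := by
  have h : V ⊔ W = Submodule.span k (V ∪ W) := by
    rw [Submodule.span_union, Submodule.span_eq, Submodule.span_eq]
  rw [h, ext_span, Set.image_union, Submodule.span_union]
  rfl

lemma ext_finrank_ge {V : Submodule k (MvPolynomial (Fin n) k)} {d : ℕ}
    (hV : V ≤ homogeneousSubmodule (Fin n) k d) :
    finrank k V ≤ finrank K (ext K V) := by
  set L := homogeneousSubmodule (Fin n) k d with hL
  obtain ⟨W, hW⟩ := Submodule.exists_isCompl (V.comap L.subtype)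
  have : FiniteDimensional k L := fdHom d
  let W' := W.map L.subtype
  have hWL : W' ≤ L := by
    rintro _ ⟨w, _, rfl⟩
    exact w.2
  have hsup : V ⊔ W' = L := by
    have h1 := congrArg (Submodule.map L.subtype) hW.sup_eq_top
    rw [Submodule.map_sup, Submodule.map_comap_subtype, Submodule.map_top, Submodule.range_subtype,
      inf_eq_right.2 hV] at h1
    exact h1
  have hdim : finrank k V + finrank k W' = finrank k L := by
    have h1 := Submodule.finrank_add_eq_of_isCompl hW
    rw [← h1]
    congr 1
    · exact (Submodule.comapSubtypeEquivOfLe hV).finrank_eq.symm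
    · exact (Submodule.equivSubtypeMap L W).finrank_eq.symm
  have : FiniteDimensional k V := Submodule.finiteDimensional_of_le hV
  have : FiniteDimensional k W' := Submodule.finiteDimensional_of_le hWL
  have hle : ∀ U : Submodule k (MvPolynomial (Fin n) k), U ≤ L → ext K U ≤ homogeneousSubmodule (Fin n) K d := by
    intro U hU
    rw [← ext_hom (k := k)]
    exact Submodule.span_mono (Set.image_mono hU)
  have : FiniteDimensional K (homogeneousSubmodule (Fin n) K d) := fdHom d
  have : FiniteDimensional K (ext K V) := Submodule.finiteDimensional_of_le (hle V hV)
  have : FiniteDimensional K (ext K W') := Submodule.finiteDimensional_of_le (hle W' hWL)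
  have h2 := Submodule.finrank_add_le_finrank_add_finrank (ext K V) (ext K W')
  rw [← ext_sup, hsup, hL, ext_hom, finrank_hom] at h2
  rw [hL, finrank_hom] at hdim
  have h3 := ext_finrank_le (K := K) W'
  omega

lemma mem_ext_of_mem_map {I : Ideal (MvPolynomial (Fin n) k)} {p : MvPolynomial (Fin n) K}
    (hp : p ∈ I.map (MvPolynomial.map (σ := Fin n) (algebraMap k K))) :
    p ∈ ext K (I.restrictScalars k) := by
  have hX : ∀ i, ∀ x ∈ ext K (I.restrictScalars k), X i * x ∈ ext K (I.restrictScalars k) := by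
    intro i x hx
    refine Submodule.span_induction ?_ ?_ ?_ ?_ hx
    · rintro _ ⟨y, hy, rfl⟩
      exact Submodule.subset_span ⟨X i * y, I.mul_mem_left _ hy, by rw [map_mul, map_X]⟩
    · rw [mul_zero]; exact Submodule.zero_mem _
    · intro x y _ _ hx hy
      rw [mul_add]; exact Submodule.add_mem _ hx hy
    · intro c x _ hx
      rw [mul_smul_comm]; exact Submodule.smul_mem _ _ hx
  have hmul : ∀ a : MvPolynomial (Fin n) K, ∀ x ∈ ext K (I.restrictScalars k),
      a * x ∈ ext K (I.restrictScalars k) := by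
    intro a
    induction a using MvPolynomial.induction_on with
    | C c =>
      intro x hx
      rw [← smul_eq_C_mul]; exact Submodule.smul_mem _ _ hx
    | add a b ha hb =>
      intro x hx
      rw [add_mul]; exact Submodule.add_mem _ (ha x hx) (hb x hx)
    | mul_X a i ha =>
      intro x hx
      rw [mul_assoc]; exact ha _ (hX i x hx)
  refine Submodule.span_induction ?_ (Submodule.zero_mem _) ?_ ?_ hp
  · rintro _ ⟨y, hy, rfl⟩
    exact Submodule.subset_span ⟨y, hy, rfl⟩
  · intro x y _ _ hx hy
    exact Submodule.add_mem _ hx hy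
  · intro a x _ hx
    exact hmul a x hx

lemma comp_map (d : ℕ) (p : MvPolynomial (Fin n) k) :
    homogeneousComponent d (MvPolynomial.map (algebraMap k K) p)
      = MvPolynomial.map (algebraMap k K) (homogeneousComponent d p) := by
  ext m
  rw [coeff_map, coeff_homogeneousComponent, coeff_homogeneousComponent, coeff_map]
  split_ifs <;> simp

lemma part_map_le {I : Ideal (MvPolynomial (Fin n) k)} (hI : HomI I) (d : ℕ) :
    part (I.map (MvPolynomial.map (σ := Fin n) (algebraMap k K))) d ≤ ext K (part I d) := by
  intro p hp
  obtain ⟨h1, h2⟩ := mem_part.1 hp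
  rw [← homogeneousComponent_eq_self h1]
  refine Submodule.span_induction ?_ ?_ ?_ ?_ (mem_ext_of_mem_map h2)
  · rintro _ ⟨y, hy, rfl⟩
    rw [comp_map]
    exact Submodule.subset_span ⟨_, mem_part.2 ⟨homogeneousComponent_isHomogeneous _ _, hI y hy d⟩, rfl⟩
  · rw [map_zero]; exact Submodule.zero_mem _
  · intro x y _ _ hx hy
    rw [map_add]; exact Submodule.add_mem _ hx hy
  · intro c x _ hx
    rw [map_smul]; exact Submodule.smul_mem _ _ hx

lemma hf_base_change {I : Ideal (MvPolynomial (Fin n) k)} (hI : HomI I) (d : ℕ) :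
    hilbertFunction k I d ≤
      hilbertFunction K (I.map (MvPolynomial.map (σ := Fin n) (algebraMap k K))) d := by
  have h1 := hf_add I d
  have h2 := hf_add (I.map (MvPolynomial.map (σ := Fin n) (algebraMap k K))) d
  rw [finrank_hom] at h1 h2
  have hle : ext K (part I d) ≤ homogeneousSubmodule (Fin n) K d := by
    rw [← ext_hom (k := k)]
    exact Submodule.span_mono (Set.image_mono inf_le_left)
  have : FiniteDimensional K (homogeneousSubmodule (Fin n) K d) := fdHom d
  have : FiniteDimensional K (ext K (part I d)) := Submodule.finiteDimensional_of_le hle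
  have h3 := (Submodule.finrank_mono (part_map_le (K := K) hI d)).trans (ext_finrank_le (K := K) (part I d))
  omega

lemma three_gens {V : Submodule k (MvPolynomial (Fin n) k)} [FiniteDimensional k V] (h : finrank k V ≤ 3) :
    ∃ a b c, Submodule.span k {a, b, c} = V := by
  let b := Module.finBasis k V
  let g : Fin 3 → MvPolynomial (Fin n) k := fun i => if h : i.1 < finrank k V then (b ⟨i, h⟩ : MvPolynomial (Fin n) k) else 0
  refine ⟨g 0, g 1, g 2, ?_⟩
  have hr : ({g 0, g 1, g 2} : Set (MvPolynomial (Fin n) k)) = Set.range g := by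
    ext x
    simp only [Set.mem_insert_iff, Set.mem_singleton_iff, Set.mem_range]
    constructor
    · rintro (rfl | rfl | rfl)
      exacts [⟨0, rfl⟩, ⟨1, rfl⟩, ⟨2, rfl⟩]
    · rintro ⟨i, rfl⟩
      fin_cases i <;> simp
  have hb : Submodule.span k (Set.range (fun i => (b i : MvPolynomial (Fin n) k))) = V := by
    have := congrArg (Submodule.map V.subtype) b.span_eq
    rw [Submodule.map_span, Submodule.map_top, Submodule.range_subtype, ← Set.range_comp] at this
    exact this
  rw [hr]
  apply le_antisymm
  · rw [Submodule.span_le]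
    rintro _ ⟨i, rfl⟩
    simp only [g]
    split_ifs
    · exact (b _).2
    · exact V.zero_mem
  · conv_lhs => rw [← hb]
    apply Submodule.span_mono
    rintro _ ⟨i, rfl⟩
    have hi : i.1 < 3 := lt_of_lt_of_le i.2 h
    exact ⟨⟨i.1, hi⟩, by simp [g]⟩

lemma quad_mem_span {f g h w : MvPolynomial (Fin n) K} (hf : f.IsHomogeneous 2)
    (hg : g.IsHomogeneous 2) (hh : h.IsHomogeneous 2) (hw : w.IsHomogeneous 2)
    (hm : w ∈ Ideal.span {f, g, h}) : w ∈ Submodule.span K (Set.range ![f, g, h]) := by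
  obtain ⟨a, b, c, ha, hb, hc, e⟩ := mem_three_hom hf hg hh (d := 0) hw hm
  have key : ∀ a : MvPolynomial (Fin n) K, a.IsHomogeneous 0 → ∀ f, f * a = coeff 0 a • f := by
    intro a ha f
    have := homogeneousComponent_eq_self ha
    rw [homogeneousComponent_zero] at this
    conv_lhs => rw [← this]
    rw [smul_eq_C_mul, mul_comm]
  rw [e, key a ha, key b hb, key c hc]
  refine Submodule.add_mem _ (Submodule.add_mem _ ?_ ?_) ?_
  · exact Submodule.smul_mem _ _ (Submodule.subset_span ⟨0, rfl⟩)
  · exact Submodule.smul_mem _ _ (Submodule.subset_span ⟨1, rfl⟩)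
  · exact Submodule.smul_mem _ _ (Submodule.subset_span ⟨2, rfl⟩)

lemma main_bd [Infinite K] {Q : Set (MvPolynomial (Fin n) k)}
    (hQ : ∀ q ∈ Q, q.IsHomogeneous 2) {r : ℕ} (hn : n = r + 3)
    (hht : ((3 : ℕ) : ℕ∞) ≤ (Ideal.span Q).height)
    (hnotCI : ¬ ∃ a b c : MvPolynomial (Fin n) k, Ideal.span Q = Ideal.span {a, b, c}) :
    Bd (hilbertFunction k (Ideal.span Q)) r 6 := by
  have hhK := base_height (K := K) _ hht
  set ι := MvPolynomial.map (σ := Fin n) (algebraMap k K) with hι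
  have hQK : ∀ q ∈ ι '' Q, q.IsHomogeneous 2 := by
    rintro _ ⟨q, hq, rfl⟩
    exact (hQ q hq).map _
  have hmap : (Ideal.span Q).map ι = Ideal.span (Submodule.span K (ι '' Q) : Set (MvPolynomial (Fin n) K)) := by
    rw [ideal_span_span, Ideal.map_span]
  rw [hmap] at hhK
  obtain ⟨f, hf, g, hg, h, hh, h3⟩ := avoid_gen3 _ hhK
  have hf2 := span_hom hQK f hf
  have hg2 := span_hom hQK g hg
  have hh2 := span_hom hQK h hh
  obtain ⟨q, hq, hqn⟩ : ∃ q ∈ ι '' Q, q ∉ Ideal.span {f, g, h} := by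
    by_contra hcon
    push Not at hcon
    apply hnotCI
    have hle : ext K (Submodule.span k Q) ≤ Submodule.span K (Set.range ![f, g, h]) := by
      rw [ext_span, Submodule.span_le]
      intro q hq
      exact quad_mem_span hf2 hg2 hh2 (hQK q hq) (hcon q hq)
    have hV : Submodule.span k Q ≤ homogeneousSubmodule (Fin n) k 2 := fun p hp => span_hom hQ p hp
    have : FiniteDimensional k (homogeneousSubmodule (Fin n) k 2) := fdHom 2
    have : FiniteDimensional k (Submodule.span k Q) := Submodule.finiteDimensional_of_le hV
    have : FiniteDimensional K (Submodule.span K (Set.range ![f, g, h])) :=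
      FiniteDimensional.span_of_finite K (Set.finite_range _)
    have h1 := (ext_finrank_ge (K := K) hV).trans (Submodule.finrank_mono hle)
    have h2 := h1.trans (finrank_range_le_card (R := K) ![f, g, h])
    obtain ⟨a, b, c, habc⟩ := three_gens (by simpa using h2)
    exact ⟨a, b, c, by rw [← ideal_span_span Q, ← ideal_span_span {a, b, c}, habc]⟩
  refine (bd6 r n hn f g h q hf2 hg2 hh2 (hQK q hq) h3 hqn).mono fun d => ?_
  refine (hf_base_change (K := K) (homI_span fun p hp => ⟨2, hQ p hp⟩) d).trans (hf_anti ?_ d)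
  rw [← hι, hmap, ← Ideal.span_union]
  apply Ideal.span_mono
  rintro x (hx | hx)
  · rcases hx with rfl | rfl | rfl <;> assumption
  · rw [Set.mem_singleton_iff.1 hx]
    exact Submodule.subset_span hq

lemma main_aux (k : Type u) [Field k] (N : ℕ)
    (Q : Set (MvPolynomial (Fin N) k))
    (hQ : ∀ q ∈ Q, MvPolynomial.IsHomogeneous q 2)
    (hht : (Ideal.span Q).height = 3)
    (hnotCI : ¬ ∃ a b c : MvPolynomial (Fin N) k, Ideal.span Q = Ideal.span {a, b, c}) :
    hilbertSamuelMultiplicity k (Ideal.span Q) ≤ 6 := by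
  have hne : Ideal.span Q ≠ ⊤ := by
    intro htop
    rw [htop, Ideal.height_top] at hht
    exact absurd hht (by decide)
  have hprime : ∃ P : Ideal (MvPolynomial (Fin N) k), P.IsPrime ∧ Ideal.span Q ≤ P ∧ P.height = (3 : ℕ) := by
    by_contra hcon
    push Not at hcon
    have : ((4 : ℕ) : ℕ∞) ≤ (Ideal.span Q).height := by
      rw [le_height_iff]
      intro P hP hle
      have h1 := hht.symm.le.trans (Ideal.height_mono hle)
      have h2 := lt_of_le_of_ne h1 (hcon P hP hle).symm
      have := Order.add_one_le_of_lt h2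
      refine le_trans ?_ this
      norm_num
    rw [hht] at this
    exact absurd this (by decide)
  obtain ⟨P, hP, hle, hPh⟩ := hprime
  have hN : 3 ≤ N := by
    have h1 := Ideal.height_le_ringKrullDim_of_ne_top hP.ne_top
    rw [MvPolynomial.ringKrullDim_of_isNoetherianRing, hPh, ringKrullDim_eq_zero_of_field, zero_add] at h1
    simpa using h1
  obtain ⟨r, rfl⟩ : ∃ r, N = r + 3 := ⟨N - 3, by omega⟩
  have hbd := main_bd (K := AlgebraicClosure k) hQ rfl hht.symm.le hnotCI
  have hlow := hf_lower hP hle hPh (le_refl (r + 3))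
  unfold hilbertSamuelMultiplicity
  split_ifs with hex
  · have hs := hex.choose_spec
    cases r with
    | zero =>
      rw [Bd.final_zero hbd _ hs]
      simp
    | succ r => exact Bd.final hbd _ hs (natDegree_ge _ hs hlow) (by norm_num)
  · norm_num

end

end MQ

/-- If `I` is a homogeneous ideal of height `3` generated by quadrics
which is not a complete intersection (i.e. cannot be generated by `3` elements), then
`e(S/I) ≤ 6`. -/
theorem mult_le_six_of_not_CI (k : Type u) [Field k] (N : ℕ)
    (Q : Set (MvPolynomial (Fin N) k))
    (hQ : ∀ q ∈ Q, MvPolynomial.IsHomogeneous q 2)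
    (I : Ideal (MvPolynomial (Fin N) k))
    (hI : I = Ideal.span Q)
    (hht : I.heightENat = 3)
    (hnotCI : ¬ ∃ g₁ g₂ g₃ : MvPolynomial (Fin N) k, I = Ideal.span {g₁, g₂, g₃}) :
    hilbertSamuelMultiplicity k I ≤ 6 := by
  subst hI
  rw [MQ.heightENat_eq] at hht
  exact MQ.main_aux k N Q hQ hht hnotCI
end
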